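/- arXiv:1510.08373 — 4 statements merged into one kernel-verified Lean document; each statement's English description precedes it below -/
import Mathlib

section
/- For every integer k ≥ 2 and every odd integer q ≥ 5, there exists a natural number n₁ = n₁(k,q) such that for all n ≥ n₁, the Turán number satisfies ex(n, C_{k,q}) = e(T_{n,2}) + (k−1)² = ⌊n²/4⌋ + (k−1)². -/
/-!
The lower bound is given by `Fgraph n k`: every petal of a flower `C_{k,q}` is an odd cycle, so it
uses an edge of the `K_{k-1,k-1}` placed inside the even class, and `k` petals sharing one vertex
would need `k` distinct vertices on one side of that `K_{k-1,k-1}`.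

For the upper bound let `G` be a `C_{k,q}`-free graph with many vertices. Deleting vertices of
degree below `⌊n/2⌋` raises the surplus over `⌊n²/4⌋`, so it suffices to treat graphs of minimum
degree at least `⌊n/2⌋` (`card_edgeFinset_le_of_large`). By the Erdős–Stone theorem such a graph
contains a large complete bipartite core. A vertex with many neighbours in both halves of the core
would be the center of a flower, so almost all vertices attach to exactly one half, and iterating
this idea sorts all the vertices into two classes `A`, `B` such that every vertex misses only a
small fraction of the opposite class (`RobustPair`, `exists_robustPair_of_core`).

In such a partition any two vertices are joined by paths of every short length of the right parity
that avoid a given small set. Hence a star inside the class of `x` and centered at `x`, a disjoint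
matching inside that class, and a matching inside the other class whose edges meet the
neighbourhood of `x` can be completed to a flower with one petal for each edge
(`RobustPair.flower_bound`).

Put `m = k - 1`, and let `b` be the matching number of `G[B]`, not larger than that of `G[A]`. The
two matching numbers have sum at most `m` (`RobustPair.matching_bound`), so `2b ≤ m`. For `x` in
`A` let `d(x)` be its degree in `A` and `p(x)` the number of edges of a maximum matching of `B` with
no end adjacent to `x`. Then `d(x)`, plus the matching number of the non-neighbours of `x` in `A`,
plus `b - p(x)`, is at most `m`. Taking `x` to maximize `d - 2p` gives
`e(A) ≤ (m - b)² + (number of missing cross edges)`, while the exchange argument for maximum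
matchings gives `e(B) ≤ bm + b² ≤ 2bm - b²`. The sum is at most `m²` plus the number of missing
cross edges, and the cross edges present and missing together number `|A||B| ≤ ⌊n²/4⌋`.
-/

open SimpleGraph

section Defs

variable {V W : Type*}

/-- The set of edges of `G` with both endpoints in `S`. -/
def inEdges (G : SimpleGraph V) (S : Set V) : Set (Sym2 V) :=
  {e | e ∈ G.edgeSet ∧ ∀ v ∈ e, v ∈ S}

/-- The number of edges of `G` with both endpoints in `S`. -/
noncomputable def edgesIn (G : SimpleGraph V) (S : Set V) : ℕ := (inEdges G S).ncard

/-- The set of edges of `G` with one endpoint in `S` and the other in `T`. -/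
def crossEdges (G : SimpleGraph V) (S T : Set V) : Set (Sym2 V) :=
  {e | e ∈ G.edgeSet ∧ ∃ u ∈ S, ∃ v ∈ T, e = s(u, v)}

/-- The number of edges of `G` with one endpoint in `S` and the other in `T`. -/
noncomputable def edgesBetween (G : SimpleGraph V) (S T : Set V) : ℕ := (crossEdges G S T).ncard

/-- The matching number of a set of edges: the largest number of pairwise
vertex-disjoint edges that can be chosen from `E`. -/
noncomputable def nuSet (E : Set (Sym2 V)) : ℕ :=
  sSup {m | ∃ M : Finset (Sym2 V), ↑M ⊆ E ∧
    (M : Set (Sym2 V)).Pairwise (fun e f => ∀ v, v ∈ e → v ∉ f) ∧ M.card = m}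

/-- The matching number of a graph. -/
noncomputable def nu (G : SimpleGraph V) : ℕ := nuSet G.edgeSet

/-- `G` contains a subgraph isomorphic to `H`, i.e. there is an injective
graph homomorphism from `H` to `G`. -/
def ContainsCopy (H : SimpleGraph W) (G : SimpleGraph V) : Prop :=
  ∃ f : H →g G, Function.Injective f

/-- The Turán number `ex(n, H)`: the maximum number of edges of an `H`-free
simple graph on `n` vertices. -/
noncomputable def exNum (n : ℕ) (H : SimpleGraph W) : ℕ :=
  sSup {m | ∃ G : SimpleGraph (Fin n), ¬ ContainsCopy H G ∧ G.edgeSet.ncard = m}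

/-- Underlying relation of the graph `C_{k,q}`: the vertex `none` is the center,
and for each `i : Fin k` the vertices `(i, 0), …, (i, q-2)` together with the
center form a cycle of length `q`. -/
def CkqRel (k q : ℕ) : Option (Fin k × Fin (q - 1)) → Option (Fin k × Fin (q - 1)) → Prop
  | none, some (_, j) => (j : ℕ) = 0 ∨ (j : ℕ) = q - 2
  | some (i, j), some (i', j') => i = i' ∧ (j' : ℕ) = (j : ℕ) + 1
  | _, _ => False

/-- The graph `C_{k,q}` on `k(q-1)+1` vertices consisting of `k` cycles of length `q`
intersecting in exactly one common vertex (the center). -/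
def Ckq (k q : ℕ) : SimpleGraph (Option (Fin k × Fin (q - 1))) :=
  SimpleGraph.fromRel (CkqRel k q)

/-- The member of the family `𝓕_{n,k}`: the Turán graph `T_{n,2}` (with classes the
even- and odd-indexed vertices) together with the edges of a complete bipartite graph
`K_{k-1,k-1}` on the even vertices `0, 2, …, 2(2(k-1)-1)` added inside the even class. -/
def Fgraph (n k : ℕ) : SimpleGraph (Fin n) :=
  SimpleGraph.fromRel (fun u v =>
    ((u : ℕ) % 2 ≠ (v : ℕ) % 2) ∨
    (∃ s t : ℕ, s < k - 1 ∧ k - 1 ≤ t ∧ t < 2 * (k - 1) ∧ (u : ℕ) = 2 * s ∧ (v : ℕ) = 2 * t))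

/-- The maximum degree of the subgraph of `G` induced on `S`. -/
noncomputable def DeltaIn (G : SimpleGraph V) (S : Set V) : ℕ :=
  sSup {d | ∃ v ∈ S, d = ((G.neighborSet v) ∩ S).ncard}

/-- The degree of `x` in the subgraph of `G` induced on `S`. -/
noncomputable def degIn (G : SimpleGraph V) (S : Set V) (x : V) : ℕ :=
  ((G.neighborSet x) ∩ S).ncard

end Defs

namespace OddFlower

set_option linter.unusedSectionVars false

/-! ### Linking paths and greedy embedding of a flower -/

section Links

variable {V : Type} [DecidableEq V] {G : SimpleGraph V}

/-- `u` and `v` are joined in `G` by a walk whose `n` interior vertices are distinct and avoid `F`.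
The endpoints may lie in `F` and may coincide, so `Linked G F c c (q - 1)` with `c ∈ F` gives a
cycle of length `q` through `c` meeting `F` only in `c`. -/
def Linked (G : SimpleGraph V) (F : Finset V) (u v : V) (n : ℕ) : Prop :=
  ∃ l : List V, l.length = n ∧ l.Nodup ∧ (∀ w ∈ l, w ∉ F) ∧ (u :: (l ++ [v])).IsChain G.Adj

lemma Linked.nil {F : Finset V} {u v : V} (h : G.Adj u v) : Linked G F u v 0 :=
  ⟨[], by simp [h]⟩

lemma Linked.cons {F : Finset V} {u v w : V} {n : ℕ} (h : G.Adj u w) (hw : w ∉ F)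
    (hl : Linked G (insert w F) w v n) : Linked G F u v (n + 1) := by
  obtain ⟨l, h1, h2, h3, h4⟩ := hl
  refine ⟨w :: l, by simp [h1], ?_, ?_, ?_⟩
  · refine List.nodup_cons.2 ⟨fun hm => ?_, h2⟩
    exact h3 w hm (Finset.mem_insert_self _ _)
  · intro x hx
    rcases List.mem_cons.1 hx with rfl | hx
    · exact hw
    · exact fun hF => h3 x hx (Finset.mem_insert_of_mem hF)
  · simpa [h] using h4

lemma Linked.snoc {F : Finset V} {u v w : V} {n : ℕ} (h : G.Adj w v) (hw : w ∉ F)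
    (hl : Linked G (insert w F) u w n) : Linked G F u v (n + 1) := by
  obtain ⟨l, h1, h2, h3, h4⟩ := hl
  refine ⟨l ++ [w], by simp [h1], ?_, ?_, ?_⟩
  · rw [List.nodup_append]
    refine ⟨h2, by simp, ?_⟩
    intro a ha b hb hab
    simp only [List.mem_singleton] at hb
    subst hb; subst hab
    exact h3 a ha (Finset.mem_insert_self _ _)
  · intro x hx
    rcases List.mem_append.1 hx with hx | hx
    · exact fun hF => h3 x hx (Finset.mem_insert_of_mem hF)
    · simp only [List.mem_singleton] at hx
      exact hx ▸ hw
  · have : u :: (l ++ [w] ++ [v]) = (u :: (l ++ [w])) ++ [v] := by simp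
    rw [this, List.isChain_append]
    refine ⟨h4, by simp, ?_⟩
    intro x hx y hy
    have e : (u :: (l ++ [w])).getLast? = some w := by
      rw [← List.cons_append, List.getLast?_append]; simp
    rw [e] at hx
    simp at hx hy
    subst hx; subst hy; exact h

/-- Greedy choice of pairwise disjoint cycles through `c`. The `i`-th cycle is meant to use the
reserved set `S i`; by `ht` it can be found while avoiding any small set `F` disjoint from `S i`.
It is built avoiding the previous cycles and the reserved sets of the later ones. -/
lemma exists_disjoint_cycles {ι : Type} [DecidableEq ι] {c : V} {S : ι → Finset V} {s n N : ℕ}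
    (I : Finset ι) (hS : ∀ i ∈ I, (S i).card ≤ s)
    (hd : ∀ i ∈ I, ∀ j ∈ I, i ≠ j → Disjoint (S i) (S j))
    (ht : ∀ i ∈ I, ∀ F : Finset V, F.card ≤ N → c ∈ F → Disjoint F (S i) → Linked G F c c n) :
    ∀ F : Finset V, c ∈ F → F.card + I.card * (n + s) ≤ N → (∀ i ∈ I, Disjoint F (S i)) →
      ∃ l : ι → List V, (∀ i ∈ I, (l i).length = n ∧ (l i).Nodup ∧ (∀ w ∈ l i, w ∉ F) ∧
        (c :: (l i ++ [c])).IsChain G.Adj) ∧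
        ∀ i ∈ I, ∀ j ∈ I, i ≠ j → List.Disjoint (l i) (l j) := by
  induction I using Finset.induction_on with
  | empty => intro F _ _ _; exact ⟨fun _ => [], by simp, by simp⟩
  | insert i I hi ih =>
    intro F hc hF hFS
    rw [Finset.card_insert_of_notMem hi] at hF
    have hFi : Disjoint (F ∪ I.biUnion S) (S i) := by
      rw [Finset.disjoint_union_left]
      refine ⟨hFS i (Finset.mem_insert_self _ _), ?_⟩
      rw [Finset.disjoint_biUnion_left]
      intro j hj
      refine hd j (Finset.mem_insert_of_mem hj) i (Finset.mem_insert_self _ _) ?_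
      rintro rfl; exact hi hj
    have hb : (I.biUnion S).card ≤ I.card * s :=
      Finset.card_biUnion_le_card_mul _ _ _ (fun j hj => hS j (Finset.mem_insert_of_mem hj))
    have hcard : (F ∪ I.biUnion S).card ≤ N := by
      have := Finset.card_union_le F (I.biUnion S)
      nlinarith
    obtain ⟨p, p1, p2, p3, p4⟩ := ht i (Finset.mem_insert_self _ _) _ hcard
      (Finset.mem_union_left _ hc) hFi
    have hpc : p.toFinset.card ≤ n := p1 ▸ List.toFinset_card_le p
    obtain ⟨l, hl1, hl2⟩ := ih (fun j hj => hS j (Finset.mem_insert_of_mem hj))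
      (fun j hj j' hj' => hd j (Finset.mem_insert_of_mem hj) j' (Finset.mem_insert_of_mem hj'))
      (fun j hj => ht j (Finset.mem_insert_of_mem hj)) (F ∪ p.toFinset)
      (Finset.mem_union_left _ hc)
      (by have := Finset.card_union_le F p.toFinset; nlinarith)
      (by
        intro j hj
        rw [Finset.disjoint_union_left]
        refine ⟨hFS j (Finset.mem_insert_of_mem hj), ?_⟩
        rw [Finset.disjoint_left]
        intro x hx hxS
        exact p3 x (List.mem_toFinset.1 hx)
          (Finset.mem_union_right _ (Finset.mem_biUnion.2 ⟨j, hj, hxS⟩)))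
    refine ⟨Function.update l i p, ?_, ?_⟩
    · intro j hj
      rcases Finset.mem_insert.1 hj with rfl | hj
      · simp only [Function.update_self]
        exact ⟨p1, p2, fun w hw hF => p3 w hw (Finset.mem_union_left _ hF), p4⟩
      · have hji : j ≠ i := fun e => hi (e ▸ hj)
        simp only [Function.update_of_ne hji]
        obtain ⟨a, b, d, e⟩ := hl1 j hj
        exact ⟨a, b, fun w hw hF => d w hw (Finset.mem_union_left _ hF), e⟩
    · have key : ∀ j ∈ I, List.Disjoint p (l j) := by
        intro j hj w hw hw'
        exact (hl1 j hj).2.2.1 w hw' (Finset.mem_union_right _ (List.mem_toFinset.2 hw))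
      intro j hj j' hj' hne
      rcases Finset.mem_insert.1 hj with e1 | hm <;> rcases Finset.mem_insert.1 hj' with e2 | hm'
      · exact absurd (e1.trans e2.symm) hne
      · subst e1
        rw [Function.update_self, Function.update_of_ne hne.symm]
        exact key j' hm'
      · subst e2
        rw [Function.update_self, Function.update_of_ne hne]
        exact (key j hm).symm
      · have h1 : j ≠ i := fun e => hi (e ▸ hm)
        have h2 : j' ≠ i := fun e => hi (e ▸ hm')
        rw [Function.update_of_ne h1, Function.update_of_ne h2]
        exact hl2 j hm j' hm' hne

/-- The lists `l i` enumerate the petals, without the center `c`, of a copy of `C_{k,q}`. -/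
lemma containsCopy_of_lists {k q : ℕ} (hq : 5 ≤ q) {c : V} (l : Fin k → List V)
    (h : ∀ i, (l i).length = q - 1 ∧ (l i).Nodup ∧ c ∉ l i ∧ (c :: (l i ++ [c])).IsChain G.Adj)
    (hd : ∀ i j, i ≠ j → List.Disjoint (l i) (l j)) : ContainsCopy (Ckq k q) G := by
  let f : Option (Fin k × Fin (q - 1)) → V
    | none => c
    | some (i, j) => (l i)[(j : ℕ)]'(by rw [(h i).1]; exact j.2)
  have hrel : ∀ a b, CkqRel k q a b → G.Adj (f a) (f b) := by
    rintro (_ | ⟨i, j⟩) (_ | ⟨i', j'⟩) hab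
    · exact hab.elim
    · obtain ⟨h1, h2, h3, h4⟩ := h i'
      rw [List.isChain_iff_getElem] at h4
      rcases hab with hj | hj
      · have := h4 0 (by simp [h1])
        simp only [List.getElem_cons_zero, List.getElem_cons_succ] at this
        rw [List.getElem_append_left (by omega)] at this
        simpa [f, hj] using this
      · have := h4 (q - 1) (by simp [h1])
        simp only [List.getElem_cons_succ] at this
        rw [List.getElem_append_right (by omega)] at this
        have e : (c :: (l i' ++ [c]))[q - 1]'(by simp [h1]) = (l i')[q-2]'(by omega) := by
          simp only [show q - 1 = (q - 2) + 1 by omega, List.getElem_cons_succ]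
          rw [List.getElem_append_left (by omega)]
        rw [e] at this
        simpa [f, hj] using this.symm
    · exact hab.elim
    · obtain ⟨rfl, hj⟩ := hab
      obtain ⟨h1, h2, h3, h4⟩ := h i
      rw [List.isChain_iff_getElem] at h4
      have hj' := j'.2
      have := h4 (j + 1) (by simp; omega)
      simp only [List.getElem_cons_succ] at this
      rw [List.getElem_append_left (by omega), List.getElem_append_left (by omega)] at this
      simpa [f, hj] using this
  refine ⟨⟨f, ?_⟩, ?_⟩
  · intro a b hab
    rw [Ckq, SimpleGraph.fromRel_adj] at hab
    rcases hab.2 with h' | h'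
    · exact hrel _ _ h'
    · exact (hrel _ _ h').symm
  · have hfm : ∀ i j, f (some (i, j)) ∈ l i := fun i j => List.getElem_mem _
    rintro (_ | ⟨i, j⟩) (_ | ⟨i', j'⟩) hab
    · rfl
    · change c = f (some (i', j')) at hab
      exact absurd (hab ▸ hfm i' j' : c ∈ l i') (h i').2.2.1
    · change f (some (i, j)) = c at hab
      exact absurd (hab ▸ hfm i j : c ∈ l i) (h i).2.2.1
    · change f (some (i, j)) = f (some (i', j')) at hab
      by_cases hi : i = i'
      · subst hi
        have : (j : ℕ) = j' := ((h i).2.1.getElem_inj_iff).1 hab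
        rw [Fin.ext this]
      · exact (hd i i' hi (hfm i j) (hab ▸ hfm i' j')).elim

/-- A copy of `C_{k,q}` with center `c` exists as soon as at least `k` petals with disjoint
reserved sets `S i` of size at most two can each be completed while avoiding any small set. -/
lemma containsCopy_of_tasks {ι : Type} [DecidableEq ι] {k q N : ℕ} (hq : 5 ≤ q) {c : V}
    {S : ι → Finset V} (I : Finset ι) (hI : k ≤ I.card) (hS : ∀ i ∈ I, (S i).card ≤ 2)
    (hd : ∀ i ∈ I, ∀ j ∈ I, i ≠ j → Disjoint (S i) (S j)) (hc : ∀ i ∈ I, c ∉ S i)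
    (hN : k * (q + 1) + 1 ≤ N)
    (ht : ∀ i ∈ I, ∀ F : Finset V, F.card ≤ N → c ∈ F → Disjoint F (S i) →
      Linked G F c c (q - 1)) : ContainsCopy (Ckq k q) G := by
  obtain ⟨J, hJI, hJ⟩ := Finset.exists_subset_card_eq hI
  obtain ⟨l, h1, h2⟩ := exists_disjoint_cycles J (fun i hi => hS i (hJI hi))
    (fun i hi j hj => hd i (hJI hi) j (hJI hj)) (fun i hi => ht i (hJI hi)) {c} (by simp)
    (by rw [hJ, Finset.card_singleton, show q - 1 + 2 = q + 1 by omega]; omega)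
    (by simpa using fun i hi => hc i (hJI hi))
  let e := (J.equivFinOfCardEq hJ).symm
  refine containsCopy_of_lists hq (c := c) (fun i => l (e i)) ?_ ?_
  · intro i
    obtain ⟨a, b, d, f⟩ := h1 (e i) (e i).2
    exact ⟨a, b, fun hm => d c hm (by simp), f⟩
  · intro i j hij
    exact h2 _ (e i).2 _ (e j).2 (fun hh => hij (e.injective (Subtype.ext hh)))

/-- The case of no reserved vertices: `c` lies on a `q`-cycle avoiding any given small set. -/
lemma containsCopy_of_free_center {k q N : ℕ} (hq : 5 ≤ q) {c : V}
    (hN : k * (q + 1) + 1 ≤ N)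
    (ht : ∀ F : Finset V, F.card ≤ N → c ∈ F → Linked G F c c (q - 1)) :
    ContainsCopy (Ckq k q) G :=
  containsCopy_of_tasks hq (S := fun _ : Fin k => ∅) Finset.univ (by simp) (by simp) (by simp)
    (by simp) hN (fun _ _ F h1 h2 _ => ht F h1 h2)

end Links

/-! ### Nearly complete bipartite pairs -/

section Robust

variable {V : Type} [DecidableEq V] {G : SimpleGraph V} [DecidableRel G.Adj]

/-- Each of `A`, `B` has at least `K` vertices, and every vertex of one set is non-adjacent to at
most `μ` vertices of the other. Neither disjointness nor anything about the edges inside the two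
sets is required. -/
structure RobustPair (G : SimpleGraph V) [DecidableRel G.Adj] (A B : Finset V) (μ K : ℕ) :
    Prop where
  cardA : K ≤ A.card
  cardB : K ≤ B.card
  missA : ∀ a ∈ A, (B.filter (fun b => ¬ G.Adj a b)).card ≤ μ
  missB : ∀ b ∈ B, (A.filter (fun a => ¬ G.Adj b a)).card ≤ μ

variable {A B F : Finset V} {μ K : ℕ}

lemma RobustPair.symm (h : RobustPair G A B μ K) : RobustPair G B A μ K :=
  ⟨h.cardB, h.cardA, h.missB, h.missA⟩

lemma RobustPair.common (h : RobustPair G A B μ K) {u v : V} (hu : u ∈ A) (hv : v ∈ A)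
    (hF : F.card + 2 * μ < K) : ∃ b ∈ B, b ∉ F ∧ G.Adj u b ∧ G.Adj b v := by
  have h1 := h.missA u hu
  have h2 := h.missA v hv
  have h3 := h.cardB
  by_contra! hcon
  have hsub : B ⊆ F ∪ (B.filter (fun b => ¬ G.Adj u b) ∪ B.filter (fun b => ¬ G.Adj v b)) := by
    intro b hb
    by_cases hbF : b ∈ F
    · exact Finset.mem_union_left _ hbF
    · by_cases hub : G.Adj u b
      · have := hcon b hb hbF hub
        simp [hb, G.adj_comm v b, this]
      · simp [hb, hub]
  have := Finset.card_le_card hsub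
  have h4 := Finset.card_union_le F
    (B.filter (fun b => ¬ G.Adj u b) ∪ B.filter (fun b => ¬ G.Adj v b))
  have h5 := Finset.card_union_le (B.filter (fun b => ¬ G.Adj u b))
    (B.filter (fun b => ¬ G.Adj v b))
  omega

lemma RobustPair.link_odd (h : RobustPair G A B μ K) {v : V} (hv : v ∈ A) (j : ℕ) :
    ∀ (F : Finset V) (u : V), u ∈ A → F.card + 2 * j + 2 * μ < K →
      Linked G F u v (2 * j + 1) := by
  induction j with
  | zero =>
    intro F u hu hF
    obtain ⟨b, _, hbF, h1, h2⟩ := h.common hu hv (F := F) (by omega)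
    exact Linked.cons h1 hbF (Linked.nil h2)
  | succ j ih =>
    intro F u hu hF
    obtain ⟨b, hb, hbF, h1, -⟩ := h.common hu hu (F := F) (by omega)
    have hc := Finset.card_insert_le b F
    obtain ⟨a, ha, haF, h3, -⟩ := h.symm.common hb hb (F := insert b F) (by omega)
    have hc' := Finset.card_insert_le a (insert b F)
    exact Linked.cons h1 hbF (Linked.cons h3 haF (ih _ a ha (by omega)))

/-- Two vertices of `A` are joined by paths with `n` interior vertices, `n` odd. -/
lemma RobustPair.link_same (h : RobustPair G A B μ K) {u v : V} (hu : u ∈ A) (hv : v ∈ A)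
    {n : ℕ} (hn : Odd n) (hF : F.card + n + 2 * μ < K) : Linked G F u v n := by
  obtain ⟨j, rfl⟩ := hn
  exact h.link_odd hv j F u hu (by omega)

/-- A vertex of `A` and a vertex of `B` are joined by paths with `n` interior vertices, `n` even. -/
lemma RobustPair.link_opp (h : RobustPair G A B μ K) {u v : V} (hu : u ∈ A) (hv : v ∈ B)
    {n : ℕ} (hn : Even n) (hn2 : 2 ≤ n) (hF : F.card + n + 2 * μ < K) : Linked G F u v n := by
  obtain ⟨b, hb, hbF, h1, -⟩ := h.common hu hu (F := F) (by omega)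
  have hc := Finset.card_insert_le b F
  obtain ⟨j, rfl⟩ : ∃ j, n = j + 1 := ⟨n - 1, by omega⟩
  refine Linked.cons h1 hbF (h.symm.link_same hb hv ?_ (by omega))
  rw [Nat.even_add_one, Nat.not_even_iff_odd] at hn
  exact hn

variable {q N : ℕ} {x y z u : V}

/-- A `q`-cycle through the inner edge `xu`. -/
lemma RobustPair.task_star (h : RobustPair G A B μ K) (hq : 5 ≤ q) (hqo : Odd q)
    (hK : N + q + 2 + 2 * μ < K) (hx : x ∈ A) (hu : u ∈ A) (hxu : G.Adj x u) (F : Finset V)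
    (hF : F.card ≤ N) (_ : x ∈ F) (hd : Disjoint F {u}) : Linked G F x x (q - 1) := by
  have hc := Finset.card_insert_le u F
  rw [show q - 1 = (q - 2) + 1 by omega]
  refine Linked.cons hxu (by simpa using hd) (h.link_same hu hx ?_ (by omega))
  obtain ⟨r, rfl⟩ := hqo
  exact ⟨r - 1, by omega⟩

/-- A `q`-cycle through `x` and an inner edge `yz` on the side of `x`. -/
lemma RobustPair.task_same (h : RobustPair G A B μ K) (hq : 5 ≤ q) (hqo : Odd q)
    (hK : N + q + 2 + 2 * μ < K) (hx : x ∈ A) (hy : y ∈ A) (hz : z ∈ A) (hyz : G.Adj y z)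
    (F : Finset V) (hF : F.card ≤ N) (_ : x ∈ F) (hd : Disjoint F {y, z}) :
    Linked G F x x (q - 1) := by
  simp only [Finset.disjoint_insert_right, Finset.disjoint_singleton_right] at hd
  have hc := Finset.card_insert_le z F
  have hc' := Finset.card_insert_le y (insert z F)
  obtain ⟨b, _, hbF, h1, h2⟩ := h.common hx hy (F := insert y (insert z F)) (by omega)
  simp only [Finset.mem_insert, not_or] at hbF
  have hc1 := Finset.card_insert_le b F
  have hc2 := Finset.card_insert_le y (insert b F)
  have hc3 := Finset.card_insert_le z (insert y (insert b F))
  rw [show q - 1 = (q - 4) + 1 + 1 + 1 by omega]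
  refine Linked.cons h1 hbF.2.2 (Linked.cons h2 ?_ (Linked.cons hyz ?_
    (h.link_same hz hx ?_ (by omega))))
  · simp [hd.1, Ne.symm hbF.1]
  · simp [hd.2, Ne.symm hbF.2.1, hyz.ne']
  · obtain ⟨r, rfl⟩ := hqo
    exact ⟨r - 2, by omega⟩

/-- A `q`-cycle through `x` starting `x, y, z`. It is used with `yz` an inner edge of the side
opposite to `x`. -/
lemma RobustPair.task_opp (h : RobustPair G A B μ K) (hq : 5 ≤ q) (hqo : Odd q)
    (hK : N + q + 2 + 2 * μ < K) (hx : x ∈ A) (hz : z ∈ B) (hxy : G.Adj x y) (hyz : G.Adj y z)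
    (F : Finset V) (hF : F.card ≤ N) (_ : x ∈ F) (hd : Disjoint F {y, z}) :
    Linked G F x x (q - 1) := by
  simp only [Finset.disjoint_insert_right, Finset.disjoint_singleton_right] at hd
  have hc2 := Finset.card_insert_le y F
  have hc3 := Finset.card_insert_le z (insert y F)
  rw [show q - 1 = (q - 3) + 1 + 1 by omega]
  refine Linked.cons hxy hd.1 (Linked.cons hyz ?_ (h.symm.link_opp hz hx ?_ (by omega) (by omega)))
  · simp [hd.2, hyz.ne']
  · obtain ⟨r, rfl⟩ := hqo
    exact ⟨r - 1, by omega⟩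

end Robust

/-! ### Matchings inside one class -/

section Matchings

variable {V : Type} [DecidableEq V] {G : SimpleGraph V} [DecidableRel G.Adj]

/-- `M` is a matching of `G` inside `X`, its edges encoded as two-element sets. -/
def IsMatch (G : SimpleGraph V) (X : Finset V) (M : Finset (Finset V)) : Prop :=
  (∀ S ∈ M, ∃ y ∈ X, ∃ z ∈ X, G.Adj y z ∧ S = {y, z}) ∧
    ∀ S ∈ M, ∀ S' ∈ M, S ≠ S' → Disjoint S S'

variable {X : Finset V} {M : Finset (Finset V)}

lemma IsMatch.card_eq (h : IsMatch G X M) {S : Finset V} (hS : S ∈ M) : S.card = 2 := by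
  obtain ⟨y, _, z, _, hyz, rfl⟩ := h.1 S hS
  exact Finset.card_pair hyz.ne

lemma IsMatch.subset (h : IsMatch G X M) {S : Finset V} (hS : S ∈ M) : S ⊆ X := by
  obtain ⟨y, hy, z, hz, hyz, rfl⟩ := h.1 S hS
  intro w hw
  simp only [Finset.mem_insert, Finset.mem_singleton] at hw
  rcases hw with rfl | rfl <;> assumption

lemma IsMatch.mono (h : IsMatch G X M) {M' : Finset (Finset V)} (hM : M' ⊆ M) :
    IsMatch G X M' :=
  ⟨fun S hS => h.1 S (hM hS), fun S hS S' hS' => h.2 S (hM hS) S' (hM hS')⟩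

lemma IsMatch.card_biUnion (h : IsMatch G X M) : (M.biUnion id).card = 2 * M.card := by
  rw [Finset.card_biUnion (t := id) (fun S hS S' hS' hne => h.2 S hS S' hS' hne),
    Finset.sum_congr rfl (fun S hS => by rw [id, h.card_eq hS])]
  simp [mul_comm]

lemma IsMatch.insert (h : IsMatch G X M) {y z : V} (hy : y ∈ X) (hz : z ∈ X) (hyz : G.Adj y z)
    (hy' : y ∉ M.biUnion id) (hz' : z ∉ M.biUnion id) :
    IsMatch G X (insert {y, z} M) ∧ (insert {y, z} M).card = M.card + 1 := by
  simp only [Finset.mem_biUnion, id, not_exists, not_and] at hy' hz'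
  have key : ∀ S ∈ M, Disjoint {y, z} S := by
    intro S hS
    simp [hy' S hS, hz' S hS]
  refine ⟨⟨?_, ?_⟩, Finset.card_insert_of_notMem fun hm => hy' _ hm (by simp)⟩
  · intro S hS
    rcases Finset.mem_insert.1 hS with rfl | hS
    · exact ⟨y, hy, z, hz, hyz, rfl⟩
    · exact h.1 S hS
  · intro S hS S' hS' hne
    rcases Finset.mem_insert.1 hS with e | hm <;> rcases Finset.mem_insert.1 hS' with e' | hm'
    · exact absurd (e.trans e'.symm) hne
    · exact e ▸ key S' hm'
    · exact e' ▸ (key S hm).symm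
    · exact h.2 S hm S' hm' hne

/-- `M` is a maximum matching of `G` inside `X`. -/
def IsMaxMatch (G : SimpleGraph V) (X : Finset V) (M : Finset (Finset V)) : Prop :=
  IsMatch G X M ∧ ∀ M', IsMatch G X M' → M'.card ≤ M.card

lemma exists_isMaxMatch [Fintype V] (G : SimpleGraph V) (X : Finset V) :
    ∃ M, IsMaxMatch G X M := by
  classical
  obtain ⟨M, hM, hmax⟩ := Finset.exists_max_image
    ((Finset.univ : Finset (Finset (Finset V))).filter (IsMatch G X)) Finset.card
    ⟨∅, by simp [IsMatch]⟩
  refine ⟨M, (Finset.mem_filter.1 hM).2, fun M' hM' => hmax M' (by simp [hM'])⟩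

lemma IsMaxMatch.cover (h : IsMaxMatch G X M) {y z : V} (hy : y ∈ X) (hz : z ∈ X)
    (hyz : G.Adj y z) : y ∈ M.biUnion id ∨ z ∈ M.biUnion id := by
  by_contra! hcon
  have := h.1.insert hy hz hyz hcon.1 hcon.2
  have := h.2 _ this.1
  omega

/-- The edges of `G` with both endpoints in `X`, as a finset. -/
def edgesInside (G : SimpleGraph V) [DecidableRel G.Adj] (X : Finset V) : Finset (Sym2 V) :=
  ((X ×ˢ X).filter (fun p => G.Adj p.1 p.2)).image (fun p => s(p.1, p.2))

/-- Counting the inner edges by a vertex cover `S`: each edge is charged to some `v ∈ S` with its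
other endpoint in `D v`. -/
lemma card_edgesInside_le (S : Finset V) (D : V → Finset V)
    (h : ∀ y ∈ X, ∀ z ∈ X, G.Adj y z → (y ∈ S ∧ z ∈ D y) ∨ (z ∈ S ∧ y ∈ D z)) :
    (edgesInside G X).card ≤ ∑ v ∈ S, (D v).card := by
  have hsub : edgesInside G X ⊆ S.biUnion (fun v => (D v).image (fun w => s(v, w))) := by
    intro e he
    simp only [edgesInside, Finset.mem_image, Finset.mem_filter, Finset.mem_product] at he
    obtain ⟨⟨y, z⟩, ⟨⟨hy, hz⟩, hyz⟩, rfl⟩ := he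
    simp only [Finset.mem_biUnion, Finset.mem_image]
    rcases h y hy z hz hyz with ⟨h1, h2⟩ | ⟨h1, h2⟩
    · exact ⟨y, h1, z, h2, rfl⟩
    · exact ⟨z, h1, y, h2, Sym2.eq_swap⟩
  refine (Finset.card_le_card hsub).trans (Finset.card_biUnion_le.trans ?_)
  exact Finset.sum_le_sum fun v _ => Finset.card_image_le

lemma card_edgeFinset_le [Fintype V] {A B : Finset V} (h : A ∪ B = Finset.univ) :
    G.edgeFinset.card ≤ (edgesInside G A).card + (edgesInside G B).card +
      ∑ a ∈ A, (B.filter (fun b => G.Adj a b)).card := by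
  have hsub : G.edgeFinset ⊆ (edgesInside G A ∪ edgesInside G B) ∪
      A.biUnion (fun a => (B.filter (fun b => G.Adj a b)).image (fun b => s(a, b))) := by
    intro e
    induction e using Sym2.ind with
    | _ y z =>
      intro he
      rw [SimpleGraph.mem_edgeFinset, SimpleGraph.mem_edgeSet] at he
      have hy : y ∈ A ∪ B := h ▸ Finset.mem_univ y
      have hz : z ∈ A ∪ B := h ▸ Finset.mem_univ z
      simp only [edgesInside, Finset.mem_union, Finset.mem_image, Finset.mem_filter,
        Finset.mem_product, Finset.mem_biUnion] at hy hz ⊢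
      rcases hy with hy | hy <;> rcases hz with hz | hz
      · exact .inl (.inl ⟨(y, z), ⟨⟨hy, hz⟩, he⟩, rfl⟩)
      · exact .inr ⟨y, hy, z, ⟨hz, he⟩, rfl⟩
      · exact .inr ⟨z, hz, y, ⟨hy, he.symm⟩, Sym2.eq_swap⟩
      · exact .inl (.inr ⟨(y, z), ⟨⟨hy, hz⟩, he⟩, rfl⟩)
  refine (Finset.card_le_card hsub).trans ((Finset.card_union_le _ _).trans ?_)
  refine add_le_add (Finset.card_union_le _ _) (Finset.card_biUnion_le.trans ?_)
  exact Finset.sum_le_sum fun v _ => Finset.card_image_le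

/-- Each edge of a maximum matching has an endpoint with at most one unmatched neighbour:
otherwise the edge could be exchanged for two. -/
lemma IsMaxMatch.exists_poor (h : IsMaxMatch G X M) {S : Finset V} (hS : S ∈ M) :
    ∃ u v, S = {u, v} ∧ ((X \ M.biUnion id).filter (fun w => G.Adj v w)).card ≤ 1 := by
  obtain ⟨y, hy, z, hz, hyz, rfl⟩ := h.1.1 S hS
  by_contra! hcon
  have h1 := hcon y z rfl
  have h2 := hcon z y (Finset.pair_comm y z)
  obtain ⟨w, hw⟩ := Finset.card_pos.1 (by omega : 0 <
    ((X \ M.biUnion id).filter (fun w => G.Adj y w)).card)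
  obtain ⟨w', hw', hne⟩ := Finset.exists_mem_ne h1 w
  simp only [Finset.mem_filter, Finset.mem_sdiff] at hw hw'
  -- the matching edge `yz` is replaced by two edges to unmatched vertices
  have hE : IsMatch G X (M.erase {y, z}) := h.1.mono (Finset.erase_subset _ _)
  have hcard := Finset.card_erase_of_mem hS
  have hpos := Finset.card_pos.2 ⟨_, hS⟩
  have hin : ∀ v ∈ ({y, z} : Finset V), v ∉ (M.erase {y, z}).biUnion id := by
    intro v hv hv'
    simp only [Finset.mem_biUnion, id, Finset.mem_erase] at hv'
    obtain ⟨T, ⟨hT, hTM⟩, hvT⟩ := hv'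
    exact Finset.disjoint_left.1 (h.1.2 T hTM _ hS hT) hvT hv
  have hout : ∀ v, v ∉ M.biUnion id → v ∉ (M.erase {y, z}).biUnion id := by
    intro v hv hv'
    exact hv (Finset.biUnion_subset_biUnion_of_subset_left _ (Finset.erase_subset _ _) hv')
  have hmem : ∀ v ∈ ({y, z} : Finset V), v ∈ M.biUnion id := fun v hv =>
    Finset.mem_biUnion.2 ⟨_, hS, hv⟩
  obtain ⟨i1, c1⟩ := hE.insert hy hw.1.1 hw.2 (hin y (by simp)) (hout w hw.1.2)
  obtain ⟨i2, c2⟩ := i1.insert hz hw'.1.1 hw'.2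
    (by
      simp only [Finset.biUnion_insert, id, Finset.mem_union, Finset.mem_insert,
        Finset.mem_singleton, not_or]
      refine ⟨⟨hyz.ne', ?_⟩, hin z (by simp)⟩
      rintro rfl; exact hw.1.2 (hmem _ (by simp)))
    (by
      simp only [Finset.biUnion_insert, id, Finset.mem_union, Finset.mem_insert,
        Finset.mem_singleton, not_or]
      refine ⟨⟨?_, hne⟩, hout w' hw'.1.2⟩
      rintro rfl; exact hw'.1.2 (hmem _ (by simp)))
  have := h.2 _ i2
  omega

/-- With `M` a maximum matching and degrees at most `m`, one endpoint of each matching edge covers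
at most `m` edges, and the poor endpoints account for at most `M.card` further edges each. -/
lemma IsMaxMatch.card_edgesInside_le (h : IsMaxMatch G X M) {m : ℕ}
    (hm : ∀ v ∈ X, (X.filter (fun w => G.Adj v w)).card ≤ m) :
    (edgesInside G X).card ≤ M.card * m + M.card * M.card := by
  rcases isEmpty_or_nonempty V with hV | hV
  · simp [edgesInside, Finset.eq_empty_of_isEmpty]
  choose! u v huv hv using fun S hS => h.exists_poor (S := S) hS
  set U := M.image u with hU
  set W := M.image v with hW
  set I := X \ M.biUnion id with hI
  have hUc : U.card ≤ M.card := Finset.card_image_le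
  have hWc : W.card ≤ M.card := Finset.card_image_le
  have hUX : ∀ x ∈ U, x ∈ X := by
    intro x hx
    obtain ⟨S, hS, rfl⟩ := Finset.mem_image.1 hx
    exact h.1.subset hS ((Finset.ext_iff.1 (huv S hS) _).2 (by simp))
  have hI1 : ∀ x ∈ W, (I.filter (fun w => G.Adj x w)).card ≤ 1 := by
    intro x hx
    obtain ⟨S, hS, rfl⟩ := Finset.mem_image.1 hx
    exact hv S hS
  have htri : ∀ x ∈ X, x ∈ U ∨ x ∈ W ∨ x ∈ I := by
    intro x hx
    by_cases hxM : x ∈ M.biUnion id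
    · obtain ⟨S, hS, hxS⟩ := Finset.mem_biUnion.1 hxM
      rw [id, huv S hS] at hxS
      simp only [Finset.mem_insert, Finset.mem_singleton] at hxS
      rcases hxS with e | e
      · exact .inl (e ▸ Finset.mem_image_of_mem _ hS)
      · exact .inr (.inl (e ▸ Finset.mem_image_of_mem _ hS))
    · exact .inr (.inr (Finset.mem_sdiff.2 ⟨hx, hxM⟩))
  let D : V → Finset V := fun x =>
    if x ∈ U then X.filter (fun w => G.Adj x w) else
      (W.erase x) ∪ I.filter (fun w => G.Adj x w)
  have hcov := OddFlower.card_edgesInside_le (G := G) (X := X) (U ∪ W) D (by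
    intro y hy z hz hyz
    by_cases hyU : y ∈ U
    · left; simp [D, hyU, hz, hyz]
    by_cases hzU : z ∈ U
    · right; simp [D, hzU, hy, hyz.symm]
    rcases (htri y hy).resolve_left hyU with hyW | hyI
    · left
      refine ⟨Finset.mem_union_right _ hyW, ?_⟩
      rcases (htri z hz).resolve_left hzU with hzW | hzI
      · simp [D, hyU, hzW, hyz.ne']
      · simp [D, hyU, hzI, hyz]
    · right
      have hzW : z ∈ W := by
        refine ((htri z hz).resolve_left hzU).resolve_right fun hzI => ?_
        rcases h.cover hy hz hyz with hh | hh
        · exact (Finset.mem_sdiff.1 hyI).2 hh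
        · exact (Finset.mem_sdiff.1 hzI).2 hh
      exact ⟨Finset.mem_union_right _ hzW, by simp [D, hzU, hyI, hyz.symm]⟩)
  refine hcov.trans ?_
  rw [← Finset.union_sdiff_self_eq_union, Finset.sum_union Finset.disjoint_sdiff]
  refine add_le_add ?_ ?_
  · calc ∑ x ∈ U, (D x).card ≤ ∑ x ∈ U, m := Finset.sum_le_sum fun x hx => by
          simp only [D, hx, if_true]; exact hm x (hUX x hx)
      _ = U.card * m := by simp
      _ ≤ M.card * m := Nat.mul_le_mul_right _ hUc
  · calc ∑ x ∈ W \ U, (D x).card ≤ ∑ x ∈ W \ U, M.card := Finset.sum_le_sum fun x hx => by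
          obtain ⟨hxW, hxU⟩ := Finset.mem_sdiff.1 hx
          simp only [D, hxU, if_false]
          have h1 := Finset.card_union_le (W.erase x) (I.filter (fun w => G.Adj x w))
          have h2 := hI1 x hxW
          have h3 := Finset.card_erase_of_mem hxW
          have h4 := Finset.card_pos.2 ⟨x, hxW⟩
          omega
      _ = (W \ U).card * M.card := by simp
      _ ≤ M.card * M.card :=
          Nat.mul_le_mul_right _ ((Finset.card_le_card Finset.sdiff_subset).trans hWc)

end Matchings

/-! ### The edge count of a flower-free graph with a robust partition -/

section Exact

variable {V : Type} [DecidableEq V] {G : SimpleGraph V} [DecidableRel G.Adj]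
  {A B : Finset V} {μ K k q : ℕ}

/-- A star at `x` with leaf set `T`, a matching `M` on the side of `x` avoiding the star, and a
second matching on the other side each of whose edges has an end adjacent to `x` contribute one
petal per edge to a flower centered at `x`. -/
lemma RobustPair.flower_bound (h : RobustPair G A B μ K) (hAB : Disjoint A B) (hq : 5 ≤ q)
    (hqo : Odd q) (hK : k * (q + 1) + 1 + q + 2 + 2 * μ < K) (hfree : ¬ ContainsCopy (Ckq k q) G)
    {x : V} (hx : x ∈ A) {T X : Finset V} (hT : T ⊆ A) (hxT : ∀ u ∈ T, G.Adj x u) (hX : X ⊆ A)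
    (hTX : Disjoint T X) (hxX : x ∉ X) {M M' : Finset (Finset V)} (hM : IsMatch G X M)
    (hM' : IsMatch G B M') (hadj : ∀ S ∈ M', ∃ y ∈ S, G.Adj x y) :
    T.card + M.card + M'.card < k := by
  by_contra! hcon
  refine hfree (containsCopy_of_tasks (ι := V ⊕ (Finset V ⊕ Finset V)) hq (c := x)
    (S := Sum.elim (fun u => {u}) (Sum.elim id id)) (T.disjSum (M.disjSum M'))
    (by simpa [Finset.card_disjSum, add_assoc] using hcon) ?_ ?_ ?_ le_rfl ?_)
  · rintro (u | S | S) hS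
    · simp
    · simp at hS; simp [hM.card_eq hS]
    · simp at hS; simp [hM'.card_eq hS]
  · have hTM : ∀ u ∈ T, ∀ S ∈ M, Disjoint {u} S := fun u hu S hS =>
      Finset.disjoint_singleton_left.2 fun hh => Finset.disjoint_left.1 hTX hu (hM.subset hS hh)
    have hTM' : ∀ u ∈ T, ∀ S ∈ M', Disjoint {u} S := fun u hu S hS =>
      Finset.disjoint_singleton_left.2 fun hh =>
        Finset.disjoint_left.1 hAB (hT hu) (hM'.subset hS hh)
    have hMM' : ∀ S ∈ M, ∀ S' ∈ M', Disjoint S S' := fun S hS S' hS' =>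
      Finset.disjoint_of_subset_left ((hM.subset hS).trans hX)
        (Finset.disjoint_of_subset_right (hM'.subset hS') hAB)
    rintro (u | S | S) hS (u' | S' | S') hS' hne <;>
      simp only [Finset.inl_mem_disjSum, Finset.inr_mem_disjSum] at hS hS' <;>
      simp only [Sum.elim_inl, Sum.elim_inr, id]
    · simpa using fun e => hne (by rw [e])
    · exact hTM _ hS _ hS'
    · exact hTM' _ hS _ hS'
    · exact (hTM _ hS' _ hS).symm
    · exact hM.2 _ hS _ hS' (by simpa using hne)
    · exact hMM' _ hS _ hS'
    · exact (hTM' _ hS' _ hS).symm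
    · exact (hMM' _ hS' _ hS).symm
    · exact hM'.2 _ hS _ hS' (by simpa using hne)
  · rintro (u | S | S) hS <;>
      simp only [Finset.inl_mem_disjSum, Finset.inr_mem_disjSum] at hS <;>
      simp only [Sum.elim_inl, Sum.elim_inr, id]
    · simpa using (hxT u hS).ne
    · exact fun hh => hxX (hM.subset hS hh)
    · exact fun hh => Finset.disjoint_left.1 hAB hx (hM'.subset hS hh)
  · rintro (u | S | S) hS F hF hxF hd <;>
      simp only [Finset.inl_mem_disjSum, Finset.inr_mem_disjSum] at hS <;>
      simp only [Sum.elim_inl, Sum.elim_inr, id] at hd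
    · exact h.task_star hq hqo hK hx (hT hS) (hxT u hS) F hF hxF hd
    · obtain ⟨y, hy, z, hz, hyz, rfl⟩ := hM.1 S hS
      exact h.task_same hq hqo hK hx (hX hy) (hX hz) hyz F hF hxF hd
    · obtain ⟨w, hw, hxw⟩ := hadj S hS
      obtain ⟨y, hy, z, hz, hyz, rfl⟩ := hM'.1 S hS
      simp only [Finset.mem_insert, Finset.mem_singleton] at hw
      rcases hw with rfl | rfl
      · exact h.task_opp hq hqo hK hx hz hxw hyz F hF hxF hd
      · exact h.task_opp hq hqo hK hx hy hxw hyz.symm F hF hxF (by rwa [Finset.pair_comm])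

/-- The matching numbers of the two sides add up to less than `k`. -/
lemma RobustPair.matching_bound (h : RobustPair G A B μ K) (hAB : Disjoint A B) (hq : 5 ≤ q)
    (hqo : Odd q) (hK : k * (q + 1) + 1 + q + 2 + 2 * μ < K) (hK' : 2 * k + 2 * k * μ < K)
    (hfree : ¬ ContainsCopy (Ckq k q) G) {M M' : Finset (Finset V)} (hM : IsMatch G A M)
    (hM' : IsMatch G B M') : M.card + M'.card < k := by
  by_contra! hcon
  obtain ⟨P, hPM, hP⟩ := Finset.exists_subset_card_eq (min_le_left M.card k)
  obtain ⟨P', hPM', hP'⟩ := Finset.exists_subset_card_eq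
    (show k - min M.card k ≤ M'.card by omega)
  replace hM := hM.mono hPM
  replace hM' := hM'.mono hPM'
  obtain ⟨x, hx, hx'⟩ : ∃ x ∈ A, x ∉ P.biUnion id ∪
      (P'.biUnion id).biUnion (fun y => A.filter (fun a => ¬ G.Adj y a)) := by
    by_contra! hsub
    have h1 := Finset.card_le_card (show A ⊆ _ from hsub)
    have h2 := Finset.card_union_le (P.biUnion id)
      ((P'.biUnion id).biUnion (fun y => A.filter (fun a => ¬ G.Adj y a)))
    have h3 : ((P'.biUnion id).biUnion (fun y => A.filter (fun a => ¬ G.Adj y a))).card ≤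
        (P'.biUnion id).card * μ := Finset.card_biUnion_le_card_mul _ _ _ fun y hy => by
      obtain ⟨S, hS, hyS⟩ := Finset.mem_biUnion.1 hy
      exact h.missB y (hM'.subset hS hyS)
    rw [hM'.card_biUnion] at h3
    rw [hM.card_biUnion] at h2
    have h4 := h.cardA
    have h5 : 2 * P'.card * μ ≤ 2 * k * μ := Nat.mul_le_mul_right _ (by omega)
    omega
  simp only [Finset.mem_union, Finset.mem_biUnion, not_or, id, not_exists, not_and,
    Finset.mem_filter, not_not] at hx'
  have := h.flower_bound hAB hq hqo hK hfree hx (T := ∅) (X := A.erase x) (by simp) (by simp)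
    (Finset.erase_subset _ _) (by simp) (by simp) (M := P) (M' := P') ?_ hM' ?_
  · simp only [Finset.card_empty] at this
    omega
  · refine ⟨fun S hS => ?_, hM.2⟩
    obtain ⟨y, hy, z, hz, hyz, rfl⟩ := hM.1 S hS
    have := hx'.1 _ hS
    simp only [Finset.mem_insert, Finset.mem_singleton, not_or] at this
    exact ⟨y, Finset.mem_erase.2 ⟨Ne.symm this.1, hy⟩, z, Finset.mem_erase.2 ⟨Ne.symm this.2, hz⟩,
      hyz, rfl⟩
  · intro S hS
    obtain ⟨y, hy, z, hz, hyz, rfl⟩ := hM'.1 S hS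
    exact ⟨y, by simp, (hx'.2 y ⟨_, hS, by simp⟩ hx).symm⟩

/-- If `B` has a matching of `b = k - 1 - t` edges, then `A` spans at most `t ^ 2` edges plus the
number of missing cross edges. Writing `d` for the degree in `A` and `p` for the number of
matching edges of `B` both of whose ends are missed, a vertex `x` maximizing `E = d - 2 p` is
chosen. Its neighbours and a maximum matching among its non-neighbours form a vertex cover of size
at most `2 t - E`, whence the count `E (2 t - E)` plus twice the sum of `p`, which is paid for by
missing edges. -/
lemma RobustPair.card_edgesInside_le [Fintype V] (h : RobustPair G A B μ K)
    (hAB : Disjoint A B) (hq : 5 ≤ q)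
    (hqo : Odd q) (hK : k * (q + 1) + 1 + q + 2 + 2 * μ < K)
    (hfree : ¬ ContainsCopy (Ckq k q) G) {N : Finset (Finset V)} (hN : IsMatch G B N) {t : ℕ}
    (ht : t + N.card + 1 = k) :
    (edgesInside G A).card ≤ t ^ 2 + ∑ a ∈ A, (B.filter (fun b => ¬ G.Adj a b)).card := by
  set d : V → ℕ := fun v => (A.filter (fun w => G.Adj v w)).card with hd
  set p : V → ℕ := fun v => (N.filter (fun S => ¬ ∃ y ∈ S, G.Adj v y)).card with hp
  have hpm : ∀ v, 2 * p v ≤ (B.filter (fun b => ¬ G.Adj v b)).card := by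
    intro v
    have hm := hN.mono (Finset.filter_subset (fun S => ¬ ∃ y ∈ S, G.Adj v y) N)
    rw [hp, ← hm.card_biUnion]
    refine Finset.card_le_card fun y hy => ?_
    obtain ⟨S, hS, hyS⟩ := Finset.mem_biUnion.1 hy
    have hS' := Finset.mem_filter.1 hS
    exact Finset.mem_filter.2 ⟨hN.subset hS'.1 hyS, fun hh => hS'.2 ⟨y, hyS, hh⟩⟩
  have hAne : A.Nonempty := Finset.card_pos.1 (by have := h.cardA; omega)
  obtain ⟨x, hx, hmax⟩ := Finset.exists_max_image A (fun v => (d v : ℤ) - 2 * p v) hAne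
  set X := A.filter (fun w => ¬ G.Adj x w ∧ w ≠ x) with hXdef
  obtain ⟨M, hM⟩ := exists_isMaxMatch G X
  have hflower := h.flower_bound hAB hq hqo hK hfree hx (T := A.filter (fun w => G.Adj x w))
    (X := X) (Finset.filter_subset _ _) (fun u hu => (Finset.mem_filter.1 hu).2)
    (Finset.filter_subset _ _)
    (Finset.disjoint_left.2 fun w hw hw' => (Finset.mem_filter.1 hw').2.1 (Finset.mem_filter.1 hw).2)
    (by simp [hXdef]) hM.1 (hN.mono (Finset.filter_subset (fun S => ∃ y ∈ S, G.Adj x y) N))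
    (fun S hS => (Finset.mem_filter.1 hS).2)
  have hsplit := Finset.card_filter_add_card_filter_not (s := N) (fun S => ∃ y ∈ S, G.Adj x y)
  set S := A.filter (fun w => G.Adj x w) ∪ M.biUnion id with hSdef
  have hSA : S ⊆ A := by
    refine Finset.union_subset (Finset.filter_subset _ _) ?_
    intro w hw
    obtain ⟨e, he, hwe⟩ := Finset.mem_biUnion.1 hw
    exact Finset.filter_subset _ _ (hM.1.subset he hwe)
  have hScard : S.card ≤ d x + 2 * M.card := by
    rw [← hM.1.card_biUnion]
    exact Finset.card_union_le _ _
  have hcov : (edgesInside G A).card ≤ ∑ v ∈ S, d v := by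
    refine OddFlower.card_edgesInside_le S (fun v => A.filter (fun w => G.Adj v w)) ?_
    intro y hy z hz hyz
    suffices y ∈ S ∨ z ∈ S by
      rcases this with hh | hh
      · exact .inl ⟨hh, by simp [hz, hyz]⟩
      · exact .inr ⟨hh, by simp [hy, hyz.symm]⟩
    by_cases h1 : G.Adj x y
    · exact .inl (Finset.mem_union_left _ (by simp [hy, h1]))
    by_cases h2 : G.Adj x z
    · exact .inr (Finset.mem_union_left _ (by simp [hz, h2]))
    have h3 : y ≠ x := by rintro rfl; exact h2 hyz
    have h4 : z ≠ x := by rintro rfl; exact h1 hyz.symm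
    rcases hM.cover (y := y) (z := z) (by simp [hXdef, hy, h1, h3]) (by simp [hXdef, hz, h2, h4])
      hyz with hh | hh
    · exact .inl (Finset.mem_union_right _ hh)
    · exact .inr (Finset.mem_union_right _ hh)
  set E : ℤ := (d x : ℤ) - 2 * p x with hE
  have hsum : (∑ v ∈ S, (d v : ℤ)) ≤ E * S.card + ∑ v ∈ S, (2 * p v : ℤ) := by
    calc (∑ v ∈ S, (d v : ℤ)) ≤ ∑ v ∈ S, (E + 2 * p v) :=
          Finset.sum_le_sum fun v hv => by have := hmax v (hSA hv); linarith
      _ = _ := by rw [Finset.sum_add_distrib]; simp [mul_comm]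
  have hmiss : ∑ v ∈ S, 2 * p v ≤ ∑ a ∈ A, (B.filter (fun b => ¬ G.Adj a b)).card :=
    (Finset.sum_le_sum_of_subset hSA).trans (Finset.sum_le_sum fun v _ => hpm v)
  have hES : E * S.card ≤ (t : ℤ) ^ 2 := by
    have hS2 : (S.card : ℤ) ≤ 2 * t - E := by
      have e1 : d x + M.card + (N.filter (fun S => ∃ y ∈ S, G.Adj x y)).card < k := hflower
      have e2 : (N.filter (fun S => ∃ y ∈ S, G.Adj x y)).card + p x = N.card := hsplit
      rw [hE]; omega
    rcases le_or_gt 0 E with h0 | h0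
    · nlinarith [sq_nonneg ((t : ℤ) - E)]
    · nlinarith [sq_nonneg (t : ℤ)]
  zify
  zify at hcov hmiss
  linarith

lemma RobustPair.card_edgeFinset_le_of_le [Fintype V] (h : RobustPair G A B μ K)
    (hAB : Disjoint A B)
    (hun : A ∪ B = Finset.univ) (hq : 5 ≤ q) (hqo : Odd q)
    (hK : k * (q + 1) + 1 + q + 2 + 2 * μ < K) (hK' : 2 * k + 2 * k * μ < K)
    (hfree : ¬ ContainsCopy (Ckq k q) G) {M N : Finset (Finset V)} (hM : IsMaxMatch G A M)
    (hN : IsMaxMatch G B N) (hle : N.card ≤ M.card) :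
    G.edgeFinset.card ≤ Fintype.card V ^ 2 / 4 + (k - 1) ^ 2 := by
  have hmn := h.matching_bound hAB hq hqo hK hK' hfree hM.1 hN.1
  obtain ⟨t, ht⟩ : ∃ t, t + N.card + 1 = k := ⟨k - 1 - N.card, by omega⟩
  have hA := h.card_edgesInside_le hAB hq hqo hK hfree hN.1 ht
  have hB := hN.card_edgesInside_le (m := k - 1) (fun v hv => by
    have := h.symm.flower_bound hAB.symm hq hqo hK hfree hv
      (T := B.filter (fun w => G.Adj v w)) (X := ∅) (M := ∅) (M' := ∅)
      (Finset.filter_subset _ _) (fun u hu => (Finset.mem_filter.1 hu).2) (by simp) (by simp)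
      (by simp) (by simp [IsMatch]) (by simp [IsMatch]) (by simp)
    simp only [Finset.card_empty] at this
    omega)
  have hE := card_edgeFinset_le (G := G) hun
  have hcross : ∑ a ∈ A, (B.filter (fun b => G.Adj a b)).card +
      ∑ a ∈ A, (B.filter (fun b => ¬ G.Adj a b)).card = A.card * B.card := by
    rw [← Finset.sum_add_distrib]
    simp [Finset.card_filter_add_card_filter_not]
  have hn : A.card + B.card = Fintype.card V := by
    rw [← Finset.card_union_of_disjoint hAB, hun, Finset.card_univ]
  have hprod : A.card * B.card ≤ Fintype.card V ^ 2 / 4 := by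
    rw [Nat.le_div_iff_mul_le (by norm_num), ← hn]
    zify
    nlinarith [sq_nonneg ((A.card : ℤ) - B.card)]
  have hk1 : k - 1 = t + N.card := by omega
  have h2 : 2 * N.card ≤ t + N.card := by omega
  rw [hk1] at hB ⊢
  nlinarith

/-- The upper bound, given a robust partition of the vertex set. -/
theorem RobustPair.card_edgeFinset_le [Fintype V] (h : RobustPair G A B μ K)
    (hAB : Disjoint A B)
    (hun : A ∪ B = Finset.univ) (hq : 5 ≤ q) (hqo : Odd q)
    (hK : k * (q + 1) + 1 + q + 2 + 2 * μ < K) (hK' : 2 * k + 2 * k * μ < K)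
    (hfree : ¬ ContainsCopy (Ckq k q) G) :
    G.edgeFinset.card ≤ Fintype.card V ^ 2 / 4 + (k - 1) ^ 2 := by
  obtain ⟨M, hM⟩ := exists_isMaxMatch G A
  obtain ⟨N, hN⟩ := exists_isMaxMatch G B
  rcases le_total N.card M.card with hle | hle
  · exact h.card_edgeFinset_le_of_le hAB hun hq hqo hK hK' hfree hM hN hle
  · exact h.symm.card_edgeFinset_le_of_le hAB.symm (by rw [Finset.union_comm, hun]) hq hqo hK hK'
      hfree hN hM hle

end Exact

/-! ### Large minimum degree forces a robust partition -/

section Structure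

variable {V : Type} [DecidableEq V] {G : SimpleGraph V} [DecidableRel G.Adj]
variable {A B A₁ : Finset V} {μ K k q : ℕ}

lemma exists_nbr {S F : Finset V} {v : V} (h : F.card < (S.filter (fun a => G.Adj v a)).card) :
    ∃ a ∈ S, G.Adj v a ∧ a ∉ F := by
  obtain ⟨a, ha, haF⟩ := Finset.exists_mem_notMem_of_card_lt_card h
  rw [Finset.mem_filter] at ha
  exact ⟨a, ha.1, ha.2, haF⟩

/-- No vertex has many neighbours in both classes: such a vertex would be the center of a flower
whose petals enter through one class and leave through the other. -/
lemma RobustPair.few_nbrs (h : RobustPair G A B μ K) (hq : 5 ≤ q) (hqo : Odd q)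
    (hK : k * (q + 1) + 1 + q + 2 + 2 * μ < K) (hfree : ¬ ContainsCopy (Ckq k q) G) (v : V) :
    (A.filter (fun a => G.Adj v a)).card < k * (q + 1) + 4 ∨
      (B.filter (fun a => G.Adj v a)).card < k * (q + 1) + 4 := by
  by_contra! hcon
  refine hfree (containsCopy_of_free_center hq (c := v) le_rfl fun F hF _ => ?_)
  obtain ⟨a, ha, hva, haF⟩ := exists_nbr (F := F) (hcon.1.trans_lt' (by omega))
  have hc := Finset.card_insert_le a F
  obtain ⟨b, hb, hvb, hbF⟩ := exists_nbr (F := insert a F) (hcon.2.trans_lt' (by omega))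
  have hc' := Finset.card_insert_le b (insert a F)
  rw [show q - 1 = (q - 3) + 1 + 1 by omega]
  refine Linked.cons hva haF (Linked.snoc hvb.symm hbF (h.link_opp ha hb ?_ (by omega) (by omega)))
  obtain ⟨r, rfl⟩ := hqo
  exact ⟨r - 1, by omega⟩

/-- Vertices with many neighbours in `B` have few neighbours among themselves: otherwise such a
vertex `v` is the center of a flower whose petals run `v, u, b, …, b₁, v` with `u ∈ A₁` and
`b, b₁ ∈ B`. -/
lemma RobustPair.few_nbrs_same (h : RobustPair G A B μ K) (hq : 5 ≤ q) (hqo : Odd q)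
    (hK : k * (q + 1) + 1 + q + 2 + 2 * μ < K) (hfree : ¬ ContainsCopy (Ckq k q) G)
    (hA₁ : ∀ w ∈ A₁, k * (q + 1) + 4 ≤ (B.filter (fun a => G.Adj w a)).card)
    {v : V} (hv : v ∈ A₁) :
    (A₁.filter (fun a => G.Adj v a)).card < k * (q + 1) + 4 := by
  by_contra! hcon
  refine hfree (containsCopy_of_free_center hq (c := v) le_rfl fun F hF _ => ?_)
  obtain ⟨u, hu, hvu, huF⟩ := exists_nbr (F := F) (hcon.trans_lt' (by omega))
  have hc := Finset.card_insert_le u F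
  obtain ⟨b, hb, hub, hbF⟩ := exists_nbr (F := insert u F) ((hA₁ u hu).trans_lt' (by omega))
  have hc' := Finset.card_insert_le b (insert u F)
  obtain ⟨b₁, hb₁, hvb₁, hbF₁⟩ := exists_nbr (F := insert b (insert u F))
    ((hA₁ v hv).trans_lt' (by omega))
  have hc₁ := Finset.card_insert_le b₁ (insert b (insert u F))
  rw [show q - 1 = (q - 4) + 1 + 1 + 1 by omega]
  refine Linked.cons hvu huF (Linked.cons hub hbF (Linked.snoc hvb₁.symm hbF₁
    (h.symm.link_same hb hb₁ ?_ (by omega))))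
  obtain ⟨r, rfl⟩ := hqo
  exact ⟨r - 2, by omega⟩

lemma robustPair_of_nbrs {n d : ℕ} (hA : A.Nonempty) (hB : B.Nonempty)
    (hn : A.card + B.card ≤ n)
    (hAB : ∀ a ∈ A, d ≤ (B.filter (fun b => G.Adj a b)).card)
    (hBA : ∀ b ∈ B, d ≤ (A.filter (fun a => G.Adj b a)).card) :
    RobustPair G A B (n - 2 * d) d := by
  obtain ⟨a₀, ha₀⟩ := hA
  obtain ⟨b₀, hb₀⟩ := hB
  have h1 : d ≤ B.card := (hAB a₀ ha₀).trans (Finset.card_filter_le _ _)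
  have h2 : d ≤ A.card := (hBA b₀ hb₀).trans (Finset.card_filter_le _ _)
  refine ⟨h2, h1, fun a ha => ?_, fun b hb => ?_⟩
  · have := Finset.card_filter_add_card_filter_not (s := B) (fun b => G.Adj a b)
    have := hAB a ha
    omega
  · have := Finset.card_filter_add_card_filter_not (s := A) (fun a => G.Adj b a)
    have := hBA b hb
    omega

variable [Fintype V]

lemma sum_card_filter_adj (S : Finset V) :
    ∑ v, (S.filter (fun a => G.Adj v a)).card = ∑ x ∈ S, G.degree x := by
  simp only [Finset.card_filter]
  rw [Finset.sum_comm]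
  refine Finset.sum_congr rfl fun x _ => ?_
  rw [← Finset.card_filter, ← G.card_neighborFinset_eq_degree]
  congr 1
  ext v
  simp [G.adj_comm]

/-- Vertices with few neighbours in both halves of a core of bounded size are rare, by counting
the edges between the core and the whole vertex set in two ways. -/
lemma card_untyped_le {L D : ℕ} (hA : A.card = L + D) (hB : B.card = L + D)
    (hdeg : ∀ v, Fintype.card V / 2 ≤ G.degree v)
    (hfew : ∀ v, (A.filter (fun a => G.Adj v a)).card < L ∨
      (B.filter (fun a => G.Adj v a)).card < L) :
    (Finset.univ.filter (fun v => (A.filter (fun a => G.Adj v a)).card < L ∧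
      (B.filter (fun a => G.Adj v a)).card < L)).card * D ≤
      Fintype.card V * L + L + D := by
  set U := Finset.univ.filter (fun v => (A.filter (fun a => G.Adj v a)).card < L ∧
      (B.filter (fun a => G.Adj v a)).card < L) with hU
  have h1 : ∑ v, ((A.filter (fun a => G.Adj v a)).card + (B.filter (fun a => G.Adj v a)).card
      + (if v ∈ U then D else 0)) ≤ ∑ _v : V, (2 * L + D) := by
    refine Finset.sum_le_sum fun v _ => ?_
    have ha := (Finset.card_filter_le A (fun a => G.Adj v a))
    have hb := (Finset.card_filter_le B (fun a => G.Adj v a))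
    have := hfew v
    split_ifs with hv
    · have : _ ∧ _ := (Finset.mem_filter.1 hv).2
      omega
    · omega
  rw [Finset.sum_add_distrib, Finset.sum_add_distrib, sum_card_filter_adj, sum_card_filter_adj]
    at h1
  have h2 : A.card * (Fintype.card V / 2) ≤ ∑ x ∈ A, G.degree x := by
    rw [← smul_eq_mul]; exact Finset.card_nsmul_le_sum _ _ _ fun x _ => hdeg x
  have h3 : B.card * (Fintype.card V / 2) ≤ ∑ x ∈ B, G.degree x := by
    rw [← smul_eq_mul]; exact Finset.card_nsmul_le_sum _ _ _ fun x _ => hdeg x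
  simp only [Finset.sum_ite_mem, Finset.univ_inter, Finset.sum_const, smul_eq_mul,
    Finset.card_univ] at h1
  rw [hA] at h2
  rw [hB] at h3
  have h4 : Fintype.card V ≤ 2 * (Fintype.card V / 2) + 1 := by omega
  nlinarith

/-- A complete bipartite core extends to a robust partition of the whole vertex set. Vertices are
first sorted into `A₁`, `B₁` by their adjacency to the core; all but `u` vertices are sorted, and
`(A₁, B₁)` is a robust pair of linear size. The remaining vertices are then sorted by their
adjacency to `A₁`. -/
lemma exists_robustPair_of_core {L D d u : ℕ} (h : RobustPair G A B 0 (L + D))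
    (hA : A.card = L + D) (hB : B.card = L + D)
    (hq : 5 ≤ q) (hqo : Odd q) (hL : L = k * (q + 1) + 4) (hD : q < D)
    (hdeg : ∀ v, Fintype.card V / 2 ≤ G.degree v)
    (hfree : ¬ ContainsCopy (Ckq k q) G)
    (hu : (Finset.univ.filter (fun v => (A.filter (fun a => G.Adj v a)).card < L ∧
      (B.filter (fun a => G.Adj v a)).card < L)).card = u)
    (hd : d + L + u = Fintype.card V / 2)
    (hK : k * (q + 1) + 1 + q + 2 + 2 * (Fintype.card V - 2 * d) < d) :
    ∃ A₂ B₂ : Finset V, Disjoint A₂ B₂ ∧ A₂ ∪ B₂ = Finset.univ ∧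
      RobustPair G A₂ B₂ (Fintype.card V - 2 * d) d := by
  set U := Finset.univ.filter (fun v => (A.filter (fun a => G.Adj v a)).card < L ∧
      (B.filter (fun a => G.Adj v a)).card < L) with hU
  have hfew := h.few_nbrs hq hqo (by omega) hfree
  rw [← hL] at hfew
  set A₁ := Finset.univ.filter (fun v => L ≤ (B.filter (fun a => G.Adj v a)).card) with hA₁
  set B₁ := Finset.univ.filter (fun v => L ≤ (A.filter (fun a => G.Adj v a)).card) with hB₁
  have hdisj : Disjoint A₁ B₁ := by
    rw [Finset.disjoint_left]
    intro v h1 h2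
    have h3 := (Finset.mem_filter.1 h1).2
    have h4 := (Finset.mem_filter.1 h2).2
    have := hfew v
    omega
  have hsplit : ∀ v, G.degree v ≤ (A₁.filter (fun a => G.Adj v a)).card +
      (B₁.filter (fun a => G.Adj v a)).card + u := by
    intro v
    rw [← hu, ← G.card_neighborFinset_eq_degree]
    refine (Finset.card_le_card (t := (A₁.filter (fun a => G.Adj v a) ∪
      B₁.filter (fun a => G.Adj v a)) ∪ U) fun w hw => ?_).trans
      ((Finset.card_union_le _ _).trans (Nat.add_le_add_right (Finset.card_union_le _ _) _))
    simp only [mem_neighborFinset] at hw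
    simp only [hA₁, hB₁, hU, Finset.mem_union, Finset.mem_filter, Finset.mem_univ, true_and, hw,
      and_true]
    omega
  have hsameA : ∀ v ∈ A₁, (A₁.filter (fun a => G.Adj v a)).card < L := fun v hv => by
    rw [hL]
    exact h.few_nbrs_same hq hqo (by omega) hfree
      (fun w hw => by rw [← hL]; exact (Finset.mem_filter.1 hw).2) hv
  have hsameB : ∀ v ∈ B₁, (B₁.filter (fun a => G.Adj v a)).card < L := fun v hv => by
    rw [hL]
    exact h.symm.few_nbrs_same hq hqo (by omega) hfree
      (fun w hw => by rw [← hL]; exact (Finset.mem_filter.1 hw).2) hv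
  have hAsub : A ⊆ A₁ := fun a ha => by
    have := h.missA a ha
    have := Finset.card_filter_add_card_filter_not (s := B) (fun b => G.Adj a b)
    simp only [hA₁, Finset.mem_filter, Finset.mem_univ, true_and]
    omega
  have hBsub : B ⊆ B₁ := fun a ha => by
    have := h.missB a ha
    have := Finset.card_filter_add_card_filter_not (s := A) (fun b => G.Adj a b)
    simp only [hB₁, Finset.mem_filter, Finset.mem_univ, true_and]
    omega
  have hA₁ne : A₁.Nonempty := (Finset.card_pos.1 (by omega : 0 < A.card)).mono hAsub
  have hB₁ne : B₁.Nonempty := (Finset.card_pos.1 (by omega : 0 < B.card)).mono hBsub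
  have h₁ : RobustPair G A₁ B₁ (Fintype.card V - 2 * d) d := by
    refine robustPair_of_nbrs hA₁ne hB₁ne ?_ (fun v hv => ?_) (fun v hv => ?_)
    · rw [← Finset.card_union_of_disjoint hdisj]
      exact Finset.card_le_univ _
    · have := hsplit v
      have := hsameA v hv
      have := hdeg v
      omega
    · have := hsplit v
      have := hsameB v hv
      have := hdeg v
      omega
  have hfew₁ := h₁.few_nbrs hq hqo hK hfree
  rw [← hL] at hfew₁
  set A₂ := Finset.univ.filter (fun v => (A₁.filter (fun a => G.Adj v a)).card < L) with hA₂
  have hAs : A₁ ⊆ A₂ := fun v hv => by simpa [hA₂] using hsameA v hv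
  have hBs : B₁ ⊆ A₂ᶜ := fun v hv => by
    have h1 := hsplit v
    have h2 := hsameB v hv
    have h3 := hdeg v
    simp only [hA₂, Finset.mem_compl, Finset.mem_filter, Finset.mem_univ, true_and]
    omega
  refine ⟨A₂, A₂ᶜ, disjoint_compl_right, Finset.union_compl _, ?_⟩
  refine robustPair_of_nbrs (hA₁ne.mono hAs) (hB₁ne.mono hBs) ?_ (fun v hv => ?_) (fun v hv => ?_)
  · rw [Finset.card_add_card_compl]
  · refine le_trans ?_ (Finset.card_le_card (Finset.filter_subset_filter _ hBs))
    have h1 := hsplit v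
    have h2 : _ < L := (Finset.mem_filter.1 hv).2
    have h3 := hdeg v
    omega
  · refine le_trans ?_ (Finset.card_le_card (Finset.filter_subset_filter _ hAs))
    have h1 := hsplit v
    have h2 : ¬ (_ < L) := fun hlt =>
      (Finset.mem_compl.1 hv) (Finset.mem_filter.2 ⟨Finset.mem_univ v, hlt⟩)
    have h3 := hdeg v
    have h4 := hfew₁ v
    omega

end Structure

/-- A graph of minimum degree about `n / 2` contains a large complete bipartite graph, by the
minimum-degree form of the Erdős–Stone theorem with two classes. -/
lemma exists_core (T : ℕ) : ∃ n₀ : ℕ, ∀ n, n₀ ≤ n → ∀ (G : SimpleGraph (Fin n))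
    [DecidableRel G.Adj], (∀ v, n / 2 ≤ G.degree v) →
    ∃ A B : Finset (Fin n), A.card = T ∧ B.card = T ∧ RobustPair G A B 0 T := by
  obtain ⟨n₀, hn₀⟩ := Filter.eventually_atTop.1
    (eventually_completeEquipartiteGraph_isContained_of_minDegree
      (ε := 1 / 3) (by norm_num) 1 T)
  refine ⟨n₀ + 4, fun n hn G _ hdeg => ?_⟩
  have : Nonempty (Fin n) := ⟨⟨0, by omega⟩⟩
  have hmin : n / 2 ≤ G.minDegree := G.le_minDegree_of_forall_le_degree _ hdeg
  obtain ⟨f⟩ := hn₀ n (by omega) (G := G) (by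
    have h1 : n ≤ 3 * G.minDegree := by omega
    have h2 : (n : ℝ) ≤ 3 * G.minDegree := by exact_mod_cast h1
    norm_num
    linarith)
  have hinj : ∀ i : Fin 2, Function.Injective (fun j : Fin T => f (i, j)) := fun i j j' hjj => by
    simpa using f.injective hjj
  have hadj : ∀ j j' : Fin T, G.Adj (f (0, j)) (f (1, j')) := fun j j' =>
    f.toHom.map_adj (by simp)
  refine ⟨Finset.univ.image (fun j : Fin T => f (0, j)),
    Finset.univ.image (fun j : Fin T => f (1, j)),
    by rw [Finset.card_image_of_injective _ (hinj 0)]; simp,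
    by rw [Finset.card_image_of_injective _ (hinj 1)]; simp, ?_, ?_, ?_, ?_⟩
  · rw [Finset.card_image_of_injective _ (hinj 0)]; simp
  · rw [Finset.card_image_of_injective _ (hinj 1)]; simp
  · intro a ha
    obtain ⟨j, -, rfl⟩ := Finset.mem_image.1 ha
    rw [Nat.le_zero, Finset.card_eq_zero, Finset.filter_eq_empty_iff]
    intro b hb
    obtain ⟨j', -, rfl⟩ := Finset.mem_image.1 hb
    exact not_not.2 (hadj j j')
  · intro a ha
    obtain ⟨j, -, rfl⟩ := Finset.mem_image.1 ha
    rw [Nat.le_zero, Finset.card_eq_zero, Finset.filter_eq_empty_iff]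
    intro b hb
    obtain ⟨j', -, rfl⟩ := Finset.mem_image.1 hb
    exact not_not.2 (hadj j' j).symm

/-- The upper bound for graphs of minimum degree at least `⌊n / 2⌋`. -/
theorem card_edgeFinset_le_of_degree {k q : ℕ} (hk : 2 ≤ k) (hq : 5 ≤ q) (hqo : Odd q) :
    ∃ n₀ : ℕ, ∀ n, n₀ ≤ n → ∀ (G : SimpleGraph (Fin n)) [DecidableRel G.Adj],
      (∀ v, n / 2 ≤ G.degree v) → ¬ ContainsCopy (Ckq k q) G →
      G.edgeFinset.card ≤ n ^ 2 / 4 + (k - 1) ^ 2 := by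
  obtain ⟨L, hL⟩ : ∃ L, L = k * (q + 1) + 4 := ⟨_, rfl⟩
  -- the factor `100 k` makes the exceptional vertices few enough that `2 k μ < d` below
  obtain ⟨D, hD⟩ : ∃ D, D = 2 * L * (100 * k) := ⟨_, rfl⟩
  obtain ⟨n₀, hn₀⟩ := exists_core (L + D)
  refine ⟨n₀ + 100 * (4 * k + 4 * (k * L) + L + q + 10), fun n hn G _ hdeg hfree => ?_⟩
  obtain ⟨A, B, hA, hB, h⟩ := hn₀ n (by omega) G hdeg
  have hqL : q < L := by nlinarith
  have hLD : L ≤ D := by nlinarith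
  have hfew := h.few_nbrs hq hqo (by omega) hfree
  rw [← hL] at hfew
  have hU := card_untyped_le hA hB (by simpa using hdeg) hfew
  obtain ⟨u, hu⟩ : ∃ u, (Finset.univ.filter (fun v => (A.filter (fun a => G.Adj v a)).card < L ∧
      (B.filter (fun a => G.Adj v a)).card < L)).card = u := ⟨_, rfl⟩
  rw [hu, hD, Fintype.card_fin] at hU
  -- the exceptional vertices number at most `n / (100 k)`
  have huk : 100 * (k * u) ≤ n := by
    have h1 : 2 * (100 * (k * u)) ≤ n + 1 + 200 * k := by
      refine Nat.le_of_mul_le_mul_left (c := L) ?_ (by omega)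
      nlinarith
    omega
  have hku : u ≤ k * u := by nlinarith
  obtain ⟨d, hd⟩ : ∃ d, d + L + u = n / 2 := ⟨n / 2 - L - u, by omega⟩
  have hμ : n - 2 * d ≤ 2 * L + 2 * u + 1 := by omega
  obtain ⟨A₂, B₂, hdis, hun, h₂⟩ := exists_robustPair_of_core h hA hB hq hqo hL (by omega)
    (by simpa using hdeg) hfree hu (by simpa using hd) (by rw [Fintype.card_fin]; omega)
  have := h₂.card_edgeFinset_le hdis hun hq hqo (by rw [Fintype.card_fin]; omega) (by
    rw [Fintype.card_fin]
    have : k * (n - 2 * d) ≤ k * (2 * L + 2 * u + 1) := Nat.mul_le_mul_left _ hμ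
    rw [mul_assoc]
    have : k * (2 * L + 2 * u + 1) = 2 * (k * L) + 2 * (k * u) + k := by ring
    omega) hfree
  rwa [Fintype.card_fin] at this

/-! ### Reduction to large minimum degree -/

section Reduction

lemma card_edgeFinset_le_succAbove {n : ℕ} (G : SimpleGraph (Fin (n + 1))) [DecidableRel G.Adj]
    (v : Fin (n + 1)) :
    G.edgeFinset.card ≤ (G.comap v.succAbove).edgeFinset.card + G.degree v := by
  rw [← G.card_incidenceFinset_eq_degree v]
  refine (Finset.card_le_card (t := (G.comap v.succAbove).edgeFinset.image
    (Sym2.map v.succAbove) ∪ G.incidenceFinset v) fun e he => ?_).trans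
    ((Finset.card_union_le _ _).trans (Nat.add_le_add_right Finset.card_image_le _))
  induction e with | _ x y =>
  rw [mem_edgeFinset, mem_edgeSet] at he
  rw [Finset.mem_union, Finset.mem_image]
  by_cases hv : v = x ∨ v = y
  · right
    simp [mk'_mem_incidenceSet_iff, he, hv]
  · left
    rw [not_or] at hv
    obtain ⟨x', rfl⟩ := Fin.exists_succAbove_eq (Ne.symm hv.1)
    obtain ⟨y', rfl⟩ := Fin.exists_succAbove_eq (Ne.symm hv.2)
    exact ⟨s(x', y'), by simpa using he, by simp⟩

lemma containsCopy_of_comap {U V W : Type*} {H : SimpleGraph W} {G : SimpleGraph V} {f : U → V}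
    (hf : Function.Injective f) (h : ContainsCopy H (G.comap f)) : ContainsCopy H G := by
  obtain ⟨g, hg⟩ := h
  exact ⟨(SimpleGraph.Hom.comap f G).comp g, hf.comp hg⟩

lemma sq_div_four_succ (m : ℕ) : (m + 1) ^ 2 / 4 = m ^ 2 / 4 + (m + 1) / 2 := by
  obtain ⟨r, rfl | rfl⟩ := Nat.even_or_odd' m
  · have h1 : (2 * r + 1) ^ 2 = 4 * (r ^ 2 + r) + 1 := by ring
    have h2 : (2 * r) ^ 2 = 4 * r ^ 2 := by ring
    rw [h1, h2]
    omega
  · have h1 : (2 * r + 1) ^ 2 = 4 * (r ^ 2 + r) + 1 := by ring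
    have h2 : (2 * r + 1 + 1) ^ 2 = 4 * (r ^ 2 + r + r + 1) := by ring
    rw [h1, h2]
    omega

/-- The upper bound for all large `n`, by deleting vertices of degree below `⌊n / 2⌋`: each
deletion increases the surplus over `⌊n² / 4⌋` by at least one, and the surplus of a graph on `n₀`
vertices is at most `n₀ ^ 2`. -/
theorem card_edgeFinset_le_of_large {k q : ℕ} (hk : 2 ≤ k) (hq : 5 ≤ q) (hqo : Odd q) :
    ∃ n₀ : ℕ, ∀ n, n₀ ≤ n → ∀ (G : SimpleGraph (Fin n)) [DecidableRel G.Adj],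
      ¬ ContainsCopy (Ckq k q) G → G.edgeFinset.card ≤ n ^ 2 / 4 + (k - 1) ^ 2 := by
  obtain ⟨n₀, hn₀⟩ := card_edgeFinset_le_of_degree hk hq hqo
  have key : ∀ (j : ℕ) (G : SimpleGraph (Fin (n₀ + j))) [DecidableRel G.Adj],
      ¬ ContainsCopy (Ckq k q) G →
      G.edgeFinset.card ≤ (n₀ + j) ^ 2 / 4 + (k - 1) ^ 2 + (n₀ ^ 2 - j) := by
    intro j
    induction j with
    | zero =>
      intro G _ _
      have h1 := G.card_edgeFinset_le_card_choose_two
      rw [Fintype.card_fin] at h1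
      have h2 := Nat.choose_le_pow (n₀ + 0) 2
      simp only [add_zero, tsub_zero] at *
      omega
    | succ j ih =>
      intro G _ hfree
      by_cases hdeg : ∀ v, (n₀ + (j + 1)) / 2 ≤ G.degree v
      · exact (hn₀ _ (by omega) G hdeg hfree).trans (Nat.le_add_right _ _)
      · push Not at hdeg
        obtain ⟨v, hv⟩ := hdeg
        have h1 := card_edgeFinset_le_succAbove (n := n₀ + j) G v
        have h2 := ih (G.comap v.succAbove)
          (fun hc => hfree (containsCopy_of_comap Fin.succAbove_right_injective hc))
        have h3 : (n₀ + (j + 1)) ^ 2 / 4 = (n₀ + j) ^ 2 / 4 + (n₀ + (j + 1)) / 2 := by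
          exact sq_div_four_succ (n₀ + j)
        omega
  refine ⟨n₀ + n₀ ^ 2, fun n hn G _ hfree => ?_⟩
  obtain ⟨j, rfl⟩ : ∃ j, n = n₀ + j := ⟨n - n₀, by omega⟩
  have := key j G hfree
  omega

end Reduction

/-! ### The extremal construction -/

section LowerBound

lemma card_turanGraph_two (n : ℕ) : (turanGraph n 2).edgeFinset.card = n ^ 2 / 4 := by
  rw [card_edgeFinset_turanGraph]
  rcases Nat.mod_two_eq_zero_or_one n with h | h
  · simp [h]
  · rw [h]
    obtain ⟨r, rfl⟩ : ∃ r, n = 2 * r + 1 := ⟨n / 2, by omega⟩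
    have h1 : (2 * r + 1) ^ 2 = 4 * (r ^ 2 + r) + 1 := by ring
    rw [h1]
    norm_num
    omega

lemma fgraph_adj_of_parity {n k : ℕ} {u v : Fin n} (h : (u : ℕ) % 2 ≠ (v : ℕ) % 2) :
    (Fgraph n k).Adj u v := by
  rw [Fgraph, fromRel_adj]
  exact ⟨fun huv => h (by rw [huv]), Or.inl (Or.inl h)⟩

lemma le_ncard_edgeSet_fgraph {n k : ℕ} (hn : 4 * k ≤ n) :
    n ^ 2 / 4 + (k - 1) ^ 2 ≤ (Fgraph n k).edgeSet.ncard := by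
  classical
  rw [← card_turanGraph_two, Set.ncard_eq_toFinset_card']
  let g : Fin (k - 1) × Fin (k - 1) → Sym2 (Fin n) := fun p =>
    s(⟨2 * p.1, by omega⟩, ⟨2 * (k - 1 + p.2), by omega⟩)
  have hg : Function.Injective g := by
    rintro ⟨s, t⟩ ⟨s', t'⟩ h
    simp only [g, Sym2.eq_iff, Fin.mk.injEq] at h
    rw [Prod.mk.injEq, Fin.ext_iff, Fin.ext_iff]
    omega
  have hdis : Disjoint (turanGraph n 2).edgeFinset (Finset.univ.image g) := by
    rw [Finset.disjoint_left]
    intro e he he'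
    obtain ⟨p, -, rfl⟩ := Finset.mem_image.1 he'
    rw [mem_edgeFinset, mem_edgeSet, turanGraph_adj] at he
    simp at he
  have hc : ((turanGraph n 2).edgeFinset ∪ Finset.univ.image g).card =
      (turanGraph n 2).edgeFinset.card + (k - 1) ^ 2 := by
    rw [Finset.card_union_of_disjoint hdis, Finset.card_image_of_injective _ hg, Finset.card_univ,
      Fintype.card_prod, Fintype.card_fin, sq]
  rw [← hc]
  refine Finset.card_le_card fun e he => ?_
  rw [Set.mem_toFinset]
  rcases Finset.mem_union.1 he with he | he
  · induction e with | _ x y =>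
    rw [mem_edgeFinset, mem_edgeSet, turanGraph_adj] at he
    exact fgraph_adj_of_parity he
  · obtain ⟨p, -, rfl⟩ := Finset.mem_image.1 he
    simp only [g, mem_edgeSet]
    rw [Fgraph, fromRel_adj]
    refine ⟨fun h => ?_, Or.inl (Or.inr ⟨p.1, k - 1 + p.2, p.1.2, by omega, by omega, rfl, rfl⟩)⟩
    rw [Fin.ext_iff] at h
    dsimp only at h
    omega

variable {n k q : ℕ}

lemma ckq_adj_center (i : Fin k) {j : Fin (q - 1)} (h : (j : ℕ) = 0 ∨ (j : ℕ) = q - 2) :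
    (Ckq k q).Adj none (some (i, j)) := by
  rw [Ckq, fromRel_adj]
  exact ⟨by simp, Or.inl h⟩

lemma ckq_adj_succ (i : Fin k) {j j' : Fin (q - 1)} (h : (j' : ℕ) = j + 1) :
    (Ckq k q).Adj (some (i, j)) (some (i, j')) := by
  rw [Ckq, fromRel_adj]
  refine ⟨fun hh => ?_, Or.inl ⟨rfl, h⟩⟩
  have : j = j' := by simpa using hh
  rw [this] at h
  omega

/-- A labelling of the vertices of an odd flower cannot alternate in parity around a petal. -/
lemma exists_same_parity (hq : 5 ≤ q) (hqo : Odd q)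
    (p : Option (Fin k × Fin (q - 1)) → ℕ) (i : Fin k) :
    ∃ x y, (Ckq k q).Adj x y ∧ p x % 2 = p y % 2 ∧ (x = none ∨ ∃ j, x = some (i, j)) ∧
      (y = none ∨ ∃ j, y = some (i, j)) := by
  by_contra! hcon
  have halt : ∀ m (hm : m < q - 1), p (some (i, ⟨m, hm⟩)) % 2 = (p none + 1 + m) % 2 := by
    intro m
    induction m with
    | zero =>
      intro hm
      by_contra hne
      exact (hcon none (some (i, ⟨0, hm⟩)) (ckq_adj_center i (Or.inl rfl)) (by omega)
        (Or.inl rfl)).2 _ rfl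
    | succ m ih =>
      intro hm
      have := ih (by omega)
      by_contra hne
      exact (hcon (some (i, ⟨m, by omega⟩)) (some (i, ⟨m + 1, hm⟩)) (ckq_adj_succ i rfl) (by omega)
        (Or.inr ⟨_, rfl⟩)).2 _ rfl
  have h := halt (q - 2) (by omega)
  obtain ⟨r, rfl⟩ := hqo
  exact (hcon none (some (i, ⟨2 * r + 1 - 2, by omega⟩)) (ckq_adj_center i (Or.inr rfl)) (by omega)
    (Or.inl rfl)).2 _ rfl

/-- The `k` petals cannot each contain, away from the center, one of the `k - 1` vertices
`2 a, 2 (a + 1), …, 2 (a + k - 2)`. -/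
lemma false_of_petals {f : Option (Fin k × Fin (q - 1)) → Fin n} (hf : Function.Injective f)
    (hk : 2 ≤ k) (a : ℕ)
    (h : ∀ i : Fin k, ∃ j s, s < k - 1 ∧ (f (some (i, j)) : ℕ) = 2 * (a + s)) : False := by
  choose j s hs hfs using h
  have hinj : Function.Injective (fun i : Fin k => (⟨s i, hs i⟩ : Fin (k - 1))) := by
    intro i i' hii
    have h1 : s i = s i' := by simpa using hii
    have h2 : f (some (i, j i)) = f (some (i', j i')) := by
      rw [Fin.ext_iff, hfs, hfs, h1]
    have h3 := hf h2
    simp only [Option.some.injEq, Prod.mk.injEq] at h3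
    exact h3.1
  have := Fintype.card_le_of_injective _ hinj
  simp only [Fintype.card_fin] at this
  omega

/-- Every petal contains an edge inside the even class, joining a low vertex `2 s` to a high vertex
`2 t`. If the center is low the `k` high ends are distinct, otherwise the `k` low ends are; but
there are only `k - 1` vertices of each kind. -/
lemma fgraph_free (hk : 2 ≤ k) (hq : 5 ≤ q) (hqo : Odd q) :
    ¬ ContainsCopy (Ckq k q) (Fgraph n k) := by
  rintro ⟨f, hf⟩
  have key : ∀ i : Fin k, ∃ x y, ∃ s t : ℕ, (x = none ∨ ∃ j, x = some (i, j)) ∧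
      (y = none ∨ ∃ j, y = some (i, j)) ∧ s < k - 1 ∧ k - 1 ≤ t ∧ t < 2 * (k - 1) ∧
      (f x : ℕ) = 2 * s ∧ (f y : ℕ) = 2 * t := by
    intro i
    obtain ⟨x, y, hxy, hpar, hx, hy⟩ := exists_same_parity hq hqo (fun x => (f x : ℕ)) i
    have hadj := (fromRel_adj _ _ _).1 (f.map_adj hxy)
    rcases hadj.2 with (h | ⟨s, t, h1, h2, h3, h4, h5⟩) | (h | ⟨s, t, h1, h2, h3, h4, h5⟩)
    · exact absurd hpar h
    · exact ⟨x, y, s, t, hx, hy, h1, h2, h3, h4, h5⟩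
    · exact absurd hpar.symm h
    · exact ⟨y, x, s, t, hy, hx, h1, h2, h3, h4, h5⟩
  by_cases hc : ∃ s < k - 1, (f none : ℕ) = 2 * s
  · obtain ⟨s₀, hs₀, hfs₀⟩ := hc
    refine false_of_petals hf hk (k - 1) fun i => ?_
    obtain ⟨x, y, s, t, hx, hy, h1, h2, h3, h4, h5⟩ := key i
    rcases hy with rfl | ⟨j, rfl⟩
    · omega
    · exact ⟨j, t - (k - 1), by omega, by omega⟩
  · refine false_of_petals hf hk 0 fun i => ?_
    obtain ⟨x, y, s, t, hx, hy, h1, h2, h3, h4, h5⟩ := key i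
    rcases hx with rfl | ⟨j, rfl⟩
    · exact absurd ⟨s, h1, h4⟩ hc
    · exact ⟨j, s, by omega, by omega⟩

end LowerBound

end OddFlower

/-- **Theorem (main result, value of the Turán number).**
For every integer `k ≥ 2` and every odd integer `q ≥ 5`, there exists `n₁` such that
for all `n ≥ n₁`, `ex(n, C_{k,q}) = ⌊n²/4⌋ + (k-1)²`. -/
theorem extremal_number_intersecting_odd_cycles (k q : ℕ) (hk : 2 ≤ k) (hq : 5 ≤ q)
    (hqodd : Odd q) :
    ∃ n₁ : ℕ, ∀ n : ℕ, n₁ ≤ n →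
      exNum n (Ckq k q) = n ^ 2 / 4 + (k - 1) ^ 2 := by
  classical
  obtain ⟨n₀, hn₀⟩ := OddFlower.card_edgeFinset_le_of_large hk hq hqodd
  refine ⟨n₀ + 4 * k, fun n hn => ?_⟩
  have hub : ∀ m ∈ {m | ∃ G : SimpleGraph (Fin n), ¬ ContainsCopy (Ckq k q) G ∧
      G.edgeSet.ncard = m}, m ≤ n ^ 2 / 4 + (k - 1) ^ 2 := by
    rintro m ⟨G, hG, rfl⟩
    rw [Set.ncard_eq_toFinset_card']
    exact hn₀ n (by omega) G hG
  have hmem : (Fgraph n k).edgeSet.ncard ∈ {m | ∃ G : SimpleGraph (Fin n),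
      ¬ ContainsCopy (Ckq k q) G ∧ G.edgeSet.ncard = m} :=
    ⟨_, OddFlower.fgraph_free hk hq hqodd, rfl⟩
  refine le_antisymm (csSup_le ⟨_, hmem⟩ hub) ?_
  exact (OddFlower.le_ncard_edgeSet_fgraph (by omega)).trans (le_csSup ⟨_, hub⟩ hmem)
end

section
/- For every integer k ≥ 2, every odd integer q ≥ 5, and every n ≥ 4(k−1)², the Turán number satisfies ex(n, C_{k,q}) ≥ ⌊n²/4⌋ + (k−1)². -/
/-!
The lower bound is witnessed by `Fgraph n k`: the balanced complete bipartite graph with even and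
odd classes, plus a complete bipartite graph between `A = {2s : s < k-1}` and
`B = {2t : k-1 ≤ t < 2(k-1)}` inside the even class. The hypothesis on `n` ensures that
`A` and `B` fit, and counting edges gives `⌈n/2⌉⌊n/2⌋ + (k-1)² = ⌊n²/4⌋ + (k-1)²`
(`Fgraph_edge_bound`).

It contains no `C_{k,q}`: an odd cycle cannot alternate between the two parity classes, so each of
the `k` cycles contains an edge between `A` and `B`, hence a vertex of each (`exists_mem_A_B`). The
center misses `A` or `B`. The cycles are disjoint away from the center, so the missed set would
contain `k` distinct vertices, although it only has `k-1`.
-/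

open SimpleGraph

theorem Fgraph_adj_cases {n k : ℕ} {u v : Fin n} (h : (Fgraph n k).Adj u v) :
    (u : ℕ) % 2 ≠ (v : ℕ) % 2 ∨
    (∃ s t : ℕ, s < k - 1 ∧ k - 1 ≤ t ∧ t < 2 * (k - 1) ∧ (u : ℕ) = 2 * s ∧ (v : ℕ) = 2 * t) ∨
    (∃ s t : ℕ, s < k - 1 ∧ k - 1 ≤ t ∧ t < 2 * (k - 1) ∧ (v : ℕ) = 2 * s ∧ (u : ℕ) = 2 * t) := by
  obtain ⟨-, (h | h) | (h | h)⟩ := h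
  · exact Or.inl h
  · exact Or.inr (Or.inl h)
  · exact Or.inl h.symm
  · exact Or.inr (Or.inr h)

/-- For odd `q`, the image of each cycle of `C_{k,q}` in `Fgraph n k` meets both sides
of the added `K_{k-1,k-1}`, since otherwise its vertices would alternate in parity. -/
theorem exists_mem_A_B {k q n : ℕ} (hq : 5 ≤ q) (hqodd : Odd q) (f : Ckq k q →g Fgraph n k)
    (i : Fin k) :
    ∃ a b, (a = none ∨ ∃ j, a = some (i, j)) ∧ (b = none ∨ ∃ j, b = some (i, j)) ∧
      (∃ s < k - 1, (f a : ℕ) = 2 * s) ∧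
      (∃ t, k - 1 ≤ t ∧ t < 2 * (k - 1) ∧ (f b : ℕ) = 2 * t) := by
  by_contra hcon
  have parity : ∀ a b, (a = none ∨ ∃ j, a = some (i, j)) → (b = none ∨ ∃ j, b = some (i, j)) →
      (Ckq k q).Adj a b → (f a : ℕ) % 2 ≠ (f b : ℕ) % 2 := by
    intro a b ha hb hab
    rcases Fgraph_adj_cases (f.map_adj hab) with h | ⟨s, t, h1, h2, h3, h4, h5⟩ |
      ⟨s, t, h1, h2, h3, h4, h5⟩
    · exact h
    · exact absurd ⟨a, b, ha, hb, ⟨s, h1, h4⟩, ⟨t, h2, h3, h5⟩⟩ hcon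
    · exact absurd ⟨b, a, hb, ha, ⟨s, h1, h4⟩, ⟨t, h2, h3, h5⟩⟩ hcon
  have path : ∀ j (hj : j < q - 1),
      (f (some (i, ⟨j, hj⟩)) : ℕ) % 2 = ((f (some (i, ⟨0, by omega⟩)) : ℕ) + j) % 2 := by
    intro j
    induction j with
    | zero => intro hj; rfl
    | succ j ih =>
      intro hj
      have h1 := ih (by omega)
      have h2 := parity (some (i, ⟨j, by omega⟩)) (some (i, ⟨j + 1, hj⟩)) (Or.inr ⟨_, rfl⟩)
        (Or.inr ⟨_, rfl⟩) (by simp [Ckq, CkqRel])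
      omega
  have h0 := parity none (some (i, ⟨0, by omega⟩)) (Or.inl rfl) (Or.inr ⟨_, rfl⟩)
    (by simp [Ckq, CkqRel])
  have h1 := parity none (some (i, ⟨q - 2, by omega⟩)) (Or.inl rfl) (Or.inr ⟨_, rfl⟩)
    (by simp [Ckq, CkqRel])
  have h2 := path (q - 2) (by omega)
  obtain ⟨m, rfl⟩ := hqodd
  omega

theorem Fgraph_free {k q n : ℕ} (hk : 2 ≤ k) (hq : 5 ≤ q) (hqodd : Odd q) :
    ¬ ContainsCopy (Ckq k q) (Fgraph n k) := by
  rintro ⟨f, hf⟩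
  choose a b ha hb hmemA hmemB using exists_mem_A_B hq hqodd f
  choose s hs hsa using hmemA
  choose t ht1 ht2 htb using hmemB
  have pigeon : ∀ g : Fin k → ℕ, (∀ i, g i < k - 1) → ¬ Function.Injective g := by
    intro g hg hinj
    have := Fintype.card_le_of_injective (fun i => (⟨g i, hg i⟩ : Fin (k - 1)))
      (fun x y hxy => hinj (by simpa using hxy))
    simp at this
    omega
  -- A choice of one non-central vertex in each cycle is injective.
  have distinct : ∀ c : Fin k → Option (Fin k × Fin (q - 1)),
      (∀ i, c i = none ∨ ∃ j, c i = some (i, j)) → (∀ i, c i ≠ none) →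
      ∀ x y, (f (c x) : ℕ) = f (c y) → x = y := by
    intro c hc hne x y hxy
    have h := hf (Fin.ext hxy)
    obtain ⟨j, hj⟩ := (hc x).resolve_left (hne x)
    obtain ⟨j', hj'⟩ := (hc y).resolve_left (hne y)
    rw [hj, hj'] at h
    simp only [Option.some.injEq, Prod.mk.injEq] at h
    exact h.1
  by_cases hA : ∃ i, a i = none
  · obtain ⟨i₀, hi₀⟩ := hA
    refine pigeon (fun i => t i - (k - 1)) (fun i => by have := ht2 i; omega) ?_
    intro x y hxy
    refine distinct b hb ?_ x y ?_
    · intro i hi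
      have h1 := hsa i₀
      have h2 := htb i
      rw [hi₀] at h1
      rw [hi] at h2
      have := hs i₀
      have := ht1 i
      omega
    · have := ht1 x
      have := ht1 y
      have := htb x
      have := htb y
      simp only at hxy
      omega
  · push Not at hA
    refine pigeon s hs ?_
    intro x y hxy
    exact distinct a ha hA x y (by rw [hsa, hsa, hxy])

theorem sq_div_four (n : ℕ) : n ^ 2 / 4 = (n + 1) / 2 * (n / 2) := by
  rcases Nat.even_or_odd' n with ⟨m, rfl | rfl⟩
  · rw [show (2 * m + 1) / 2 = m by omega, show 2 * m / 2 = m by omega,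
      show (2 * m) ^ 2 = 4 * (m * m) by ring]
    omega
  · rw [show (2 * m + 1 + 1) / 2 = m + 1 by omega, show (2 * m + 1) / 2 = m by omega,
      show (2 * m + 1) ^ 2 = 4 * ((m + 1) * m) + 1 by ring]
    omega

/-- The hypothesis says that the vertices carrying the added `K_{k-1,k-1}` exist. -/
theorem Fgraph_edge_bound {k n : ℕ} (hn : 4 * (k - 1) ≤ n + 1) :
    n ^ 2 / 4 + (k - 1) ^ 2 ≤ (Fgraph n k).edgeSet.ncard := by
  let e : (Fin ((n + 1) / 2) × Fin (n / 2)) ⊕ (Fin (k - 1) × Fin (k - 1)) →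
      (Fgraph n k).edgeSet := Sum.elim
    (fun p => ⟨s(⟨2 * p.1, by omega⟩, ⟨2 * p.2 + 1, by omega⟩), by
      simp only [mem_edgeSet, Fgraph, fromRel_adj, ne_eq, Fin.mk.injEq]
      exact ⟨by omega, Or.inl (Or.inl (by omega))⟩⟩)
    (fun p => ⟨s(⟨2 * p.1, by omega⟩, ⟨2 * (k - 1 + p.2), by omega⟩), by
      simp only [mem_edgeSet, Fgraph, fromRel_adj, ne_eq, Fin.mk.injEq]
      exact ⟨by omega, Or.inl (Or.inr ⟨p.1, k - 1 + p.2, by omega, by omega, by omega, rfl, rfl⟩)⟩⟩)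
  have he : Function.Injective e := by
    rintro (⟨x, y⟩ | ⟨x, y⟩) (⟨x', y'⟩ | ⟨x', y'⟩) h <;>
      simp only [e, Sum.elim_inl, Sum.elim_inr, Subtype.mk.injEq, Sym2.eq_iff, Fin.mk.injEq] at h
    · simp only [Sum.inl.injEq, Prod.mk.injEq, Fin.ext_iff]
      omega
    · omega
    · omega
    · simp only [Sum.inr.injEq, Prod.mk.injEq, Fin.ext_iff]
      omega
  have h := Nat.card_le_card_of_injective e he
  rw [Nat.card_coe_set_eq] at h
  rw [sq_div_four, sq]
  simpa using h

/-- For every integer `k ≥ 2`, odd `q ≥ 5` and `n ≥ 4(k-1)²`,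
`ex(n, C_{k,q}) ≥ ⌊n²/4⌋ + (k-1)²`. -/
theorem exNum_Ckq_lower_bound (k q n : ℕ) (hk : 2 ≤ k) (hq : 5 ≤ q) (hqodd : Odd q)
    (hn : 4 * (k - 1) ^ 2 ≤ n) :
    n ^ 2 / 4 + (k - 1) ^ 2 ≤ exNum n (Ckq k q) := by
  have hk1 : 1 ≤ k - 1 := by omega
  refine (Fgraph_edge_bound (by nlinarith)).trans
    (le_csSup ?_ ⟨Fgraph n k, Fgraph_free hk hq hqodd, rfl⟩)
  refine ⟨(Set.univ : Set (Sym2 (Fin n))).ncard, ?_⟩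
  rintro m ⟨G, -, rfl⟩
  exact Set.ncard_le_ncard (Set.subset_univ _)
end

section
/- For every integer k ≥ 1 and every n ≥ 50k², the Turán number of the k-fan satisfies ex(n, F_k) = ⌊n²/4⌋ + g(k), where g(k) = k² − k if k is odd and g(k) = k² − (3/2)k if k is even. -/
/-!
A graph contains no `k`-fan exactly when the neighbourhood of every vertex has matching number less
than `k` (`FanFree`, with `κ = k - 1` throughout).

*Lower bound.* Inside one class of the balanced complete bipartite graph place a graph with maximum
degree and matching number at most `k - 1`: two disjoint copies of `K_k` for odd `k` (`good_odd`),
and for even `k` a graph on `2 k - 1` vertices with all degrees `k - 1` except for one `k - 2`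
(`good_even`). A fan centred in the first class would use `k` added edges at its centre, a fan
centred in the second class would use `k` disjoint added edges (`lowerGraph_free`).

*Upper bound.* Suppose that `G` has more than `n ^ 2 / 4 + g(k)` edges. A vertex set `W` maximizing
`4 e(W) - |W| ^ 2 + 4 k |W|` still has more than `|W| ^ 2 / 4 + g(k)` edges and has minimum degree
at least `|W| / 2 - k`. Every vertex set satisfies `4 e(W) ≤ (|W| + 2 κ) ^ 2`, because deleting a
maximum matching from the neighbourhood of a vertex of maximum degree leaves a large independent set
(`two_mul_sum_le`); this forces `|W| ≥ 24 k ^ 2` (`upper_sum`).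

Such independent sets also give a partition `W = A ∪ B` in which every vertex is adjacent to all but
`O(k)` vertices of the other side (`exists_partition`). For `x ∈ A`, a matching of `B` inside the
neighbourhood of `x` extends greedily by edges from the neighbours of `x` in `A` to `B`. Hence
`deg_A(x) + ν(B)` exceeds `κ` at most by the number of vertices of `B` not adjacent to `x`
(`side_bound'`). With `a = ν(A)` and `b = ν(B)`, both at most `κ`, summation gives
`2 e(W) ≤ 2 |A| |B| + ∑_{x ∈ A} min(deg_A(x), κ - b) + ∑_{x ∈ B} min(deg_B(x), κ - a)`
(`side_sum`), while a matching number above `κ` on one side costs too many edges.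

It remains to bound truncated degree sums of a graph with maximum degree at most `κ` and given
matching number. Vertices covered by all maximum matchings are removed one by one
(`truncated_sum_induction`). When none is left, Gallai's lemma (`GRel.trans`) says that
being never both missed by a maximum matching is an equivalence relation; all edges lie inside its
classes, and a
maximum matching misses at most one vertex of each (`exists_classes`), so the class sizes control
the sum (`truncated_sum_le`, and `sum_le_of_odd` for the parity gain when `k` is even). The cases
for `a` and `b` are compared with `g(k)` in `sum_le_of_partition_aux`.
-/

open SimpleGraph

/-- `g(k) = k² - k` if `k` is odd and `g(k) = k² - (3/2)k` if `k` is even. -/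
def gfun (k : ℕ) : ℕ := if Odd k then k ^ 2 - k else k ^ 2 - 3 * k / 2

namespace FanTuran

set_option linter.unusedSectionVars false

/-! ### Matchings as involutions -/

section Matchings

variable {V : Type*} [Fintype V] [LinearOrder V] (G : SimpleGraph V)

/-- A matching of `G` inside the vertex set `S`, encoded as an involution `σ` of the whole vertex
set: the covered vertices are those moved by `σ`, and each is exchanged with its partner. -/
def IsMat (S : Finset V) (σ : V → V) : Prop :=
  (∀ v, σ (σ v) = v) ∧ ∀ v, σ v ≠ v → G.Adj v (σ v) ∧ v ∈ S

/-- The set of vertices covered by the matching `σ`; it has twice as many elements as the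
matching has edges. -/
def supp (σ : V → V) : Finset V := Finset.univ.filter fun v => σ v ≠ v

/-- A matching of maximum size inside `S`. -/
def IsMaxMat (S : Finset V) (σ : V → V) : Prop :=
  IsMat G S σ ∧ ∀ τ, IsMat G S τ → (supp τ).card ≤ (supp σ).card

variable {G}

@[simp] lemma mem_supp {σ : V → V} {v : V} : v ∈ supp σ ↔ σ v ≠ v := by simp [supp]

lemma isMat_id (S : Finset V) : IsMat G S id := ⟨fun _ => rfl, fun _ h => absurd rfl h⟩

lemma IsMat.mono {S T : Finset V} {σ : V → V} (h : IsMat G S σ) (hST : S ⊆ T) : IsMat G T σ :=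
  ⟨h.1, fun v hv => ⟨(h.2 v hv).1, hST (h.2 v hv).2⟩⟩

lemma IsMat.supp_subset {S : Finset V} {σ : V → V} (h : IsMat G S σ) : supp σ ⊆ S :=
  fun v hv => (h.2 v (mem_supp.1 hv)).2

lemma IsMat.card_supp {S : Finset V} {σ : V → V} (h : IsMat G S σ) :
    (supp σ).card = 2 * (Finset.univ.filter fun v => v < σ v).card := by
  have h1 : supp σ = (Finset.univ.filter fun v => v < σ v) ∪
      (Finset.univ.filter fun v => v < σ v).image σ := by
    ext v
    simp only [mem_supp, Finset.mem_union, Finset.mem_filter, Finset.mem_univ, true_and,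
      Finset.mem_image]
    constructor
    · intro hv
      rcases lt_or_gt_of_ne hv with h2 | h2
      · exact Or.inr ⟨σ v, by rwa [h.1], h.1 v⟩
      · exact Or.inl h2
    · rintro (h2 | ⟨u, hu, rfl⟩)
      · exact h2.ne'
      · rw [h.1]; exact hu.ne
  rw [h1, Finset.card_union_of_disjoint, Finset.card_image_of_injective, two_mul]
  · exact Function.LeftInverse.injective h.1
  · rw [Finset.disjoint_left]
    intro v hv hv'
    simp only [Finset.mem_filter, Finset.mem_univ, true_and, Finset.mem_image] at hv hv'
    obtain ⟨u, hu, rfl⟩ := hv'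
    rw [h.1] at hv
    exact lt_asymm hu hv

lemma exists_isMaxMat (S : Finset V) : ∃ σ, IsMaxMat G S σ := by
  classical
  obtain ⟨σ, hσ, hmax⟩ := Finset.exists_max_image
    (Finset.univ.filter fun σ : V → V => IsMat G S σ) (fun σ => (supp σ).card)
    ⟨id, by simpa using isMat_id S⟩
  simp only [Finset.mem_filter, Finset.mem_univ, true_and] at hσ hmax
  exact ⟨σ, hσ, hmax⟩

/-- Adding an edge between two uncovered vertices. -/
lemma IsMat.extend {S : Finset V} {σ : V → V} (h : IsMat G S σ) {u v : V} (hu : σ u = u)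
    (hv : σ v = v) (huv : G.Adj u v) (huS : u ∈ S) (hvS : v ∈ S) :
    ∃ τ, IsMat G S τ ∧ (supp τ).card = (supp σ).card + 2 ∧ supp τ = insert u (insert v (supp σ)) := by
  have hne : u ≠ v := huv.ne
  have hsym := huv.symm
  have hinj : ∀ a b, σ a = b → σ b = a := by rintro a b rfl; exact h.1 a
  have hs : supp (fun w => if w = u then v else if w = v then u else σ w) =
      insert u (insert v (supp σ)) := by
    ext w; simp only [mem_supp, Finset.mem_insert]; grind
  refine ⟨fun w => if w = u then v else if w = v then u else σ w, ⟨?_, ?_⟩, ?_, hs⟩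
  · intro w; have := h.1 w; grind
  · intro w; have := h.2 w; grind
  · rw [hs, Finset.card_insert_of_notMem, Finset.card_insert_of_notMem] <;> simp [hu, hv, hne]

lemma IsMaxMat.not_adj {S : Finset V} {σ : V → V} (h : IsMaxMat G S σ) {u v : V} (hu : σ u = u)
    (hv : σ v = v) (huS : u ∈ S) (hvS : v ∈ S) : ¬ G.Adj u v := by
  intro huv
  obtain ⟨τ, h1, h2, -⟩ := h.1.extend hu hv huv huS hvS
  have := h.2 τ h1
  omega

/-- Keeping only the edges of a matching with both ends in `T`. -/
lemma IsMat.restrict {S : Finset V} {σ : V → V} (h : IsMat G S σ) (T : Finset V) :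
    ∃ τ, IsMat G (S ∩ T) τ ∧ supp τ = (supp σ).filter (fun v => v ∈ T ∧ σ v ∈ T) := by
  refine ⟨fun w => if w ∈ T ∧ σ w ∈ T then σ w else w, ⟨?_, ?_⟩, ?_⟩
  · intro w; have := h.1 w; grind
  · intro w; have := h.2 w; grind
  · ext w; simp only [mem_supp, Finset.mem_filter]; grind

/-- The exchange step: the edge `y (N y)` of `N` is replaced by `x y`, where `x` is uncovered. -/
lemma IsMat.exchange {S : Finset V} {N : V → V} (h : IsMat G S N) {x y : V} (hx : N x = x)
    (hy : N y ≠ y) (hxy : G.Adj x y) (hxS : x ∈ S) :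
    ∃ τ, IsMat G S τ ∧ (supp τ).card = (supp N).card ∧ τ x = y ∧ τ y = x ∧ τ (N y) = N y ∧
      ∀ w, w ≠ x → w ≠ y → w ≠ N y → τ w = N w := by
  have hne : x ≠ y := hxy.ne
  have hsym := hxy.symm
  have hyS := (h.2 y hy).2
  have hz : N (N y) = y := h.1 y
  have hzx : N y ≠ x := by rintro rfl; rw [hx] at hz; exact hne hz
  have hs : supp (fun w => if w = x then y else if w = y then x else if w = N y then w else N w) =
      insert x ((supp N).erase (N y)) := by
    ext w; have := h.1 w; simp only [mem_supp, Finset.mem_insert, Finset.mem_erase]; grind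
  refine ⟨fun w => if w = x then y else if w = y then x else if w = N y then w else N w,
    ⟨?_, ?_⟩, ?_, ?_, ?_, ?_, ?_⟩
  · intro w; have := h.1 w; grind
  · intro w; have := h.2 w; grind
  · rw [hs, Finset.card_insert_of_notMem (by simp [hx]), Finset.card_erase_add_one]
    simpa [hz] using hy.symm
  all_goals grind

end Matchings

/-! ### Gallai's lemma -/

section Gallai

variable {V : Type*} [Fintype V] [LinearOrder V] {G : SimpleGraph V}

/-- Every vertex of `S` is missed by some maximum matching of `S`. -/
def NoEssential (G : SimpleGraph V) (S : Finset V) : Prop :=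
  ∀ v ∈ S, ∃ σ, IsMaxMat G S σ ∧ σ v = v

/-- Gallai's relation: no maximum matching of `S` misses both `u` and `v` (unless `u = v`). -/
def GRel (G : SimpleGraph V) (S : Finset V) (u v : V) : Prop :=
  ∀ σ, IsMaxMat G S σ → σ u = u → σ v = v → u = v

lemma GRel.symm {S : Finset V} {u v : V} (h : GRel G S u v) : GRel G S v u :=
  fun σ h1 h2 h3 => (h σ h1 h3 h2).symm

lemma gRel_of_adj {S : Finset V} {u v : V} (hu : u ∈ S) (hv : v ∈ S) (h : G.Adj u v) :
    GRel G S u v :=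
  fun _ h1 h2 h3 => absurd h (h1.not_adj h2 h3 hu hv)

/-- The heart of Gallai's lemma. If `M` missed both `u` and `v`, then among the maximum matchings
missing `t` the one sharing most edges with `M` could be exchanged for one sharing more. -/
lemma GRel.trans {S : Finset V} {u t v : V} (hS : NoEssential G S) (ht : t ∈ S)
    (hut : GRel G S u t) (htv : GRel G S t v) : GRel G S u v := by
  classical
  intro M hM hMu hMv
  by_contra huv
  have hMt : M t ≠ t := by
    intro hMt
    exact huv ((hut M hM hMu hMt).trans (htv M hM hMt hMv))
  have htu : t ≠ u := by rintro rfl; exact hMt hMu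
  have htv' : t ≠ v := by rintro rfl; exact hMt hMv
  obtain ⟨N, hN, hmax⟩ := Finset.exists_max_image
    (Finset.univ.filter fun σ : V → V => IsMaxMat G S σ ∧ σ t = t)
    (fun σ => (Finset.univ.filter fun x => M x = σ x ∧ M x ≠ x).card)
    (by obtain ⟨σ, h⟩ := hS t ht; exact ⟨σ, by simpa using h⟩)
  simp only [Finset.mem_filter, Finset.mem_univ, true_and] at hN hmax
  obtain ⟨hN, hNt⟩ := hN
  have hNu : N u ≠ u := fun h => htu (hut N hN h hNt).symm
  have hNv : N v ≠ v := fun h => htv' (htv N hN hNt h)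
  have hcard : (supp M).card = (supp N).card := le_antisymm (hN.2 M hM.1) (hM.2 N hN.1)
  have h2 : 1 < (supp N \ supp M).card := by
    rw [Finset.one_lt_card]
    exact ⟨u, by simp [hMu, hNu], v, by simp [hMv, hNv], huv⟩
  rw [← Finset.card_sdiff_comm hcard] at h2
  obtain ⟨x, hx, hxt⟩ := Finset.exists_mem_ne h2 t
  simp only [Finset.mem_sdiff, mem_supp, not_not] at hx
  obtain ⟨hMx, hNx⟩ := hx
  obtain ⟨hadj, hxS⟩ := hM.1.2 x hMx
  have hMM := hM.1.1 x
  have hyS : M x ∈ S := (hM.1.2 (M x) (by rw [hMM]; exact hMx.symm)).2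
  have hNy : N (M x) ≠ M x := fun h => hN.not_adj hNx h hxS hyS hadj
  obtain ⟨τ, hτ, hτc, h1, h3, h4, h5⟩ := hN.1.exchange hNx hNy hadj hxS
  have hτmax : IsMaxMat G S τ := ⟨hτ, fun ρ hρ => hτc ▸ hN.2 ρ hρ⟩
  have hNN := hN.1.1
  have hτt : τ t = t := by
    by_cases hc : t = N (M x)
    · rw [hc]; exact h4
    · rw [h5 t hxt.symm (by rintro hc; rw [← hc] at hNy; exact hNy hNt) hc, hNt]
  have hle := hmax τ ⟨hτmax, hτt⟩
  refine absurd hle (not_le.2 (Finset.card_lt_card ?_))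
  rw [Finset.ssubset_iff_of_subset]
  · exact ⟨x, by simp [h1, hMx], by simp [hNx]⟩
  · intro w hw
    simp only [Finset.mem_filter, Finset.mem_univ, true_and] at hw ⊢
    obtain ⟨hw1, hw2⟩ := hw
    have hMw := hM.1.1 w
    have := hNN (M x)
    have := hNN w
    by_cases c1 : w = x
    · grind
    by_cases c2 : w = M x
    · grind
    by_cases c3 : w = N (M x)
    · grind
    rw [h5 w c1 c2 c3]; exact ⟨hw1, hw2⟩

end Gallai

/-! ### Degree sums of graphs with bounded degree and matching number -/

section DegreeSums

variable {V : Type*} [Fintype V] [LinearOrder V] (G : SimpleGraph V) [DecidableRel G.Adj]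

/-- The number of neighbours of `x` in `S`. -/
def dg (S : Finset V) (x : V) : ℕ := (S.filter fun y => G.Adj x y).card

variable {G}

lemma dg_mono {S T : Finset V} (h : S ⊆ T) (x : V) : dg G S x ≤ dg G T x :=
  Finset.card_le_card (Finset.filter_subset_filter _ h)

lemma dg_le_card (S : Finset V) (x : V) : dg G S x ≤ S.card := Finset.card_filter_le _ _

lemma dg_union {S T : Finset V} (h : Disjoint S T) (x : V) :
    dg G (S ∪ T) x = dg G S x + dg G T x := by
  unfold dg
  rw [Finset.filter_union, Finset.card_union_of_disjoint (Finset.disjoint_filter_filter h)]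

lemma sum_dg_comm (S T : Finset V) : ∑ x ∈ S, dg G T x = ∑ y ∈ T, dg G S y := by
  have := Finset.sum_card_bipartiteAbove_eq_sum_card_bipartiteBelow (s := S) (t := T) G.Adj
  simpa only [Finset.bipartiteAbove, Finset.bipartiteBelow, dg, G.adj_comm] using this

lemma dg_erase {S : Finset V} {v : V} (hv : v ∈ S) (x : V) :
    dg G S x = dg G (S.erase v) x + dg G {v} x := by
  rw [← dg_union (by simp)]
  congr 1
  ext y; simp; grind

lemma sum_dg_singleton (S : Finset V) (v : V) : ∑ x ∈ S, dg G {v} x = dg G S v := by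
  rw [sum_dg_comm]; simp

lemma dg_self (v : V) : dg G {v} v = 0 := by simp [dg, Finset.filter_singleton]

lemma sum_dg_erase {W : Finset V} {x : V} (hx : x ∈ W) :
    ∑ y ∈ W, dg G W y = ∑ y ∈ W.erase x, dg G (W.erase x) y + 2 * dg G W x := by
  rw [← Finset.add_sum_erase W _ hx, Finset.sum_congr rfl fun y _ => dg_erase hx y,
    Finset.sum_add_distrib, sum_dg_singleton]
  have := dg_erase (G := G) hx x
  rw [dg_self] at this
  omega

lemma even_sum_dg (W : Finset V) : Even (∑ y ∈ W, dg G W y) := by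
  induction W using Finset.induction_on with
  | empty => simp
  | insert v W hv ih =>
    rw [sum_dg_erase (Finset.mem_insert_self v W), Finset.erase_insert hv]
    exact ih.add (even_two_mul _)

/-- Without essential vertices, `S` splits into classes with all edges inside the classes, each
class having at most one vertex missed by a given maximum matching `σ`. The `p C` are the numbers
of covered vertices in the classes `C`. -/
lemma exists_classes {S : Finset V} (hS : NoEssential G S) {σ : V → V} (hσ : IsMaxMat G S σ)
    (D : ℕ) : ∃ (P : Finset (Finset V)) (p : Finset V → ℕ),
      ∑ C ∈ P, p C = (supp σ).card ∧ (∀ C ∈ P, Even (p C)) ∧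
      (∀ C ∈ P, C.card ≤ p C + 1 ∧ p C ≤ C.card) ∧
      ∑ x ∈ S, min (dg G S x) D ≤ ∑ C ∈ P, C.card * min (C.card - 1) D := by
  classical
  let cls : V → Finset V := fun x => S.filter (GRel G S x)
  have hmem : ∀ x ∈ S, ∀ y, y ∈ cls x ↔ y ∈ S ∧ cls y = cls x := by
    intro x hx y
    constructor
    · intro hy
      obtain ⟨hyS, hxy⟩ := Finset.mem_filter.1 hy
      refine ⟨hyS, ?_⟩
      ext z
      simp only [cls, Finset.mem_filter]
      constructor
      · rintro ⟨hz, h⟩; exact ⟨hz, hxy.trans hS hyS h⟩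
      · rintro ⟨hz, h⟩; exact ⟨hz, hxy.symm.trans hS hx h⟩
    · rintro ⟨hyS, h⟩
      rw [← h]
      exact Finset.mem_filter.2 ⟨hyS, fun _ _ _ _ => rfl⟩
  have hmaps : ∀ x ∈ S, cls x ∈ S.image cls := fun x hx => Finset.mem_image_of_mem _ hx
  have hfib : ∀ C ∈ S.image cls, S.filter (fun x => cls x = C) = C := by
    intro C hC
    obtain ⟨x, hx, rfl⟩ := Finset.mem_image.1 hC
    ext y
    rw [hmem x hx, Finset.mem_filter]
  refine ⟨S.image cls, fun C => (C ∩ supp σ).card, ?_, ?_, ?_, ?_⟩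
  · have h1 : (supp σ).card = ∑ x ∈ S, if x ∈ supp σ then 1 else 0 := by
      rw [Finset.sum_ite_mem, Finset.inter_eq_right.2 hσ.1.supp_subset]; simp
    rw [h1, ← Finset.sum_fiberwise_of_maps_to hmaps]
    refine Finset.sum_congr rfl fun C hC => ?_
    rw [hfib C hC, Finset.sum_ite_mem]; simp
  · intro C hC
    obtain ⟨x, hx, rfl⟩ := Finset.mem_image.1 hC
    obtain ⟨τ, hτ, hτs⟩ := hσ.1.restrict (cls x)
    have : cls x ∩ supp σ = supp τ := by
      rw [hτs]
      ext y
      simp only [Finset.mem_inter, Finset.mem_filter]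
      constructor
      · rintro ⟨hy, hys⟩
        refine ⟨hys, hy, ?_⟩
        obtain ⟨hyS, hyc⟩ := (hmem x hx y).1 hy
        have h1 := hσ.1.2 y (mem_supp.1 hys)
        have h2 : σ y ∈ S := (hσ.1.2 (σ y) (by rw [hσ.1.1]; exact (mem_supp.1 hys).symm)).2
        rw [show cls x = cls y from hyc.symm]
        exact Finset.mem_filter.2 ⟨h2, gRel_of_adj hyS h2 h1.1⟩
      · rintro ⟨h1, h2, -⟩; exact ⟨h2, h1⟩
    show Even (cls x ∩ supp σ).card
    rw [this, hτ.card_supp]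
    exact even_two_mul _
  · intro C hC
    obtain ⟨x, hx, rfl⟩ := Finset.mem_image.1 hC
    refine ⟨?_, Finset.card_le_card Finset.inter_subset_left⟩
    rw [← Finset.card_sdiff_add_card_inter (cls x) (supp σ), add_comm]
    refine Nat.add_le_add_left (Finset.card_le_one.2 ?_) _
    intro a ha b hb
    simp only [Finset.mem_sdiff, mem_supp, not_not] at ha hb
    obtain ⟨haS, hac⟩ := (hmem x hx a).1 ha.1
    have hb' : b ∈ cls a := by rw [hac]; exact hb.1
    exact (Finset.mem_filter.1 hb').2 σ hσ ha.2 hb.2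
  · rw [← Finset.sum_fiberwise_of_maps_to hmaps]
    refine Finset.sum_le_sum fun C hC => ?_
    rw [hfib C hC]
    refine (Finset.sum_le_card_nsmul C _ (min (C.card - 1) D) ?_).trans (by simp)
    intro y hy
    obtain ⟨x, hx, rfl⟩ := Finset.mem_image.1 hC
    obtain ⟨hyS, hyc⟩ := (hmem x hx y).1 hy
    refine min_le_min_right _ ?_
    rw [← Finset.card_erase_of_mem hy]
    refine Finset.card_le_card fun z hz => ?_
    obtain ⟨hzS, hyz⟩ := Finset.mem_filter.1 hz
    rw [← hyc]
    exact Finset.mem_erase.2 ⟨hyz.ne', Finset.mem_filter.2 ⟨hzS, gRel_of_adj hyS hzS hyz⟩⟩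

/-- Removing an essential vertex lowers the truncated degree sum by at most `D + κ` and the number
of covered vertices by at least `2`; so a bound `h` that grows fast enough needs only to be checked
for sets without essential vertices. -/
lemma truncated_sum_induction (D κ B : ℕ) (h : ℕ → ℕ) (hmono : Monotone h)
    (hstep : ∀ p, h p + 2 * (D + κ) ≤ h (p + 2))
    (hbase : ∀ (S : Finset V) (σ : V → V), NoEssential G S → IsMaxMat G S σ → (supp σ).card ≤ B →
      2 * ∑ x ∈ S, min (dg G S x) D ≤ h (supp σ).card) :
    ∀ (m : ℕ) (S : Finset V) (σ : V → V), S.card = m → (∀ x ∈ S, dg G S x ≤ κ) →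
      IsMaxMat G S σ → (supp σ).card ≤ B →
      2 * ∑ x ∈ S, min (dg G S x) D ≤ h (supp σ).card := by
  intro m
  induction m with
  | zero =>
    intro S σ hm _ _ _
    rw [Finset.card_eq_zero] at hm
    simp [hm]
  | succ m ih =>
    intro S σ hm hκ hσ hB
    by_cases hS : NoEssential G S
    · exact hbase S σ hS hσ hB
    unfold NoEssential at hS
    push Not at hS
    obtain ⟨v, hv, hess⟩ := hS
    obtain ⟨τ, hτ⟩ := exists_isMaxMat (G := G) (S.erase v)
    have hτS : IsMat G S τ := hτ.1.mono (Finset.erase_subset _ _)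
    have hτv : τ v = v := by
      by_contra hc
      exact absurd (hτ.1.2 v hc).2 (Finset.notMem_erase v S)
    have hlt : (supp τ).card < (supp σ).card := by
      refine lt_of_le_of_ne (hσ.2 τ hτS) fun hc => ?_
      exact hess τ ⟨hτS, fun ρ hρ => hc ▸ hσ.2 ρ hρ⟩ hτv
    have h2 : (supp τ).card + 2 ≤ (supp σ).card := by
      have := hτ.1.card_supp
      have := hσ.1.card_supp
      omega
    have hIH := ih (S.erase v) τ (by rw [Finset.card_erase_of_mem hv, hm]; rfl)
      (fun x hx => (dg_mono (Finset.erase_subset _ _) x).trans (hκ x (Finset.mem_of_mem_erase hx)))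
      hτ (by omega)
    have hsum : ∑ x ∈ S, min (dg G S x) D ≤
        D + κ + ∑ x ∈ S.erase v, min (dg G (S.erase v) x) D := by
      rw [← Finset.add_sum_erase S _ hv]
      have h1 : ∑ x ∈ S.erase v, min (dg G S x) D ≤
          ∑ x ∈ S.erase v, (min (dg G (S.erase v) x) D + dg G {v} x) := by
        refine Finset.sum_le_sum fun x _ => ?_
        rw [dg_erase hv x]; omega
      rw [Finset.sum_add_distrib, sum_dg_singleton] at h1
      have h3 := (dg_mono (G := G) (Finset.erase_subset v S) v).trans (hκ v hv)
      have h4 : min (dg G S v) D ≤ D := min_le_right _ _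
      omega
    have h5 := hstep (supp τ).card
    have h6 := hmono h2
    omega

/-- Bound on the truncated degree sum; `(supp σ).card` is twice the matching number. -/
lemma truncated_sum_le (D κ E : ℕ) (hE1 : D + κ ≤ E) (hE2 : 2 * D + 2 ≤ E) {S : Finset V}
    {σ : V → V} (hκ : ∀ x ∈ S, dg G S x ≤ κ) (hσ : IsMaxMat G S σ) :
    2 * ∑ x ∈ S, min (dg G S x) D ≤ E * (supp σ).card := by
  refine truncated_sum_induction D κ (supp σ).card (fun p => E * p)
    (fun a b hab => Nat.mul_le_mul_left E hab) (fun p => by nlinarith) ?_ S.card S σ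
    rfl hκ hσ le_rfl
  intro S σ hS hσ _
  obtain ⟨P, p, hp, -, hC, hle⟩ := exists_classes hS hσ D
  have h1 : ∑ C ∈ P, C.card * min (C.card - 1) D ≤ ∑ C ∈ P, (D + 1) * p C := by
    refine Finset.sum_le_sum fun C hCP => ?_
    obtain ⟨h2, h3⟩ := hC C hCP
    rcases Nat.lt_or_ge (p C) C.card with h4 | h4
    · rw [show C.card = p C + 1 by omega, Nat.add_sub_cancel]
      rcases le_total (p C) D with h6 | h6
      · rw [min_eq_left h6]; nlinarith
      · rw [min_eq_right h6]; nlinarith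
    · have h5 : min (C.card - 1) D ≤ D := min_le_right _ _
      nlinarith
  rw [← Finset.mul_sum, hp] at h1
  have : (2 * D + 2) * (supp σ).card ≤ E * (supp σ).card := Nat.mul_le_mul_right _ hE2
  nlinarith

/-- For odd `κ` the bound on the degree sum improves: only a class with more than `κ` covered
vertices (an even number, hence not `κ`) can have degree sum above `κ` times that number, and there
is room for only one such class. -/
lemma sum_le_of_odd (κ : ℕ) (hodd : Odd κ) {S : Finset V}
    {σ : V → V} (hκ : ∀ x ∈ S, dg G S x ≤ κ) (hσ : IsMaxMat G S σ) (hB : (supp σ).card ≤ 2 * κ) :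
    ∑ x ∈ S, dg G S x ≤ κ * (supp σ).card + κ := by
  have hmain := truncated_sum_induction (G := G) κ κ (2 * κ) (fun p => 2 * κ * p + 2 * κ)
    (fun a b hab => Nat.add_le_add_right (Nat.mul_le_mul_left _ hab) _) (fun p => by nlinarith)
    ?_ S.card S σ rfl hκ hσ hB
  · rw [Finset.sum_congr rfl fun x hx => min_eq_left (hκ x hx)] at hmain
    nlinarith
  intro S σ hS hσ hB
  obtain ⟨P, p, hp, heven, hC, hle⟩ := exists_classes hS hσ κ
  have h1 : ∑ C ∈ P, C.card * min (C.card - 1) κ ≤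
      ∑ C ∈ P, (κ * p C + κ * if κ + 1 ≤ p C then 1 else 0) := by
    refine Finset.sum_le_sum fun C hCP => ?_
    obtain ⟨h2, h3⟩ := hC C hCP
    have hev := heven C hCP
    have hne : p C ≠ κ := by rintro h; rw [h] at hev; exact (Nat.not_even_iff_odd.2 hodd) hev
    rcases Nat.lt_or_ge (p C) C.card with h4 | h4
    · rw [show C.card = p C + 1 by omega, Nat.add_sub_cancel]
      split_ifs with h6
      · rw [min_eq_right (by omega)]; nlinarith
      · rw [min_eq_left (by omega)]; nlinarith [show p C + 1 ≤ κ by omega]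
    · have h5 : min (C.card - 1) κ ≤ κ := min_le_right _ _
      have h6 : C.card = p C := by omega
      rw [h6] at h5 ⊢
      calc p C * min (p C - 1) κ ≤ p C * κ := Nat.mul_le_mul_left _ h5
        _ ≤ _ := by rw [mul_comm]; exact Nat.le_add_right _ _
  have h2 : (κ + 1) * ∑ C ∈ P, (if κ + 1 ≤ p C then 1 else 0) ≤ ∑ C ∈ P, p C := by
    rw [Finset.mul_sum]
    refine Finset.sum_le_sum fun C _ => ?_
    split_ifs with h <;> omega
  have h3 : ∑ C ∈ P, (if κ + 1 ≤ p C then 1 else 0) ≤ 1 := by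
    by_contra hc
    push Not at hc
    nlinarith
  rw [Finset.sum_add_distrib, ← Finset.mul_sum, ← Finset.mul_sum, hp] at h1
  nlinarith

end DegreeSums

/-! ### Fans and matchings in neighbourhoods -/

section Fans

variable {V : Type*} [Fintype V] [LinearOrder V] (G : SimpleGraph V) [DecidableRel G.Adj]

/-- The neighbourhood of `x` as a finset. -/
def nb (x : V) : Finset V := Finset.univ.filter fun y => G.Adj x y

/-- Every matching inside a neighbourhood has at most `κ` edges; for `κ = k - 1` this expresses
that `G` contains no `k`-fan. -/
def FanFree (κ : ℕ) : Prop := ∀ x σ, IsMat G (nb G x) σ → (supp σ).card ≤ 2 * κ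

variable {G}

@[simp] lemma mem_nb {x y : V} : y ∈ nb G x ↔ G.Adj x y := by simp [nb]

lemma containsCopy_of_isMat {k : ℕ} {x : V} {σ : V → V} (h : IsMat G (nb G x) σ)
    (hc : 2 * k ≤ (supp σ).card) : ContainsCopy (Ckq k 3) G := by
  have hcard := h.card_supp
  obtain ⟨T, hT, hTk⟩ := Finset.exists_subset_card_eq
    (show k ≤ (Finset.univ.filter fun v => v < σ v).card by omega)
  have hT' : ∀ v ∈ T, v < σ v := fun v hv => (Finset.mem_filter.1 (hT hv)).2
  let f := T.equivFinOfCardEq hTk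
  let e : Fin k → V := fun i => (f.symm i : V)
  have he : ∀ i, e i < σ (e i) := fun i => hT' _ (f.symm i).2
  have hinj : Function.Injective e := fun i j hij => f.symm.injective (Subtype.ext hij)
  have hσ := h.1
  have hx : ∀ i, G.Adj x (e i) := fun i => mem_nb.1 (h.2 _ (he i).ne').2
  have hx' : ∀ i, G.Adj x (σ (e i)) := fun i =>
    mem_nb.1 (h.2 _ (by rw [hσ]; exact (he i).ne)).2
  have hadj : ∀ i, G.Adj (e i) (σ (e i)) := fun i => (h.2 _ (he i).ne').1
  let F : Option (Fin k × Fin (3 - 1)) → V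
    | none => x
    | some (i, j) => if (j : ℕ) = 0 then e i else σ (e i)
  have hrel : ∀ a b, CkqRel k 3 a b → G.Adj (F a) (F b) := by
    rintro (_ | ⟨i, j⟩) (_ | ⟨i', j'⟩) hab
    · exact hab.elim
    · simp only [F]; split_ifs
      · exact hx i'
      · exact hx' i'
    · exact hab.elim
    · obtain ⟨rfl, hj⟩ := hab
      have h1 : (j : ℕ) = 0 := by omega
      have h2 : (j' : ℕ) ≠ 0 := by omega
      simp only [F, h1, h2, if_true, if_false]
      exact hadj i
  refine ⟨⟨F, ?_⟩, ?_⟩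
  · intro a b hab
    rw [Ckq, SimpleGraph.fromRel_adj] at hab
    rcases hab.2 with h1 | h1
    · exact hrel _ _ h1
    · exact (hrel _ _ h1).symm
  · have hcross : ∀ i i', e i ≠ σ (e i') := by
      intro i i' hii
      have h1 := he i
      have h2 := he i'
      rw [hii, hσ] at h1
      exact lt_asymm h1 h2
    rintro (_ | ⟨i, j⟩) (_ | ⟨i', j'⟩) hab
    · rfl
    · exfalso
      simp only [RelHom.coeFn_mk, F] at hab
      split_ifs at hab
      · exact (hx i').ne hab
      · exact (hx' i').ne hab
    · exfalso
      simp only [RelHom.coeFn_mk, F] at hab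
      split_ifs at hab
      · exact (hx i).ne hab.symm
      · exact (hx' i).ne hab.symm
    · simp only [RelHom.coeFn_mk, F] at hab
      split_ifs at hab with h1 h2 h2
      · have := hinj hab
        rw [this, show j = j' from Fin.ext (by omega)]
      · exact absurd hab (hcross _ _)
      · exact absurd hab.symm (hcross _ _)
      · have := hinj (Function.LeftInverse.injective hσ hab)
        rw [this, show j = j' from Fin.ext (by omega)]

lemma fanFree_of_not_containsCopy {k : ℕ} (hk : 1 ≤ k) (h : ¬ ContainsCopy (Ckq k 3) G) :
    FanFree G (k - 1) := by
  intro x σ hσ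
  by_contra hc
  have := hσ.card_supp
  exact h (containsCopy_of_isMat hσ (by omega))

/-- Greedy extension of a matching by edges from `X` to `Y`, stopping once `K` vertices are
covered. -/
lemma greedy (S Y : Finset V) (K : ℕ) (hYS : Y ⊆ S) (X : Finset V) :
    ∀ σ, IsMat G S σ → X ⊆ S → Disjoint X Y → (∀ u ∈ X, σ u = u) → (∀ u ∈ X, K ≤ dg G Y u) →
      ∃ τ, IsMat G S τ ∧ (K ≤ (supp τ).card ∨ (supp τ).card = (supp σ).card + 2 * X.card) := by
  induction X using Finset.induction_on with
  | empty => intro σ hσ _ _ _ _; exact ⟨σ, hσ, Or.inr (by simp)⟩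
  | insert u X hu ih =>
    intro σ hσ hXS hXY hfix hdeg
    by_cases hK : K ≤ (supp σ).card
    · exact ⟨σ, hσ, Or.inl hK⟩
    obtain ⟨y, hy, hys⟩ := Finset.exists_mem_notMem_of_card_lt_card
      (show (supp σ).card < (Y.filter fun y => G.Adj u y).card from
        lt_of_lt_of_le (not_le.1 hK) (hdeg u (Finset.mem_insert_self _ _)))
    obtain ⟨hyY, huy⟩ := Finset.mem_filter.1 hy
    rw [mem_supp, not_not] at hys
    rw [Finset.insert_subset_iff] at hXS
    obtain ⟨τ, hτ, hτc, hτs⟩ := hσ.extend (hfix u (Finset.mem_insert_self _ _)) hys huy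
      hXS.1 (hYS hyY)
    rw [Finset.disjoint_insert_left] at hXY
    obtain ⟨ρ, hρ, hρc⟩ := ih τ hτ hXS.2 hXY.2 (by
      intro w hw
      by_contra hc
      have hw' : w ∈ supp τ := mem_supp.2 hc
      rw [hτs] at hw'
      simp only [Finset.mem_insert, mem_supp] at hw'
      rcases hw' with rfl | rfl | h
      · exact hu hw
      · exact Finset.disjoint_left.1 hXY.2 hw hyY
      · exact h (hfix w (Finset.mem_insert_of_mem hw)))
      (fun w hw => hdeg w (Finset.mem_insert_of_mem hw))
    refine ⟨ρ, hρ, hρc.imp_right fun h => ?_⟩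
    rw [h, hτc, Finset.card_insert_of_notMem hu]; ring

/-- Removing a maximum matching from a neighbourhood leaves a large independent set. -/
lemma exists_indep {κ : ℕ} (hF : FanFree G κ) (W : Finset V) (x : V) :
    ∃ I ⊆ W, (∀ u ∈ I, G.Adj x u) ∧ (∀ u ∈ I, dg G I u = 0) ∧ dg G W x ≤ I.card + 2 * κ := by
  obtain ⟨σ, hσ⟩ := exists_isMaxMat (G := G) (W.filter fun y => G.Adj x y)
  refine ⟨(W.filter fun y => G.Adj x y) \ supp σ,
    Finset.sdiff_subset.trans (Finset.filter_subset _ _), ?_, ?_, ?_⟩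
  · intro u hu
    exact (Finset.mem_filter.1 (Finset.mem_sdiff.1 hu).1).2
  · intro u hu
    rw [dg, Finset.card_eq_zero, Finset.filter_eq_empty_iff]
    intro v hv
    rw [Finset.mem_sdiff, mem_supp, not_not] at hu hv
    exact hσ.not_adj hu.2 hv.2 hu.1 hv.1
  · have h1 := hF x σ (hσ.1.mono fun y hy => mem_nb.2 (Finset.mem_filter.1 hy).2)
    have h2 := Finset.le_card_sdiff (supp σ) (W.filter fun y => G.Adj x y)
    unfold dg
    omega

/-- A crude bound on the number of edges, valid for every vertex set: all edges meet the complement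
of an independent set found in a neighbourhood of maximum size. -/
lemma two_mul_sum_le {κ : ℕ} (hF : FanFree G κ) (W : Finset V) :
    2 * ∑ x ∈ W, dg G W x ≤ (W.card + 2 * κ) ^ 2 := by
  rcases W.eq_empty_or_nonempty with rfl | hW
  · simp
  obtain ⟨x, hx, hmax⟩ := Finset.exists_max_image W (dg G W) hW
  obtain ⟨I, hIW, -, hI, hcard⟩ := exists_indep hF W x
  have hdis : Disjoint I (W \ I) := Finset.disjoint_sdiff
  have hun : I ∪ (W \ I) = W := Finset.union_sdiff_of_subset hIW
  have h1 : ∑ y ∈ I, dg G W y = ∑ y ∈ W \ I, dg G I y := by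
    rw [sum_dg_comm (W \ I) I]
    refine Finset.sum_congr rfl fun y hy => ?_
    have := dg_union (G := G) hdis y
    rw [hun, hI y hy] at this
    omega
  have h2 : ∑ y ∈ W \ I, dg G I y ≤ ∑ y ∈ W \ I, dg G W y :=
    Finset.sum_le_sum fun y _ => dg_mono hIW y
  have h3 : ∑ y ∈ W \ I, dg G W y ≤ (W \ I).card * dg G W x := by
    simpa using Finset.sum_le_card_nsmul (W \ I) (dg G W) (dg G W x)
      fun y hy => hmax y (Finset.mem_sdiff.1 hy).1
  have h4 : ∑ y ∈ W, dg G W y = ∑ y ∈ I, dg G W y + ∑ y ∈ W \ I, dg G W y := by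
    rw [← Finset.sum_union hdis, hun]
  have h5 : (W \ I).card + I.card = W.card := Finset.card_sdiff_add_card_eq_card hIW
  zify at *
  have h7 : ((W \ I).card : ℤ) ≤ W.card + 2 * κ - dg G W x := by linarith
  have h8 : ((W \ I).card : ℤ) * dg G W x ≤ (W.card + 2 * κ - dg G W x) * dg G W x :=
    mul_le_mul_of_nonneg_right h7 (by positivity)
  nlinarith [sq_nonneg ((W.card : ℤ) + 2 * κ - 2 * dg G W x)]

/-- In an almost complete bipartition, a matching among the neighbours of `x ∈ A` in `B` extends
greedily by edges joining the neighbours of `x` in `A` to further neighbours of `x` in `B`. -/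
lemma side_bound {κ μ : ℕ} (hF : FanFree G κ) {A B : Finset V} (hAB : Disjoint A B)
    (hA : ∀ u ∈ A, B.card ≤ dg G B u + μ) (hB : 2 * μ + 2 * (κ + 1) ≤ B.card) {x : V} (hx : x ∈ A)
    {σ : V → V} (hσ : IsMat G (B ∩ nb G x) σ) : 2 * dg G A x + (supp σ).card ≤ 2 * κ := by
  have hsub : ∀ u ∈ A, σ u = u := by
    intro u hu
    by_contra hc
    exact Finset.disjoint_left.1 hAB hu (Finset.mem_inter.1 (hσ.2 u hc).2).1
  obtain ⟨τ, hτ, hτc⟩ := greedy (G := G) (nb G x) (B ∩ nb G x) (2 * (κ + 1))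
    Finset.inter_subset_right (A ∩ nb G x) σ (hσ.mono Finset.inter_subset_right)
    Finset.inter_subset_right
    (hAB.mono Finset.inter_subset_left Finset.inter_subset_left)
    (fun u hu => hsub u (Finset.mem_inter.1 hu).1) (by
      intro u hu
      have h1 := hA u (Finset.mem_inter.1 hu).1
      have h2 := hA x hx
      have h3 := Finset.card_union_add_card_inter
        (B.filter fun y => G.Adj x y) (B.filter fun y => G.Adj u y)
      have h4 : ((B.filter fun y => G.Adj x y) ∪ (B.filter fun y => G.Adj u y)).card ≤ B.card :=
        Finset.card_le_card
          (Finset.union_subset (Finset.filter_subset _ _) (Finset.filter_subset _ _))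
      have h5 : (B.filter fun y => G.Adj x y) ∩ (B.filter fun y => G.Adj u y) =
          (B ∩ nb G x).filter fun y => G.Adj u y := by
        ext y; simp; tauto
      rw [h5] at h3
      unfold dg at *
      omega)
  have h1 := hF x τ hτ
  have h2 : (A ∩ nb G x).card = dg G A x := by
    unfold dg; congr 1; ext y; simp
  omega

/-- Each vertex of `B` missed by `x` destroys at most one edge of a matching of `B`. -/
lemma side_bound' {κ μ : ℕ} (hF : FanFree G κ) {A B : Finset V} (hAB : Disjoint A B)
    (hA : ∀ u ∈ A, B.card ≤ dg G B u + μ) (hB : 2 * μ + 2 * (κ + 1) ≤ B.card) {x : V} (hx : x ∈ A)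
    {σ : V → V} (hσ : IsMat G B σ) :
    2 * (dg G A x + dg G B x) + (supp σ).card ≤ 2 * κ + 2 * B.card := by
  obtain ⟨τ, hτ, hτs⟩ := hσ.restrict (nb G x)
  have h1 := side_bound hF hAB hA hB hx hτ
  have h2 : supp σ ⊆ supp τ ∪ ((B \ nb G x) ∪ (B \ nb G x).image σ) := by
    intro v hv
    have hv' := mem_supp.1 hv
    have hvB := (hσ.2 v hv').2
    have hvB' : σ v ∈ B := (hσ.2 (σ v) (by rw [hσ.1]; exact hv'.symm)).2
    simp only [hτs, Finset.mem_union, Finset.mem_filter, Finset.mem_sdiff, Finset.mem_image]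
    by_cases c1 : v ∈ nb G x
    · by_cases c2 : σ v ∈ nb G x
      · exact Or.inl ⟨hv, c1, c2⟩
      · exact Or.inr (Or.inr ⟨σ v, ⟨hvB', c2⟩, hσ.1 v⟩)
    · exact Or.inr (Or.inl ⟨hvB, c1⟩)
  have h3 := (Finset.card_le_card h2).trans (Finset.card_union_le _ _)
  have h4 := Finset.card_union_le (B \ nb G x) ((B \ nb G x).image σ)
  have h5 : ((B \ nb G x).image σ).card ≤ (B \ nb G x).card := Finset.card_image_le
  have h6 := Finset.card_sdiff_add_card_inter B (nb G x)
  have h7 : (B ∩ nb G x).card = dg G B x := by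
    unfold dg; congr 1; ext y; simp
  omega

end Fans

/-! ### The upper bound -/

section Upper

variable {V : Type*} [Fintype V] [LinearOrder V] {G : SimpleGraph V} [DecidableRel G.Adj]

lemma gfun_odd {κ : ℕ} (h : Even κ) : gfun (κ + 1) = κ * (κ + 1) := by
  rw [gfun, if_pos h.add_one]
  zify [show κ + 1 ≤ (κ + 1) ^ 2 by nlinarith]
  ring

lemma gfun_even {κ : ℕ} (h : Odd κ) : 2 * gfun (κ + 1) + 1 = κ * (2 * κ + 1) := by
  rw [gfun, if_neg (Nat.not_odd_iff_even.2 h.add_one)]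
  obtain ⟨j, rfl⟩ := h
  have h1 : 3 * (2 * j + 1 + 1) / 2 = 3 * (j + 1) := by omega
  rw [h1]
  zify [show 3 * (j + 1) ≤ (2 * j + 1 + 1) ^ 2 by nlinarith]
  ring

lemma gfun_bound (κ : ℕ) : κ * (2 * κ + 1) ≤ 2 * gfun (κ + 1) + 1 := by
  rcases Nat.even_or_odd κ with h | h
  · rw [gfun_odd h]; nlinarith
  · rw [gfun_even h]

/-- The degrees in `A ∪ B` of the vertices of `A`, in terms of the size `b` of a matching of `B`. -/
lemma side_sum {κ μ : ℕ} (hF : FanFree G κ) {A B : Finset V} (hAB : Disjoint A B)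
    (hA : ∀ u ∈ A, B.card ≤ dg G B u + μ) (hB : 2 * μ + 2 * (κ + 1) ≤ B.card)
    {σ : V → V} (hσ : IsMat G B σ) {b : ℕ} (hb : (supp σ).card = 2 * b) :
    (b ≤ κ → ∑ x ∈ A, dg G (A ∪ B) x ≤ A.card * B.card + ∑ x ∈ A, min (dg G A x) (κ - b)) ∧
    (κ ≤ b → ∑ x ∈ A, dg G (A ∪ B) x + A.card * (b - κ) ≤ A.card * B.card) := by
  have key : ∀ x ∈ A, dg G (A ∪ B) x + b ≤ κ + B.card := by
    intro x hx
    have := side_bound' hF hAB hA hB hx hσ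
    rw [dg_union hAB]
    omega
  constructor
  · intro hbκ
    rw [← smul_eq_mul, ← Finset.sum_const, ← Finset.sum_add_distrib]
    refine Finset.sum_le_sum fun x hx => ?_
    have h1 := key x hx
    have h2 := dg_le_card (G := G) B x
    have h3 := dg_union (G := G) hAB x
    omega
  · intro hbκ
    rw [← smul_eq_mul, ← smul_eq_mul, ← Finset.sum_const, ← Finset.sum_const,
      ← Finset.sum_add_distrib]
    refine Finset.sum_le_sum fun x hx => ?_
    have h1 := key x hx
    omega

/-- The degree sum over `A ∪ B` exceeds that of the complete bipartite graph by at most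
`2 g(κ + 1) + 1`. The hypothesis `hab` breaks the symmetry between the two sides: the matching
number `b` of `B` is the smaller one. -/
lemma sum_le_of_partition_aux {κ μ : ℕ} (hF : FanFree G κ) {A B : Finset V} (hAB : Disjoint A B)
    (hA : ∀ u ∈ A, B.card ≤ dg G B u + μ) (hB : 2 * μ + 2 * (κ + 1) ≤ B.card)
    (hB' : ∀ u ∈ B, A.card ≤ dg G A u + μ) (hA' : 2 * μ + 2 * (κ + 1) ≤ A.card)
    (hBsq : 2 * (κ + 1) ^ 2 ≤ B.card)
    {σ τ : V → V} (hσ : IsMaxMat G A σ) (hτ : IsMaxMat G B τ) {a b : ℕ}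
    (ha : (supp σ).card = 2 * a) (hb : (supp τ).card = 2 * b) (hab : b ≤ a) :
    ∑ x ∈ A ∪ B, dg G (A ∪ B) x ≤ 2 * (A.card * B.card) + 2 * gfun (κ + 1) + 1 := by
  rw [Finset.sum_union hAB]
  have hdA : ∀ x ∈ A, dg G A x ≤ κ := fun x hx => by
    have := side_bound hF hAB hA hB hx (isMat_id _)
    omega
  have hdB : ∀ x ∈ B, dg G B x ≤ κ := fun x hx => by
    have := side_bound hF hAB.symm hB' hA' hx (isMat_id _)
    omega
  obtain ⟨hA1, hA2⟩ := side_sum hF hAB hA hB hτ.1 hb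
  obtain ⟨hB1, hB2⟩ := side_sum hF hAB.symm hB' hA' hσ.1 ha
  rw [Finset.union_comm B A, mul_comm B.card A.card] at hB1 hB2
  have tA : ∀ D E, D + κ ≤ E → 2 * D + 2 ≤ E → ∑ x ∈ A, min (dg G A x) D ≤ E * a := by
    intro D E h1 h2
    have := truncated_sum_le D κ E h1 h2 hdA hσ
    rw [ha] at this
    nlinarith
  have tB : ∀ D E, D + κ ≤ E → 2 * D + 2 ≤ E → ∑ x ∈ B, min (dg G B x) D ≤ E * b := by
    intro D E h1 h2
    have := truncated_sum_le D κ E h1 h2 hdB hτ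
    rw [hb] at this
    nlinarith
  rcases Nat.lt_or_ge κ a with haκ | haκ
    -- more than `κ` disjoint edges inside `A` cost every vertex of `B` an edge
  · have h1 := hB2 haκ.le
    rcases Nat.lt_or_ge κ b with hbκ | hbκ
    · have h2 := hA2 hbκ.le
      omega
    · have h2 := hA1 hbκ
      have h3 := tA (κ - b) (2 * κ + 2) (by omega) (by omega)
      obtain ⟨j, rfl⟩ : ∃ j, a = κ + (j + 1) := ⟨a - κ - 1, by omega⟩
      rw [Nat.add_sub_cancel_left] at h1
      have h4 : 2 * (κ + 1) ^ 2 * (j + 1) ≤ B.card * (j + 1) := Nat.mul_le_mul_right _ hBsq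
      have h5 : (2 * κ + 2) * (κ + (j + 1)) ≤ 2 * (κ + 1) ^ 2 * (j + 1) := by
        have : κ * κ * j + κ * j ≥ 0 := Nat.zero_le _
        nlinarith
      have h6 : B.card * (j + 1) ≤ A.card * B.card := by omega
      omega
  · have h1 := hB1 haκ
    have h2 := hA1 (hab.trans haκ)
    rcases Nat.eq_zero_or_pos b with rfl | hb0
    · have h3 := tB (κ - a) (2 * κ + 2) (by omega) (by omega)
      rw [Nat.sub_zero] at h2
      rcases Nat.even_or_odd κ with hκ | hκ
      · rw [gfun_odd hκ]
        have h4 := tA κ (2 * κ + 2) (by omega) (by omega)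
        have h5 : (2 * κ + 2) * a ≤ (2 * κ + 2) * κ := Nat.mul_le_mul_left _ haκ
        nlinarith
      · have h4 := sum_le_of_odd κ hκ hdA hσ (by omega)
        have h5 := gfun_even hκ
        rw [Finset.sum_congr rfl fun x hx => min_eq_left (hdA x hx)] at h2
        have h6 : κ * (supp σ).card ≤ κ * (2 * κ) := Nat.mul_le_mul_left _ (by omega)
        nlinarith
    · have hg := gfun_bound κ
      rcases Nat.lt_or_ge b 2 with hb2 | hb2
      · obtain rfl : b = 1 := by omega
        rcases Nat.lt_or_ge a 2 with ha2 | ha2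
        · obtain rfl : a = 1 := by omega
          rcases Nat.lt_or_ge κ 2 with hκ | hκ
          · obtain rfl : κ = 1 := by omega
            simp at h1 h2
            omega
          · have h3 := tA (κ - 1) (2 * κ) (by omega) (by omega)
            have h4 := tB (κ - 1) (2 * κ) (by omega) (by omega)
            rcases Nat.lt_or_ge κ 3 with h5 | h5
            · obtain rfl : κ = 2 := by omega
              omega
            · nlinarith
        · have h3 := tA (κ - 1) (2 * κ) (by omega) (by omega)
          have h4 := tB (κ - a) (2 * κ - a) (by omega) (by omega)
          have h5 : (2 * κ - 1) * a ≤ (2 * κ - 1) * κ := Nat.mul_le_mul_left _ haκ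
          obtain ⟨l, rfl⟩ : ∃ l, κ = l + 1 := ⟨κ - 1, by omega⟩
          rw [show 2 * (l + 1) - 1 = 2 * l + 1 by omega] at h5
          have h6 : 2 * (l + 1) - a + a = 2 * (l + 1) := by omega
          nlinarith
      · have h3 := tA (κ - b) (2 * κ - b) (by omega) (by omega)
        have h4 := tB (κ - a) (2 * κ - a) (by omega) (by omega)
        obtain ⟨c, rfl⟩ : ∃ c, κ = a + c := ⟨κ - a, by omega⟩
        obtain ⟨d, rfl⟩ : ∃ d, a = b + d := ⟨a - b, by omega⟩
        rw [show 2 * (b + d + c) - b = b + 2 * d + 2 * c by omega] at h3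
        rw [show 2 * (b + d + c) - (b + d) = b + d + 2 * c by omega] at h4
        nlinarith [Nat.zero_le (c * d), Nat.zero_le (c * c)]

lemma sum_le_of_partition {κ μ : ℕ} (hF : FanFree G κ) {A B : Finset V} (hAB : Disjoint A B)
    (hA : ∀ u ∈ A, B.card ≤ dg G B u + μ) (hB : 2 * μ + 2 * (κ + 1) ≤ B.card)
    (hB' : ∀ u ∈ B, A.card ≤ dg G A u + μ) (hA' : 2 * μ + 2 * (κ + 1) ≤ A.card)
    (hAsq : 2 * (κ + 1) ^ 2 ≤ A.card) (hBsq : 2 * (κ + 1) ^ 2 ≤ B.card) :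
    ∑ x ∈ A ∪ B, dg G (A ∪ B) x ≤ 2 * (A.card * B.card) + 2 * gfun (κ + 1) + 1 := by
  obtain ⟨σ, hσ⟩ := exists_isMaxMat (G := G) A
  obtain ⟨τ, hτ⟩ := exists_isMaxMat (G := G) B
  have ha := hσ.1.card_supp
  have hb := hτ.1.card_supp
  rcases le_total (Finset.univ.filter fun v => v < τ v).card
    (Finset.univ.filter fun v => v < σ v).card with h | h
  · exact sum_le_of_partition_aux hF hAB hA hB hB' hA' hBsq hσ hτ ha hb h
  · rw [Finset.union_comm, mul_comm A.card]
    exact sum_le_of_partition_aux hF hAB.symm hB' hA' hA hB hAsq hτ hσ hb ha h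

/-- A vertex set `W` inducing large minimum degree and at least `|W|² / 4` edges splits into
two parts, each vertex being adjacent to almost all of the other part. -/
lemma exists_partition {κ : ℕ} (hF : FanFree G κ) {W : Finset V}
    (hW : 46 * κ + 22 ≤ W.card)
    (hdeg : ∀ x ∈ W, W.card ≤ 2 * dg G W x + 2 * (κ + 1))
    (hsum : W.card ^ 2 ≤ 2 * ∑ x ∈ W, dg G W x) :
    ∃ A B : Finset V, Disjoint A B ∧ A ∪ B = W ∧
      (∀ u ∈ A, B.card ≤ dg G B u + (9 * κ + 4)) ∧ (∀ u ∈ B, A.card ≤ dg G A u + (9 * κ + 4)) ∧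
      W.card ≤ 2 * A.card + 6 * κ + 2 ∧ W.card ≤ 2 * B.card + 6 * κ + 2 := by
  have hWne : W.Nonempty := Finset.card_pos.1 (by omega)
  obtain ⟨x, hx, hmax⟩ := Finset.exists_max_image W (dg G W) hWne
  have hxd : W.card ≤ 2 * dg G W x := by
    have h1 : ∑ y ∈ W, dg G W y ≤ W.card * dg G W x := by
      simpa using Finset.sum_le_card_nsmul W (dg G W) (dg G W x) hmax
    have h2 : W.card * W.card ≤ W.card * (2 * dg G W x) := by nlinarith
    exact Nat.le_of_mul_le_mul_left h2 (by omega)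
  obtain ⟨I, hIW, -, hI, hIc⟩ := exists_indep hF W x
  have hIne : I.Nonempty := Finset.card_pos.1 (by omega)
  obtain ⟨v, hv⟩ := hIne
  obtain ⟨J, hJW, hJv, hJ, hJc⟩ := exists_indep hF W v
  have hvd := hdeg v (hIW hv)
  have hIJ : Disjoint I J := by
    rw [Finset.disjoint_left]
    intro u hu huJ
    have h1 := hI v hv
    rw [dg, Finset.card_eq_zero, Finset.filter_eq_empty_iff] at h1
    exact h1 hu (hJv u huJ)
  -- a vertex seeing much of both `I` and `J` would be the centre of a fan
  have hcl : ∀ r, dg G I r ≤ κ ∨ dg G J r ≤ 5 * κ + 2 := by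
    intro r
    by_contra! hc
    obtain ⟨h1, h2⟩ := hc
    obtain ⟨τ, hτ, hτc⟩ := greedy (G := G) (nb G r) (J ∩ nb G r) (2 * (κ + 1))
      Finset.inter_subset_right (I ∩ nb G r) id (isMat_id _)
      Finset.inter_subset_right
      (hIJ.mono Finset.inter_subset_left Finset.inter_subset_left)
      (fun u _ => rfl) (by
        intro u hu
        have huI := (Finset.mem_inter.1 hu).1
        have h3 := hdeg u (hIW huI)
        have h4 : dg G W u ≤ dg G J u + (W.card - I.card - J.card) := by
          have h5 : W = (I ∪ J) ∪ (W \ (I ∪ J)) :=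
            (Finset.union_sdiff_of_subset (Finset.union_subset hIW hJW)).symm
          have h6 : dg G W u = dg G ((I ∪ J) ∪ (W \ (I ∪ J))) u := by rw [← h5]
          rw [dg_union Finset.disjoint_sdiff, dg_union hIJ, hI u huI] at h6
          have h7 := dg_le_card (G := G) (W \ (I ∪ J)) u
          have h8 := Finset.card_sdiff_add_card_eq_card (Finset.union_subset hIW hJW)
          rw [Finset.card_union_of_disjoint hIJ] at h8
          omega
        have h3' := Finset.card_union_add_card_inter
          (J.filter fun y => G.Adj r y) (J.filter fun y => G.Adj u y)
        have h4' : ((J.filter fun y => G.Adj r y) ∪ (J.filter fun y => G.Adj u y)).card ≤ J.card :=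
          Finset.card_le_card
            (Finset.union_subset (Finset.filter_subset _ _) (Finset.filter_subset _ _))
        have h5 : (J.filter fun y => G.Adj r y) ∩ (J.filter fun y => G.Adj u y) =
            (J ∩ nb G r).filter fun y => G.Adj u y := by
          ext y; simp; tauto
        rw [h5] at h3'
        have h6 : I.card + J.card ≤ W.card := by
          rw [← Finset.card_union_of_disjoint hIJ]
          exact Finset.card_le_card (Finset.union_subset hIW hJW)
        unfold dg at *
        omega)
    have h3 := hF r τ hτ
    have h4 : (I ∩ nb G r).card = dg G I r := by
      unfold dg; congr 1; ext y; simp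
    have h5 : (supp (id : V → V)).card = 0 := by simp [supp]
    omega
  have hIdg : ∀ u ∈ I, dg G I u ≤ κ := fun u hu => by rw [hI u hu]; omega
  let A := W.filter fun r => r ∉ J ∧ dg G I r ≤ κ
  have hAW : A ⊆ W := Finset.filter_subset _ _
  have hIA : I ⊆ A := fun u hu =>
    Finset.mem_filter.2 ⟨hIW hu, Finset.disjoint_left.1 hIJ hu, hIdg u hu⟩
  have hJB : J ⊆ W \ A := fun u hu =>
    Finset.mem_sdiff.2 ⟨hJW hu, fun h => (Finset.mem_filter.1 h).2.1 hu⟩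
  have hun : A ∪ (W \ A) = W := Finset.union_sdiff_of_subset hAW
  have hdis : Disjoint A (W \ A) := Finset.disjoint_sdiff
  have hcardAB : (W \ A).card + A.card = W.card := Finset.card_sdiff_add_card_eq_card hAW
  have hIA' := Finset.card_le_card hIA
  have hJB' := Finset.card_le_card hJB
  have hsplit : ∀ u, dg G W u = dg G A u + dg G (W \ A) u := by
    intro u
    rw [← dg_union hdis, hun]
  have hsub : ∀ {S T : Finset V} (u : V), S ⊆ T → dg G T u + S.card ≤ dg G S u + T.card := by
    intro S T u hST
    have h1 := dg_union (G := G) (Finset.disjoint_sdiff (s := S) (t := T)) u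
    rw [Finset.union_sdiff_of_subset hST] at h1
    have h2 := dg_le_card (G := G) (T \ S) u
    have h3 := Finset.card_sdiff_add_card_eq_card hST
    omega
  refine ⟨A, W \ A, hdis, hun, ?_, ?_, by omega, by omega⟩
  · intro u hu
    have h1 := (Finset.mem_filter.1 hu).2.2
    have h2 := hdeg u (hAW hu)
    have h3 := hsplit u
    have h4 := hsub u hIA
    omega
  · intro u hu
    obtain ⟨huW, huA⟩ := Finset.mem_sdiff.1 hu
    have h1 : dg G J u ≤ 5 * κ + 2 := by
      by_cases huJ : u ∈ J
      · rw [hJ u huJ]; omega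
      · refine (hcl u).resolve_left fun h => huA (Finset.mem_filter.2 ⟨huW, huJ, h⟩)
    have h2 := hdeg u huW
    have h3 := hsplit u
    have h4 := hsub u hJB
    omega

/-- The upper bound, for the degree sum. The set `W` maximizing `4 e(W) - |W|² + 4 k |W|` keeps
the surplus over `|W|² / 4`, has minimum degree at least `|W| / 2 - k`, and is not much smaller than
half of the vertex set by the crude bound `two_mul_sum_le`. -/
lemma upper_sum {κ : ℕ} (hF : FanFree G κ) (hn : 50 * (κ + 1) ^ 2 ≤ Fintype.card V) :
    2 * ∑ x, dg G Finset.univ x < Fintype.card V ^ 2 + 4 * gfun (κ + 1) + 3 := by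
  by_contra! hc
  let φ : Finset V → ℤ := fun W => 2 * (∑ x ∈ W, dg G W x : ℕ) - (W.card : ℤ) ^ 2 +
    4 * (κ + 1) * W.card
  obtain ⟨W, -, hmax⟩ := Finset.exists_max_image (Finset.univ : Finset (Finset V)) φ
    ⟨∅, Finset.mem_univ _⟩
  have hV := hmax Finset.univ (Finset.mem_univ _)
  simp only [φ, Finset.card_univ] at hV
  have hcr := two_mul_sum_le hF W
  have hWV : W.card ≤ Fintype.card V := Finset.card_le_univ W
  have hdeg : ∀ x ∈ W, W.card ≤ 2 * dg G W x + 2 * (κ + 1) := by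
    intro x hx
    have h1 := hmax (W.erase x) (Finset.mem_univ _)
    have h2 := sum_dg_erase (G := G) hx
    have h3 := Finset.card_erase_add_one hx
    simp only [φ, h2, ← h3] at h1
    push_cast at h1
    ring_nf at h1
    rw [← h3]
    omega
  zify at hc hcr hn hWV
  have hexc : (Fintype.card V : ℤ) * (4 * (κ + 1)) + 3 + 4 * gfun (κ + 1) ≤
      2 * (∑ x ∈ W, dg G W x : ℕ) - (W.card : ℤ) ^ 2 + 4 * (κ + 1) * W.card := by
    push_cast at hV hc ⊢
    linarith
  have hexc' : (W.card : ℤ) ^ 2 + 3 + 4 * gfun (κ + 1) ≤ 2 * (∑ x ∈ W, dg G W x : ℕ) := by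
    have : (W.card : ℤ) * (4 * (κ + 1)) ≤ (Fintype.card V : ℤ) * (4 * (κ + 1)) :=
      mul_le_mul_of_nonneg_right hWV (by positivity)
    linarith
  have hWbig : 24 * (κ + 1) ^ 2 ≤ W.card := by
    by_contra! hlt
    zify at hlt
    have h1 : 50 * ((κ : ℤ) + 1) ^ 2 * (4 * (κ + 1)) ≤ (Fintype.card V : ℤ) * (4 * (κ + 1)) :=
      mul_le_mul_of_nonneg_right hn (by positivity)
    have h2 : (W.card : ℤ) * (8 * (κ + 1)) ≤ 24 * ((κ : ℤ) + 1) ^ 2 * (8 * (κ + 1)) :=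
      mul_le_mul_of_nonneg_right hlt.le (by positivity)
    push_cast at hcr hexc
    have h3 : (0 : ℤ) ≤ W.card := by positivity
    have h4 : (0 : ℤ) ≤ κ := by positivity
    have h5 : (0 : ℤ) ≤ gfun (κ + 1) := by positivity
    nlinarith [mul_nonneg h4 h4, mul_nonneg (mul_nonneg h4 h4) h4]
  obtain ⟨A, B, hAB, hun, hA, hB, hAc, hBc⟩ := exists_partition hF
    (W := W) (by nlinarith) hdeg (by
      zify
      push_cast at hexc' ⊢
      linarith [show (0 : ℤ) ≤ gfun (κ + 1) by positivity])
  have hcard : A.card + B.card = W.card := by rw [← hun, Finset.card_union_of_disjoint hAB]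
  have hfin := sum_le_of_partition hF hAB hA (by nlinarith) hB (by nlinarith) (by nlinarith)
    (by nlinarith)
  rw [hun] at hfin
  obtain ⟨e, he⟩ := even_sum_dg (G := G) W
  rw [he] at hfin hexc'
  have hsq : (W.card : ℤ) ^ 2 = 4 * (A.card * B.card) + ((A.card : ℤ) - B.card) ^ 2 := by
    rw [← hcard]; push_cast; ring
  have hfin' : (e : ℤ) ≤ A.card * B.card + gfun (κ + 1) := by
    have : e ≤ A.card * B.card + gfun (κ + 1) := by omega
    exact_mod_cast this
  push_cast at hexc'
  nlinarith [sq_nonneg ((A.card : ℤ) - B.card)]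

end Upper

/-! ### The extremal graphs -/

section Lower

/-- The graph on `Fin n` obtained from the complete bipartite graph with classes `{v < h}` and
`{v ≥ h}` by adding the edges of a relation `R` on natural numbers, to be supported in the first
class. -/
def lowerGraph (n h : ℕ) (R : ℕ → ℕ → Prop) : SimpleGraph (Fin n) :=
  SimpleGraph.fromRel fun u v => ((u : ℕ) < h ∧ h ≤ (v : ℕ)) ∨ R u v

/-- The properties of a relation `R` on the natural numbers that make `lowerGraph` a `k`-fan-free
graph with `d v` edges of `R` at each vertex `v`: support below `2 k`, degrees at most `k - 1`, no
`k` pairwise disjoint edges. -/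
structure Good (k : ℕ) (R : ℕ → ℕ → Prop) (d : ℕ → ℕ) : Prop where
  symm : ∀ u v, R u v → R v u
  irrefl : ∀ u, ¬ R u u
  lt : ∀ u v, R u v → u < 2 * k
  nbrs : ∀ u, ∃ N : Finset ℕ, (∀ v, v ∈ N ↔ R u v) ∧ N.card = d u
  deg : ∀ u, d u < k
  matching : ∀ p q : Fin k → ℕ, (∀ i, R (p i) (q i)) → Function.Injective (Sum.elim p q) → False

variable {k n h : ℕ} {R : ℕ → ℕ → Prop} {d : ℕ → ℕ}

lemma lowerGraph_adj (hR : Good k R d) {u v : Fin n} :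
    (lowerGraph n h R).Adj u v ↔
      ((u : ℕ) < h ∧ h ≤ (v : ℕ)) ∨ ((v : ℕ) < h ∧ h ≤ (u : ℕ)) ∨ R u v := by
  rw [lowerGraph, SimpleGraph.fromRel_adj]
  constructor
  · rintro ⟨-, (h1 | h1) | (h1 | h1)⟩
    · exact Or.inl h1
    · exact Or.inr (Or.inr h1)
    · exact Or.inr (Or.inl h1)
    · exact Or.inr (Or.inr (hR.symm _ _ h1))
  · rintro (h1 | h1 | h1)
    · exact ⟨by rintro rfl; omega, Or.inl (Or.inl h1)⟩
    · exact ⟨by rintro rfl; omega, Or.inr (Or.inl h1)⟩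
    · exact ⟨by rintro rfl; exact hR.irrefl _ h1, Or.inl (Or.inr h1)⟩

lemma lowerGraph_free (hR : Good k R d) (hh : 2 * k ≤ h) :
    ¬ ContainsCopy (Ckq k 3) (lowerGraph n h R) := by
  rintro ⟨f, hf⟩
  let p : Fin k → Fin n := fun i => f (some (i, 0))
  let q : Fin k → Fin n := fun i => f (some (i, 1))
  have hcp : ∀ i, (lowerGraph n h R).Adj (f none) (p i) := fun i => f.map_rel (by
    rw [Ckq, SimpleGraph.fromRel_adj]; exact ⟨by simp, Or.inl (Or.inl rfl)⟩)
  have hcq : ∀ i, (lowerGraph n h R).Adj (f none) (q i) := fun i => f.map_rel (by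
    rw [Ckq, SimpleGraph.fromRel_adj]; exact ⟨by simp, Or.inl (Or.inr rfl)⟩)
  have hpq : ∀ i, (lowerGraph n h R).Adj (p i) (q i) := fun i => f.map_rel (by
    rw [Ckq, SimpleGraph.fromRel_adj]; exact ⟨by simp, Or.inl ⟨rfl, rfl⟩⟩)
  have hp : Function.Injective p := fun i j hij => by
    have := hf hij
    simp only [Option.some.injEq, Prod.mk.injEq, and_true] at this
    exact this
  have hq : Function.Injective q := fun i j hij => by
    have := hf hij
    simp only [Option.some.injEq, Prod.mk.injEq, and_true] at this
    exact this
  have hne : ∀ i j, p i ≠ q j := fun i j hij => by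
    have := hf hij
    simp at this
  simp only [lowerGraph_adj hR] at hcp hcq hpq
  have hlt : ∀ {u v}, R u v → u < h ∧ v < h := fun {u v} huv =>
    ⟨(hR.lt _ _ huv).trans_le hh, (hR.lt _ _ (hR.symm _ _ huv)).trans_le hh⟩
  rcases Nat.lt_or_ge (f none : ℕ) h with hc | hc
    -- a centre in the first class: each triangle uses an edge of `R` at the centre
  · have hex : ∀ i, ∃ t : Fin n, (t = p i ∨ t = q i) ∧ R (f none) t := by
      intro i
      rcases hcp i with h1 | h1 | h1
      · rcases hcq i with h2 | h2 | h2
        · rcases hpq i with h3 | h3 | h3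
          · omega
          · omega
          · have := hlt h3; omega
        · omega
        · exact ⟨_, Or.inr rfl, h2⟩
      · omega
      · exact ⟨_, Or.inl rfl, h1⟩
    choose t ht htR using hex
    have htinj : Function.Injective t := by
      intro i j hij
      rcases ht i with h1 | h1 <;> rcases ht j with h2 | h2 <;> rw [h1, h2] at hij
      · exact hp hij
      · exact absurd hij (hne _ _)
      · exact absurd hij.symm (hne _ _)
      · exact hq hij
    obtain ⟨N, hN, hNc⟩ := hR.nbrs (f none)
    have h1 : (Finset.univ.image fun i => (t i : ℕ)).card ≤ N.card := by
      refine Finset.card_le_card fun y hy => ?_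
      obtain ⟨i, -, rfl⟩ := Finset.mem_image.1 hy
      exact (hN _).2 (htR i)
    have hti : Function.Injective fun i => (t i : ℕ) := Fin.val_injective.comp htinj
    rw [Finset.card_image_of_injective _ hti, Finset.card_univ, Fintype.card_fin, hNc] at h1
    exact absurd (hR.deg (f none)) (not_lt.2 h1)
    -- a centre in the second class: the opposite edges of the triangles are disjoint edges of `R`
  · have hp' : ∀ i, (p i : ℕ) < h := fun i => by
      rcases hcp i with h1 | h1 | h1
      · omega
      · exact h1.1
      · have := hlt h1; omega
    have hq' : ∀ i, (q i : ℕ) < h := fun i => by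
      rcases hcq i with h1 | h1 | h1
      · omega
      · exact h1.1
      · have := hlt h1; omega
    refine hR.matching (fun i => p i) (fun i => q i) ?_ ?_
    · intro i
      have h1 := hp' i
      have h2 := hq' i
      rcases hpq i with h3 | h3 | h3
      · omega
      · omega
      · exact h3
    · exact Function.Injective.sumElim (Fin.val_injective.comp hp) (Fin.val_injective.comp hq)
        fun i j hij => hne i j (Fin.ext hij)

lemma lowerGraph_card (hR : Good k R d) (hh : 2 * k ≤ h) (hn : h ≤ n) :
    2 * (lowerGraph n h R).edgeSet.ncard = 2 * (h * (n - h)) + ∑ v ∈ Finset.range (2 * k), d v := by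
  classical
  have h1 := (lowerGraph n h R).sum_degrees_eq_twice_card_edges
  rw [Set.ncard_eq_toFinset_card', ← SimpleGraph.edgeFinset, ← h1]
  have hd0 : ∀ v, 2 * k ≤ v → d v = 0 := by
    intro v hv
    obtain ⟨N, hN, hNc⟩ := hR.nbrs v
    rw [← hNc, Finset.card_eq_zero, Finset.eq_empty_iff_forall_notMem]
    intro w hw
    have := hR.lt _ _ ((hN w).1 hw)
    omega
  have hdeg : ∀ v : Fin n, (lowerGraph n h R).degree v =
      (fun v : ℕ => (if v < h then n - h else h) + d v) v := by
    intro v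
    obtain ⟨N, hN, hNc⟩ := hR.nbrs v
    rw [← SimpleGraph.card_neighborFinset_eq_degree, ← Finset.card_map Fin.valEmbedding]
    have hNlt : ∀ w ∈ N, w < h ∧ (v : ℕ) < h := fun w hw => by
      have h2 := hR.lt _ _ ((hN w).1 hw)
      have h3 := hR.lt _ _ (hR.symm _ _ ((hN w).1 hw))
      omega
    have h2 : ((lowerGraph n h R).neighborFinset v).map Fin.valEmbedding =
        (if (v : ℕ) < h then Finset.Ico h n else Finset.range h) ∪ N := by
      ext w
      simp only [Finset.mem_map, SimpleGraph.mem_neighborFinset, lowerGraph_adj hR,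
        Fin.valEmbedding_apply, Finset.mem_union]
      constructor
      · rintro ⟨w, hw, rfl⟩
        rw [hN]
        split_ifs with hv
        · rcases hw with hw | hw | hw
          · left; simp; omega
          · omega
          · exact Or.inr hw
        · rcases hw with hw | hw | hw
          · omega
          · left; simp; omega
          · exact Or.inr hw
      · rintro (hw | hw)
        · split_ifs at hw with hv
          · simp only [Finset.mem_Ico] at hw
            exact ⟨⟨w, hw.2⟩, Or.inl ⟨hv, hw.1⟩, rfl⟩
          · simp only [Finset.mem_range] at hw
            exact ⟨⟨w, hw.trans_le hn⟩, Or.inr (Or.inl ⟨hw, not_lt.1 hv⟩), rfl⟩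
        · exact ⟨⟨w, (hNlt w hw).1.trans_le hn⟩, Or.inr (Or.inr ((hN w).1 hw)), rfl⟩
    rw [h2, Finset.card_union_of_disjoint, hNc]
    · simp only []
      split_ifs <;> simp
    · rw [Finset.disjoint_left]
      intro w hw hwN
      have := hNlt w hwN
      rw [if_pos this.2, Finset.mem_Ico] at hw
      omega
  rw [Finset.sum_congr rfl fun v _ => hdeg v,
    Fin.sum_univ_eq_sum_range (fun v : ℕ => (if v < h then n - h else h) + d v) n,
    Finset.sum_add_distrib]
  congr 1
  · rw [Finset.sum_ite, Finset.sum_const, Finset.sum_const]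
    have e1 : (Finset.range n).filter (fun v => v < h) = Finset.range h := by
      ext v; simp; omega
    have e2 : (Finset.range n).filter (fun v => ¬ v < h) = Finset.Ico h n := by
      ext v; simp; omega
    rw [e1, e2]
    simp
    ring
  · symm
    refine Finset.sum_subset (fun v hv => ?_) fun v _ hv => hd0 v (by simpa using hv)
    simp at hv ⊢
    omega

/-- For odd `k`: two disjoint complete graphs on `k` vertices. -/
lemma good_odd (hk : Odd k) :
    Good k (fun u v => u ≠ v ∧ u < 2 * k ∧ v < 2 * k ∧ (u < k ↔ v < k))
      (fun v => if v < 2 * k then k - 1 else 0) where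
  symm := fun u v h => ⟨h.1.symm, h.2.2.1, h.2.1, h.2.2.2.symm⟩
  irrefl := fun u h => h.1 rfl
  lt := fun u v h => h.2.1
  nbrs := by
    intro u
    by_cases h1 : u < k
    · refine ⟨(Finset.range k).erase u, fun v => ?_, ?_⟩
      · simp; omega
      · rw [Finset.card_erase_of_mem (by simpa using h1), if_pos (by omega)]; simp
    by_cases h2 : u < 2 * k
    · refine ⟨(Finset.Ico k (2 * k)).erase u, fun v => ?_, ?_⟩
      · simp; omega
      · rw [Finset.card_erase_of_mem (by simp; omega), if_pos h2]; simp; omega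
    · exact ⟨∅, fun v => by simp; omega, by simp [h2]⟩
  deg := fun u => by have := hk.pos; split_ifs <;> omega
  matching := by
    intro p q hR hinj
    -- each of the two cliques contains fewer than `k / 2` of the edges, as `k` is odd
    have key : ∀ (T : Finset ℕ) (J : Finset (Fin k)), T.card = k →
        (∀ i ∈ J, p i ∈ T ∧ q i ∈ T) → 2 * J.card < k := by
      intro T J hT hJ
      have h1 : ((J.disjSum J).image (Sum.elim p q)).card ≤ T.card := by
        refine Finset.card_le_card fun y hy => ?_
        obtain ⟨i, hi, rfl⟩ := Finset.mem_image.1 hy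
        rcases i with i | i
        · exact (hJ i (by simpa using hi)).1
        · exact (hJ i (by simpa using hi)).2
      rw [Finset.card_image_of_injective _ hinj, Finset.card_disjSum, hT] at h1
      obtain ⟨j, rfl⟩ := hk
      omega
    have h1 := key (Finset.range k) (Finset.univ.filter fun i => p i < k) (by simp) (by
      intro i hi
      have h2 := (Finset.mem_filter.1 hi).2
      have h3 := (hR i).2.2.2
      simp; omega)
    have h2 := key (Finset.Ico k (2 * k)) (Finset.univ.filter fun i => ¬ p i < k)
      (by simp; omega) (by
      intro i hi
      have h2 := (Finset.mem_filter.1 hi).2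
      have h3 := (hR i).2
      simp; omega)
    have h3 := Finset.card_filter_add_card_filter_not (s := (Finset.univ : Finset (Fin k)))
      (fun i => p i < k)
    rw [Finset.card_univ, Fintype.card_fin] at h3
    omega

/-- For even `k`: a graph on `2 k - 1` vertices with all degrees `k - 1` except for one `k - 2`.
It arises from disjoint complete graphs on `{0, …, k - 1}` and `{k, …, 2 k - 2}` by removing the
edges `{2 i, 2 i + 1}` with `2 i < k - 2` and adding the edges `{j, k + j}` with `j < k - 2`. -/
lemma good_even (hk : Even k) (hk0 : 1 ≤ k) :
    Good k (fun u v => u ≠ v ∧ ((u < k ∧ v < k ∧ ¬ (u / 2 = v / 2 ∧ u + 2 < k)) ∨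
        (k ≤ u ∧ u < 2 * k - 1 ∧ k ≤ v ∧ v < 2 * k - 1) ∨
        (u + 2 < k ∧ v = u + k) ∨ (v + 2 < k ∧ u = v + k)))
      (fun v => if v < 2 * k - 2 then k - 1 else if v = 2 * k - 2 then k - 2 else 0) where
  symm := by
    obtain ⟨j, rfl⟩ := hk
    intro u v h
    omega
  irrefl := fun u h => h.1 rfl
  lt := fun u v h => by omega
  nbrs := by
    intro u
    obtain ⟨j, rfl⟩ := hk
    by_cases h1 : u + 2 < j + j
      -- `4 * (u / 2) + 1 - u` is the other number with the same half as `u`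
    · refine ⟨insert (u + (j + j)) (((Finset.range (j + j)).erase u).erase (4 * (u / 2) + 1 - u)),
        fun v => ?_, ?_⟩
      · simp only [Finset.mem_insert, Finset.mem_erase, Finset.mem_range]; omega
      · rw [Finset.card_insert_of_notMem (by simp),
          Finset.card_erase_of_mem (by simp only [Finset.mem_erase, Finset.mem_range]; omega),
          Finset.card_erase_of_mem (by simp only [Finset.mem_range]; omega), if_pos (by omega),
          Finset.card_range]
        omega
    by_cases h2 : u < j + j
    · refine ⟨(Finset.range (j + j)).erase u, fun v => ?_, ?_⟩
      · simp only [Finset.mem_erase, Finset.mem_range]; omega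
      · rw [Finset.card_erase_of_mem (by simpa using h2), Finset.card_range]
        split_ifs <;> omega
    by_cases h3 : u < 2 * (j + j) - 2
    · refine ⟨insert (u - (j + j)) ((Finset.Ico (j + j) (2 * (j + j) - 1)).erase u),
        fun v => ?_, ?_⟩
      · simp only [Finset.mem_insert, Finset.mem_erase, Finset.mem_Ico]; omega
      · rw [Finset.card_insert_of_notMem
            (by simp only [Finset.mem_erase, Finset.mem_Ico]; omega),
          Finset.card_erase_of_mem (by simp only [Finset.mem_Ico]; omega), if_pos h3, Nat.card_Ico]
        omega
    by_cases h4 : u = 2 * (j + j) - 2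
    · refine ⟨(Finset.Ico (j + j) (2 * (j + j) - 1)).erase u, fun v => ?_, ?_⟩
      · simp only [Finset.mem_erase, Finset.mem_Ico]; omega
      · rw [Finset.card_erase_of_mem (by simp only [Finset.mem_Ico]; omega), if_neg h3, if_pos h4,
          Nat.card_Ico]
        omega
    · refine ⟨∅, fun v => ?_, by simp [h3, h4]⟩
      simp only [Finset.notMem_empty, false_iff]; omega
  deg := fun u => by
    obtain ⟨j, rfl⟩ := hk
    split_ifs <;> omega
  matching := by
    intro p q hR hinj
    have h1 : (Finset.univ.image (Sum.elim p q)).card ≤ (Finset.range (2 * k - 1)).card := by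
      refine Finset.card_le_card fun y hy => ?_
      obtain ⟨i, -, rfl⟩ := Finset.mem_image.1 hy
      rcases i with i | i <;> have := hR i <;> simp <;> omega
    rw [Finset.card_image_of_injective _ hinj, Finset.card_univ, Fintype.card_sum,
      Fintype.card_fin, Finset.card_range] at h1
    omega

lemma exists_lower (k n : ℕ) (hk : 1 ≤ k) (hn : 50 * k ^ 2 ≤ n) :
    ∃ G : SimpleGraph (Fin n), ¬ ContainsCopy (Ckq k 3) G ∧
      G.edgeSet.ncard = n ^ 2 / 4 + gfun k := by
  have hh : 2 * k ≤ n / 2 := by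
    rw [Nat.le_div_iff_mul_le (by norm_num)]; nlinarith
  have hhn : n / 2 ≤ n := Nat.div_le_self _ _
  have hsq : n / 2 * (n - n / 2) = n ^ 2 / 4 := by
    rcases Nat.even_or_odd' n with ⟨m, rfl | rfl⟩
    · rw [show 2 * m / 2 = m by omega, show 2 * m - m = m by omega,
        show (2 * m) ^ 2 = 4 * (m * m) by ring]
      omega
    · rw [show (2 * m + 1) / 2 = m by omega, show 2 * m + 1 - m = m + 1 by omega,
        show (2 * m + 1) ^ 2 = 4 * (m * (m + 1)) + 1 by ring]
      omega
  obtain ⟨κ, rfl⟩ : ∃ κ, k = κ + 1 := ⟨k - 1, by omega⟩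
  rcases Nat.even_or_odd κ with hκ | hκ
  · have hR := good_odd hκ.add_one
    refine ⟨_, lowerGraph_free hR hh, ?_⟩
    have h1 := lowerGraph_card hR hh hhn
    rw [Finset.sum_congr rfl fun v hv => if_pos (Finset.mem_range.1 hv), hsq] at h1
    simp only [Finset.sum_const, Finset.card_range, smul_eq_mul, Nat.add_sub_cancel] at h1
    rw [gfun_odd hκ]
    nlinarith
  · have hR := good_even hκ.add_one hk
    refine ⟨_, lowerGraph_free hR hh, ?_⟩
    have h1 := lowerGraph_card hR hh hhn
    have h2 := gfun_even hκ
    obtain ⟨j, rfl⟩ := hκ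
    have h3 : ∑ v ∈ Finset.range (2 * (2 * j + 1 + 1)), (if v < 2 * (2 * j + 1 + 1) - 2
        then 2 * j + 1 + 1 - 1 else if v = 2 * (2 * j + 1 + 1) - 2 then 2 * j + 1 + 1 - 2 else 0)
        = (4 * j + 2) * (2 * j + 1) + 2 * j := by
      rw [show 2 * (2 * j + 1 + 1) = 4 * j + 2 + 1 + 1 by ring, Finset.sum_range_succ,
        Finset.sum_range_succ, Finset.sum_congr rfl fun v hv => if_pos (by
          have := Finset.mem_range.1 hv; omega)]
      simp
    rw [h3, hsq] at h1
    generalize (lowerGraph n (n / 2) _).edgeSet.ncard = N at h1 ⊢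
    nlinarith

end Lower

end FanTuran

/-- **Theorem (Erdős, Füredi, Gould, Gunderson).**
For `k ≥ 1` and `n ≥ 50k²`, `ex(n, F_k) = ⌊n²/4⌋ + g(k)`, where the `k`-fan `F_k`
(= `k` triangles sharing exactly one common vertex) is the graph `C_{k,3}`. -/
theorem exNum_fan (k n : ℕ) (hk : 1 ≤ k) (hn : 50 * k ^ 2 ≤ n) :
    exNum n (Ckq k 3) = n ^ 2 / 4 + gfun k := by
  refine IsGreatest.csSup_eq ⟨FanTuran.exists_lower k n hk hn, ?_⟩
  rintro m ⟨G, hG, rfl⟩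
  classical
  obtain ⟨κ, rfl⟩ : ∃ κ, k = κ + 1 := ⟨k - 1, by omega⟩
  have h1 := FanTuran.upper_sum (FanTuran.fanFree_of_not_containsCopy hk hG)
    (by rw [Fintype.card_fin]; exact hn)
  have h2 := G.sum_degrees_eq_twice_card_edges
  have h3 : ∀ x, G.degree x = FanTuran.dg G Finset.univ x := by
    intro x
    rw [← SimpleGraph.card_neighborFinset_eq_degree, FanTuran.dg]
    congr 1
    ext y
    simp
  rw [Finset.sum_congr rfl fun x _ => h3 x] at h2
  rw [Nat.add_sub_cancel, h2, Fintype.card_fin] at h1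
  rw [Set.ncard_eq_toFinset_card', ← SimpleGraph.edgeFinset]
  -- squares are `0` or `1` modulo `4`, which settles the rounding in `n ^ 2 / 4`
  have h4 : n ^ 2 % 4 ≤ 1 := by
    rcases Nat.even_or_odd' n with ⟨m, rfl | rfl⟩
    · rw [show (2 * m) ^ 2 = 4 * (m * m) by ring]; omega
    · rw [show (2 * m + 1) ^ 2 = 4 * (m * (m + 1)) + 1 by ring]; omega
  omega
end

section
/- Let G be a graph with maximum degree Δ ≥ 1 and matching number ν ≥ 1. Then e(G) ≤ νΔ + ⌊Δ/2⌋·⌊ν/⌈Δ/2⌉⌋, and consequently e(G) ≤ ν(Δ+1). -/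
/-!
By the Tutte–Berge formula (`ChvatalHanson.exists_barrier`) there is a set `S` of vertices such that,
with `C₁, …, C_r` the components of `G - S`, `|S| + ∑ ⌊|Cᵢ|/2⌋ ≤ ν`. At most `|S| Δ` edges meet `S`.
A component with `c` vertices spans at most `min (cΔ/2) (c(c-1)/2)` edges, which with `k = ⌊c/2⌋` is at
most `kΔ`, or `kΔ + ⌊Δ/2⌋` when `k ≥ ⌈Δ/2⌉` (`ChvatalHanson.local_bound`). These `k` sum to at most
`ν - |S|`, so at most `⌊ν/⌈Δ/2⌉⌋` components need the extra term, and summing gives the first bound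
(`ChvatalHanson.edge_bound_of_barrier`). The second holds because `⌊Δ/2⌋ ≤ ⌈Δ/2⌉`.

The Tutte–Berge barrier comes from Tutte's theorem. If `|V| ≥ 2ν + 2`, join `G` to a complete graph on
`d = |V| - 2ν - 2` new vertices. A perfect matching of the join would leave more than `ν` edges in `G`
(`ChvatalHanson.card_le_of_isPerfectMatching`), so there is a Tutte violator `u`. By parity, deleting
`u` leaves at least `|u| + 2` odd components, so `u` contains all new vertices, and its old vertices
form `S`.
-/

open SimpleGraph

namespace ChvatalHanson

open Finset

/-- A set of edges of `G` inside `T` is bounded by half the degree sum, where each degree within `T`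
is at most both `Δ` and `|T| - 1`. -/
theorem two_mul_card_edges_within_le {V : Type*} [Fintype V] (G : SimpleGraph V) (Δ : ℕ)
    (hub : ∀ v, (G.neighborSet v).ncard ≤ Δ) (T : Finset V) (E : Finset (Sym2 V))
    (hE : ∀ e ∈ E, e ∈ G.edgeSet ∧ ∀ v ∈ e, v ∈ T) :
    2 * #E ≤ #T * Δ ∧ 2 * #E ≤ #T * (#T - 1) := by
  classical
  let H : SimpleGraph V :=
    { Adj := fun a b => G.Adj a b ∧ a ∈ T ∧ b ∈ T
      symm := ⟨fun a b h => ⟨h.1.symm, h.2.2, h.2.1⟩⟩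
      loopless := ⟨fun a h => G.loopless.irrefl a h.1⟩ }
  have hEH : #E ≤ #H.edgeFinset := by
    refine card_le_card fun e he => ?_
    obtain ⟨h1, h2⟩ := hE e he
    induction e with
    | h a b =>
      rw [SimpleGraph.mem_edgeFinset, SimpleGraph.mem_edgeSet]
      exact ⟨h1, h2 a (by simp), h2 b (by simp)⟩
  have hsum : 2 * #H.edgeFinset = ∑ v ∈ T, H.degree v := by
    rw [← H.sum_degrees_eq_twice_card_edges]
    refine (sum_subset (subset_univ T) fun v _ hv => ?_).symm
    rw [← H.card_neighborFinset_eq_degree, card_eq_zero, eq_empty_iff_forall_notMem]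
    intro w hw
    exact hv ((H.mem_neighborFinset v w).1 hw).2.1
  have hΔ : ∀ v ∈ T, H.degree v ≤ Δ := fun v _ => by
    refine le_trans ?_ (hub v)
    rw [← H.card_neighborFinset_eq_degree, Set.ncard_eq_toFinset_card']
    refine card_le_card fun w hw => ?_
    simpa using ((H.mem_neighborFinset v w).1 hw).1
  have hT : ∀ v ∈ T, H.degree v ≤ #T - 1 := fun v hv => by
    rw [← H.card_neighborFinset_eq_degree, ← card_erase_of_mem hv]
    refine card_le_card fun w hw => ?_
    have h := (H.mem_neighborFinset v w).1 hw
    exact mem_erase.2 ⟨h.1.ne', h.2.2⟩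
  have h1 := sum_le_card_nsmul T _ _ hΔ
  have h2 := sum_le_card_nsmul T _ _ hT
  simp only [smul_eq_mul] at h1 h2
  omega

/-- The bound for one component with `c` vertices and `e` edges. The extra term `⌊Δ/2⌋` is needed only
when `c = 2k + 1` with `k ≥ ⌈Δ/2⌉`; a smaller odd component has `c ≤ Δ`, so `c(c-1)/2 ≤ kΔ`. -/
theorem local_bound {Δ c e : ℕ} (hΔ1 : 1 ≤ Δ) (h1 : 2 * e ≤ c * Δ) (h2 : 2 * e ≤ c * (c - 1)) :
    e ≤ c / 2 * Δ + Δ / 2 * (c / 2 / ((Δ + 1) / 2)) := by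
  obtain ⟨k, hk | hk⟩ := Nat.even_or_odd' c
  · have : c / 2 = k := by omega
    rw [this]
    have : e ≤ k * Δ := by subst hk; nlinarith
    omega
  · have hck : c / 2 = k := by omega
    rw [hck]
    by_cases hkΔ : (Δ + 1) / 2 ≤ k
    · have h3 : 1 ≤ k / ((Δ + 1) / 2) := Nat.div_pos hkΔ (by omega)
      have h4 : e ≤ k * Δ + Δ / 2 := by
        have : 2 * e ≤ 2 * (k * Δ) + Δ := by subst hk; nlinarith
        omega
      nlinarith [Nat.zero_le (Δ / 2)]
    · have h5 : 2 * k + 1 ≤ Δ := by omega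
      have h6 : e ≤ k * (2 * k + 1) := by
        subst hk
        simp only [Nat.add_sub_cancel] at h2
        nlinarith
      have := Nat.mul_le_mul_left k h5
      omega

theorem sum_div_le {ι : Type*} (s : Finset ι) (f : ι → ℕ) (m : ℕ) :
    ∑ i ∈ s, f i / m ≤ (∑ i ∈ s, f i) / m := by
  classical
  induction s using Finset.induction_on with
  | empty => simp
  | insert a s ha ih =>
    rw [sum_insert ha, sum_insert ha]
    exact le_trans (Nat.add_le_add_left ih _) (Nat.div_add_div_le_add_div)

/-- The edge bound from a Tutte–Berge barrier `S`, where `c` labels the components of `G - S` (or any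
coarser partition of the vertices outside `S`). -/
theorem edge_bound_of_barrier {V ι : Type*} [Fintype V] [DecidableEq V] [Fintype ι] [DecidableEq ι]
    (G : SimpleGraph V) (Δ ν : ℕ) (hΔ1 : 1 ≤ Δ) (hub : ∀ v, (G.neighborSet v).ncard ≤ Δ)
    (S : Finset V) (c : V → ι) (hc : ∀ a b, G.Adj a b → a ∉ S → b ∉ S → c a = c b)
    (hcard : Fintype.card V + #S ≤ 2 * ν + #{i | Odd #{v | v ∉ S ∧ c v = i}}) :
    G.edgeSet.ncard ≤ ν * Δ + (Δ / 2) * (ν / ((Δ + 1) / 2)) := by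
  classical
  let F : ι → Finset V := fun i => {v | v ∉ S ∧ c v = i}
  let E : ι → Finset (Sym2 V) := fun i => {e ∈ G.edgeFinset | ∀ v ∈ e, v ∈ F i}
  have hcover : G.edgeFinset ⊆ (S.biUnion fun v => G.incidenceFinset v) ∪ univ.biUnion E := by
    intro e he
    induction e with
    | h a b =>
      have hab : G.Adj a b := by simpa using he
      by_cases ha : a ∈ S
      · exact mem_union_left _ (mem_biUnion.2 ⟨a, ha, by simpa using hab⟩)
      by_cases hb : b ∈ S
      · refine mem_union_left _ (mem_biUnion.2 ⟨b, hb, ?_⟩)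
        rw [Sym2.eq_swap]; simpa using hab.symm
      refine mem_union_right _ (mem_biUnion.2 ⟨c a, mem_univ _, ?_⟩)
      simp [E, F, ha, hb, hab, hc a b hab ha hb]
  have hS : #(S.biUnion fun v => G.incidenceFinset v) ≤ #S * Δ := by
    refine card_biUnion_le_card_mul _ _ _ fun v _ => ?_
    rw [G.card_incidenceFinset_eq_degree, ← G.card_neighborFinset_eq_degree]
    have := hub v
    rwa [Set.ncard_eq_toFinset_card'] at this
  have hE : ∀ i, #(E i) ≤ #(F i) / 2 * Δ + Δ / 2 * (#(F i) / 2 / ((Δ + 1) / 2)) := fun i => by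
    have h := two_mul_card_edges_within_le G Δ hub (F i) (E i) fun e he => by simpa [E] using he
    exact local_bound hΔ1 h.1 h.2
  have hEsum : #(univ.biUnion E) ≤
      (∑ i, #(F i) / 2) * Δ + Δ / 2 * ((∑ i, #(F i) / 2) / ((Δ + 1) / 2)) := by
    refine card_biUnion_le.trans ((sum_le_sum fun i _ => hE i).trans ?_)
    rw [sum_add_distrib, ← sum_mul, ← mul_sum]
    gcongr
    exact sum_div_le _ _ _
  have hFsum : ∑ i, #(F i) + #S = Fintype.card V := by
    have h1 : #({v | v ∉ S} : Finset V) = ∑ i, #(F i) := by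
      rw [card_eq_sum_card_fiberwise (f := c) (t := univ) (by simp)]
      simp [F, filter_filter]
    have h2 : ({v | v ∉ S} : Finset V) = Sᶜ := by ext; simp
    rw [← h1, h2, card_compl]
    have := card_le_univ S
    omega
  have hodd : ∑ i, #(F i) = 2 * ∑ i, #(F i) / 2 + #{i | Odd #(F i)} := by
    rw [card_filter, mul_sum, ← sum_add_distrib]
    refine sum_congr rfl fun i _ => ?_
    split_ifs with h
    · have := Nat.odd_iff.1 h; omega
    · have := Nat.even_iff.1 (Nat.not_odd_iff_even.1 h); omega
  -- The Tutte–Berge equation in the form `|S| + ∑ ⌊|Cᵢ|/2⌋ ≤ ν`.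
  have hν : #S + ∑ i, #(F i) / 2 ≤ ν := by
    change _ ≤ 2 * ν + #{i | Odd #(F i)} at hcard
    omega
  have hle := (card_le_card hcover).trans (card_union_le _ _)
  rw [← SimpleGraph.coe_edgeFinset G, Set.ncard_coe_finset]
  calc #G.edgeFinset ≤ #S * Δ + ((∑ i, #(F i) / 2) * Δ +
        Δ / 2 * ((∑ i, #(F i) / 2) / ((Δ + 1) / 2))) := by omega
    _ = (#S + ∑ i, #(F i) / 2) * Δ + Δ / 2 * ((∑ i, #(F i) / 2) / ((Δ + 1) / 2)) := by ring
    _ ≤ ν * Δ + Δ / 2 * (ν / ((Δ + 1) / 2)) := by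
        gcongr
        omega

theorem card_le_nu {V : Type*} [Fintype V] (G : SimpleGraph V) (M : Finset (Sym2 V))
    (hM : ↑M ⊆ G.edgeSet)
    (hd : (M : Set (Sym2 V)).Pairwise (fun e f => ∀ v, v ∈ e → v ∉ f)) : #M ≤ nu G := by
  classical
  refine le_csSup ⟨Fintype.card (Sym2 V), ?_⟩ ⟨M, hM, hd, rfl⟩
  rintro m ⟨M, -, -, rfl⟩
  exact card_le_univ M

/-- The join of `G` with a complete graph on `d` new vertices. -/
def joinComplete {V : Type*} (G : SimpleGraph V) (d : ℕ) : SimpleGraph (V ⊕ Fin d) where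
  Adj x y := x ≠ y ∧ ∀ a b, x = Sum.inl a → y = Sum.inl b → G.Adj a b
  symm := ⟨fun _ _ h => ⟨h.1.symm, fun a b ha hb => (h.2 b a hb ha).symm⟩⟩
  loopless := ⟨fun _ h => h.1 rfl⟩

/-- A perfect matching of the join leaves, inside `G`, a matching that misses at most the `d` partners
of the new vertices. -/
theorem card_le_of_isPerfectMatching {V : Type*} [Fintype V] (G : SimpleGraph V) (d : ℕ)
    (M : (joinComplete G d).Subgraph) (hM : M.IsPerfectMatching) :
    Fintype.card V ≤ 2 * nu G + d := by
  classical
  -- The edges of `M` between old vertices.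
  let H : SimpleGraph V :=
    { Adj := fun a b => M.Adj (Sum.inl a) (Sum.inl b)
      symm := ⟨fun a b h => h.symm⟩
      loopless := ⟨fun a h => h.ne rfl⟩ }
  have hHG : ∀ a b, H.Adj a b → G.Adj a b := fun a b h => (M.adj_sub h).2 a b rfl rfl
  have hex := SimpleGraph.Subgraph.isPerfectMatching_iff.1 hM
  have hedges : #H.edgeFinset ≤ nu G := by
    refine card_le_nu G _ (fun e he => ?_) ?_
    · induction e with
      | h a b => exact hHG a b (by simpa using he)
    · intro e he f hf hef v hve hvf
      obtain ⟨a, rfl⟩ := hve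
      obtain ⟨b, rfl⟩ := hvf
      have ha : H.Adj v a := by simpa using he
      have hb : H.Adj v b := by simpa using hf
      have := Sum.inl_injective ((hex (Sum.inl v)).unique ha hb)
      exact hef (by rw [this])
  have hZ : #({v | H.degree v = 0} : Finset V) ≤ d := by
    choose p hp _ using fun v : V => hex (Sum.inl v)
    have hr : ∀ v, H.degree v = 0 → ∃ j, p v = Sum.inr j := fun v hv => by
      cases hpv : p v with
      | inr j => exact ⟨j, rfl⟩
      | inl w =>
        have : H.Adj v w := by have := hp v; simpa [hpv] using this
        rw [← H.card_neighborFinset_eq_degree, card_eq_zero] at hv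
        have hw := (H.mem_neighborFinset v w).2 this
        simp [hv] at hw
    have hmaps : ∀ v ∈ ({v | H.degree v = 0} : Finset V),
        p v ∈ (univ : Finset (Fin d)).image (Sum.inr : Fin d → V ⊕ Fin d) := fun v hv => by
      obtain ⟨j, hj⟩ := hr v (by simpa using hv)
      simp [hj]
    refine (card_le_card_of_injOn p hmaps ?_).trans (card_image_le.trans (by simp))
    intro v _ w _ hvw
    refine Sum.inl_injective ((hex (p v)).unique (hp v).symm ?_)
    rw [hvw]; exact (hp w).symm
  have hsum := H.sum_degrees_eq_twice_card_edges
  have hN : #({v | ¬ H.degree v = 0} : Finset V) ≤ ∑ v, H.degree v := by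
    rw [card_filter]
    refine sum_le_sum fun v _ => ?_
    split_ifs <;> omega
  have := card_filter_add_card_filter_not (s := (univ : Finset V)) (fun v => H.degree v = 0)
  rw [card_univ] at this
  omega

/-- The nontrivial half of the Tutte–Berge formula. The colouring `c` records the components of
`G - S`; its values on `S` carry no information, and all classes are counted outside `S`. It follows
from Tutte's theorem applied to the join of `G` with a complete graph. -/
theorem exists_barrier.{u} {V : Type u} [Fintype V] [DecidableEq V] (G : SimpleGraph V) :
    ∃ (ι : Type u) (_ : Fintype ι) (_ : DecidableEq ι) (S : Finset V) (c : V → ι),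
      (∀ a b, G.Adj a b → a ∉ S → b ∉ S → c a = c b) ∧
      Fintype.card V + #S ≤ 2 * nu G + #{i | Odd #{v | v ∉ S ∧ c v = i}} := by
  classical
  -- A matching missing at most one vertex: the empty barrier with a single class is enough.
  by_cases hdef : Fintype.card V ≤ 2 * nu G + 1
  · refine ⟨PUnit, inferInstance, inferInstance, ∅, fun _ => PUnit.unit, by simp, ?_⟩
    by_cases hV : Odd (Fintype.card V)
    · simpa [hV, filter_true_of_mem] using hdef
    · have : Fintype.card V ≠ 2 * nu G + 1 := fun h => hV ⟨_, h⟩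
      simp only [card_empty]
      omega
  -- With `d` two less than the deficiency `|V| - 2 ν(G)`, the join just fails to have a perfect
  -- matching.
  obtain ⟨d, hd⟩ : ∃ d, Fintype.card V = 2 * nu G + 2 + d := 
    ⟨Fintype.card V - (2 * nu G + 2), by omega⟩
  have hno : ¬ ∃ M : (joinComplete G d).Subgraph, M.IsPerfectMatching := by
    rintro ⟨M, hM⟩
    have := card_le_of_isPerfectMatching G d M hM
    omega
  rw [SimpleGraph.tutte] at hno
  push Not at hno
  obtain ⟨u, hu⟩ := hno
  unfold SimpleGraph.IsTutteViolator at hu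
  set K := ((⊤ : (joinComplete G d).Subgraph).deleteVerts u).coe with hK
  have hmem : ∀ x, x ∈ ((⊤ : (joinComplete G d).Subgraph).deleteVerts u).verts ↔ x ∉ u := by simp
  have hKadj : ∀ x y, K.Adj x y ↔ (joinComplete G d).Adj x.1 y.1 := fun x y => by
    have hx := (hmem _).1 x.2
    have hy := (hmem _).1 y.2
    simp [hK, hx, hy]
  have hcardK : Nat.card ((⊤ : (joinComplete G d).Subgraph).deleteVerts u).verts + u.ncard
      = Fintype.card V + d := by
    have h1 := Set.ncard_add_ncard_compl u
    have h2 : ((⊤ : (joinComplete G d).Subgraph).deleteVerts u).verts = uᶜ := by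
      ext x; simp
    rw [h2, Nat.card_coe_set_eq]
    simp at h1
    omega
  have hpar := SimpleGraph.odd_ncard_oddComponents K
  -- `|V| + d` is even, so the number of odd components has the parity of `|u|`.
  have hgap : u.ncard + 2 ≤ K.oddComponents.ncard := by
    by_contra hlt
    have h1 : K.oddComponents.ncard = u.ncard + 1 := by omega
    rw [h1] at hpar
    simp only [Nat.odd_iff] at hpar
    omega
  -- A new vertex outside `u` would make the remaining graph connected, with at most one odd
  -- component, against `hgap`.
  have hnew : ∀ j, Sum.inr j ∈ u := by
    intro j
    by_contra hj
    have hreach : ∀ x, K.Reachable ⟨Sum.inr j, (hmem _).2 hj⟩ x := fun x => by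
      by_cases hx : x = ⟨Sum.inr j, (hmem _).2 hj⟩
      · rw [hx]
      · refine SimpleGraph.Adj.reachable ((hKadj _ _).2 ⟨fun h => hx (Subtype.ext h.symm), ?_⟩)
        intro a b ha
        cases ha
    have hsub : K.oddComponents.Subsingleton := by
      intro p _ q _
      induction p using SimpleGraph.ConnectedComponent.ind with | _ x
      induction q using SimpleGraph.ConnectedComponent.ind with | _ y
      exact SimpleGraph.ConnectedComponent.sound ((hreach x).symm.trans (hreach y))
    have := Set.ncard_le_one_iff_subsingleton.2 hsub
    omega
  let S : Finset V := {v | Sum.inl v ∈ u}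
  have hSu : u.ncard = #S + d := by
    have h : u = ((S.disjSum univ : Finset (V ⊕ Fin d)) : Set (V ⊕ Fin d)) := by
      ext x
      cases x with
      | inl v => simp [S]
      | inr j => simp [hnew j]
    rw [h, Set.ncard_coe_finset, card_disjSum]
    simp
  have hSmem : ∀ {v}, v ∉ S → Sum.inl v ∈ ((⊤ : (joinComplete G d).Subgraph).deleteVerts u).verts :=
    fun {v} hv => (hmem _).2 (by simpa [S] using hv)
  -- `none` is the value on `S`, where `c` is irrelevant.
  let c : V → Option K.ConnectedComponent := fun v =>
    if h : v ∉ S then some (K.connectedComponentMk ⟨Sum.inl v, hSmem h⟩) else none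
  have hcard : K.oddComponents.ncard ≤ #{i | Odd #{v | v ∉ S ∧ c v = i}} := by
    have hfib : ∀ p : K.ConnectedComponent, p.supp.ncard = #{v | v ∉ S ∧ c v = some p} := fun p => by
      rw [← Set.ncard_image_of_injective _ Subtype.val_injective, ← Set.ncard_coe_finset,
        ← Set.ncard_image_of_injective _ (Sum.inl_injective (α := V) (β := Fin d))]
      congr 1
      ext x
      constructor
      · rintro ⟨⟨x, hx⟩, hxp, rfl⟩
        have hxu := (hmem _).1 hx
        cases x with
        | inr j => exact absurd (hnew j) hxu
        | inl v =>
          have hv : v ∉ S := by simpa [S] using hxu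
          refine ⟨v, ?_, rfl⟩
          simp only [coe_filter, mem_univ, true_and, Set.mem_ofPred_eq]
          refine ⟨hv, ?_⟩
          simp only [c, dif_pos hv]
          exact congrArg some hxp
      · rintro ⟨v, hv, rfl⟩
        simp only [coe_filter, mem_univ, true_and, Set.mem_ofPred_eq] at hv
        obtain ⟨hv, hcv⟩ := hv
        simp only [c, dif_pos hv] at hcv
        exact ⟨⟨Sum.inl v, hSmem hv⟩, Option.some_injective _ hcv, rfl⟩
    rw [← Set.ncard_image_of_injective _ (Option.some_injective _), ← Set.ncard_coe_finset]
    refine Set.ncard_le_ncard ?_ (Set.toFinite _)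
    rintro _ ⟨p, hp, rfl⟩
    have hp' : Odd p.supp.ncard := hp
    rw [hfib] at hp'
    simpa using hp'
  refine ⟨Option K.ConnectedComponent, Fintype.ofFinite _, inferInstance, S, c, ?_, ?_⟩
  swap
  · convert (by omega : Fintype.card V + #S ≤ 2 * nu G + #{i | Odd #{v | v ∉ S ∧ c v = i}})
  intro a b hab ha hb
  simp only [c, dif_pos ha, dif_pos hb]
  refine congrArg some (SimpleGraph.ConnectedComponent.sound (SimpleGraph.Adj.reachable ?_))
  rw [hKadj]
  refine ⟨fun h => hab.ne (Sum.inl_injective h), ?_⟩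
  rintro _ _ ⟨⟩ ⟨⟩
  exact hab

end ChvatalHanson

/-- **Lemma (Chvátal–Hanson).** If `G` has maximum degree `Δ ≥ 1` and matching number
`ν ≥ 1`, then `e(G) ≤ νΔ + ⌊Δ/2⌋·⌊ν/⌈Δ/2⌉⌋ ≤ ν(Δ+1)`.  (In ℕ, `⌈Δ/2⌉ = (Δ+1)/2`.) -/
theorem edge_bound_of_maxDegree_and_matchingNumber {V : Type*} [Fintype V]
    (G : SimpleGraph V) (Δ ν : ℕ) (hΔ1 : 1 ≤ Δ) (hν1 : 1 ≤ ν)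
    (hub : ∀ v, (G.neighborSet v).ncard ≤ Δ)
    (hmax : ∃ v, (G.neighborSet v).ncard = Δ)
    (hν : nu G = ν) :
    G.edgeSet.ncard ≤ ν * Δ + (Δ / 2) * (ν / ((Δ + 1) / 2)) ∧
      G.edgeSet.ncard ≤ ν * (Δ + 1) := by
  classical
  subst hν
  obtain ⟨ι, _, _, S, c, hc, hcard⟩ := ChvatalHanson.exists_barrier G
  have h := ChvatalHanson.edge_bound_of_barrier G Δ (nu G) hΔ1 hub S c hc hcard
  refine ⟨h, h.trans ?_⟩
  have h1 : Δ / 2 * (nu G / ((Δ + 1) / 2)) ≤ nu G :=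
    (Nat.mul_le_mul_right _ (by omega)).trans (Nat.mul_div_le _ _)
  rw [mul_add, mul_one]
  omega
end
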